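/- arXiv:2406.09510 — 3 statements merged into one kernel-verified Lean document; each statement's English description precedes it below -/
import Mathlib

section
/- For every N ≥ 4 and every real u with 0.841 < u < 1, the N-party ring distribution P_Q(a₁,…,a_N) is nonlocal on the network in which parties A₄,…,A_N are merged into a single party M that shares a common source with A₁ and A₃: there do not exist types Λ₁, Λ₂, Λ₃ with probability distributions μ₁, μ₂, μ₃ and response kernels p₁(a₁|λ₁,λ₃), p₂(a₂|λ₁,λ₂), p₃(a₃|λ₂,λ₃), p_M(a₄,…,a_N|λ₃) (each a_j ∈ {0, 1₀, 1₁, 2}, the merged party outputting (a₄,…,a_N) jointly) such that P_Q(a₁,…,a_N) equals the expectation over independently sampled λ₁, λ₂, λ₃ of the product p₁(a₁|λ₁,λ₃)·p₂(a₂|λ₁,λ₂)·p₃(a₃|λ₂,λ₃)·p_M(a₄,…,a_N|λ₃), for all outcomes. -/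
open MeasureTheory

noncomputable def uco (u : ℝ) : Fin 2 → ℝ := ![u, Real.sqrt (1 - u ^ 2)]
noncomputable def vco (u : ℝ) : Fin 2 → ℝ := ![Real.sqrt (1 - u ^ 2), -u]

inductive Outc where
  | zero : Outc
  | one : Fin 2 → Outc
  | two : Outc
  deriving DecidableEq, Fintype

noncomputable def psiPlus : Fin 2 → Fin 2 → ℝ := fun i j =>
  if i = 0 ∧ j = 1 then (Real.sqrt 2)⁻¹ else if i = 1 ∧ j = 0 then (Real.sqrt 2)⁻¹ else 0

noncomputable def basisVec (u : ℝ) : Outc → Fin 2 → Fin 2 → ℝ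
  | Outc.zero => fun l r => if l = 0 ∧ r = 0 then 1 else 0
  | Outc.one i => fun l r => if l = 0 ∧ r = 1 then uco u i else if l = 1 ∧ r = 0 then vco u i else 0
  | Outc.two => fun l r => if l = 1 ∧ r = 1 then 1 else 0

def finNext {N : ℕ} (k : Fin N) : Fin N := ⟨(k.val + 1) % N, Nat.mod_lt _ k.pos⟩

noncomputable def ringAmp (N : ℕ) (u : ℝ) (a : Fin N → Outc) : ℝ :=
  ∑ L : Fin N → Fin 2, ∑ R : Fin N → Fin 2,
    (∏ k, basisVec u (a k) (L k) (R k)) * ∏ k, psiPlus (R k) (L (finNext k))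

noncomputable def ringP (N : ℕ) (u : ℝ) (a : Fin N → Outc) : ℝ := ringAmp N u a ^ 2

/-!
Read the outcomes `0`, `1ₖ`, `2` as the number of tokens received. In the ring, the numbers of
tokens are distributed as if every source sent a single token to a uniformly random neighbour.

In a local model with this distribution of token numbers, each party's number of tokens is a
function of the hidden variables, and conservation of tokens forces these functions to be
differences `h - f`, `f - g` of functions of the single sources. Comparing second and fourth moments
shows that `f`, `g`, `h` take two values, the first two with equal probability: every source routes
its token by a bit, as in the ring.

Fix an outcome `m` of the merged party in which everyone reports one token, and let `r` be the
conditional probability that a neighbouring party outputs `1ₖ`, given that its sources send it one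
token each. Fairness and independence of the routing bits reduce `r` to outcome probabilities in
which the other two parties report `0` and `2` tokens. When all three parties report one token, the
sources all send in the same direction, and for one of the two directions the inequality
`abc ≥ a + b + c - 2` for numbers in `[0, 1]` bounds the probability that all of them output `1ₖ`
from below by a multiple of `3 r - 2`. In the quantum distribution that probability is the square of
a sum of two interfering amplitudes, one for each direction. Choosing `m` so that the interference
is destructive and the two amplitudes nearly cancel, the bound fails as soon as `u ^ 4 > 1 / 2`.
-/

open ProbabilityTheory

/-- Bounded measurable real-valued functions: closed under the algebraic operations and integrable
against every finite measure. -/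
def BddMeas {α : Type*} [MeasurableSpace α] (f : α → ℝ) : Prop :=
  Measurable f ∧ ∃ C, ∀ x, |f x| ≤ C

namespace BddMeas

variable {α β : Type*} [MeasurableSpace α] [MeasurableSpace β] {f g : α → ℝ}

theorem const (c : ℝ) : BddMeas fun _ : α => c := ⟨measurable_const, |c|, fun _ => le_rfl⟩

theorem of_mem_Icc (hf : Measurable f) {a b : ℝ} (h : ∀ x, f x ∈ Set.Icc a b) : BddMeas f :=
  ⟨hf, max |a| |b|, fun x => abs_le_max_abs_abs (h x).1 (h x).2⟩

theorem add (hf : BddMeas f) (hg : BddMeas g) : BddMeas fun x => f x + g x := by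
  obtain ⟨hf, C, hC⟩ := hf
  obtain ⟨hg, D, hD⟩ := hg
  exact ⟨hf.add hg, C + D, fun x => (abs_add_le _ _).trans (add_le_add (hC x) (hD x))⟩

theorem mul (hf : BddMeas f) (hg : BddMeas g) : BddMeas fun x => f x * g x := by
  obtain ⟨hf, C, hC⟩ := hf
  obtain ⟨hg, D, hD⟩ := hg
  refine ⟨hf.mul hg, C * D, fun x => ?_⟩
  rw [abs_mul]
  exact mul_le_mul (hC x) (hD x) (abs_nonneg _) ((abs_nonneg _).trans (hC x))

theorem const_mul (c : ℝ) (hf : BddMeas f) : BddMeas fun x => c * f x := (const c).mul hf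

theorem sub (hf : BddMeas f) (hg : BddMeas g) : BddMeas fun x => f x - g x := by
  simpa only [neg_one_mul, ← sub_eq_add_neg] using hf.add (hg.const_mul (-1))

theorem pow (hf : BddMeas f) (n : ℕ) : BddMeas fun x => f x ^ n := by
  obtain ⟨hf, C, hC⟩ := hf
  refine ⟨hf.pow_const n, C ^ n, fun x => ?_⟩
  rw [abs_pow]
  exact pow_le_pow_left₀ (abs_nonneg _) (hC x) n

theorem sum {ι : Type*} {s : Finset ι} {F : ι → α → ℝ} (hF : ∀ i ∈ s, BddMeas (F i)) :
    BddMeas fun x => ∑ i ∈ s, F i x := by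
  classical
  induction s using Finset.induction_on with
  | empty => simpa only [Finset.sum_empty] using const 0
  | insert i s hi ih =>
    simp only [Finset.sum_insert hi]
    exact (hF i (Finset.mem_insert_self i s)).add
      (ih fun j hj => hF j (Finset.mem_insert_of_mem hj))

theorem comp {T : β → α} (hf : BddMeas f) (hT : Measurable T) : BddMeas fun x => f (T x) := by
  obtain ⟨hf, C, hC⟩ := hf
  exact ⟨hf.comp hT, C, fun x => hC _⟩

theorem memLp (hf : BddMeas f) (p : ENNReal) (μ : Measure α) [IsFiniteMeasure μ] :
    MemLp f p μ := by
  obtain ⟨hf, C, hC⟩ := hf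
  exact MemLp.of_bound hf.aestronglyMeasurable C (ae_of_all _ hC)

theorem integrable (hf : BddMeas f) (μ : Measure α) [IsFiniteMeasure μ] : Integrable f μ :=
  memLp_one_iff_integrable.1 (hf.memLp 1 μ)

end BddMeas

section FourthMoment

variable {Ω : Type*} [MeasurableSpace Ω] {P : Measure Ω} {F G H : Ω → ℝ}

theorem integral_pow_mul_pow (hF : BddMeas F) (hG : BddMeas G) (h : IndepFun F G P) (m n : ℕ) :
    ∫ ω, F ω ^ m * G ω ^ n ∂P = (∫ ω, F ω ^ m ∂P) * ∫ ω, G ω ^ n ∂P :=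
  (h.comp (measurable_id.pow_const m) (measurable_id.pow_const n)).integral_fun_mul_eq_mul_integral
    (hF.pow m).1.aestronglyMeasurable (hG.pow n).1.aestronglyMeasurable

variable [IsProbabilityMeasure P]

theorem variance_sub_of_indepFun (hF : BddMeas F) (hG : BddMeas G) (h : IndepFun F G P) :
    Var[fun ω => F ω - G ω; P] = Var[F; P] + Var[G; P] := by
  rw [variance_fun_sub (hF.memLp 2 P) (hG.memLp 2 P),
    h.covariance_eq_zero (hF.memLp 2 P) (hG.memLp 2 P)]
  ring

theorem variance_eq_of_cyclic_differences (hF : BddMeas F) (hG : BddMeas G) (hH : BddMeas H)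
    (hFG : IndepFun F G P) (hFH : IndepFun F H P) (hGH : IndepFun G H P) {s : ℝ}
    (hcov : cov[fun ω => H ω - F ω, fun ω => F ω - G ω; P] = -s)
    (hvarHF : Var[fun ω => H ω - F ω; P] = 2 * s) (hvarFG : Var[fun ω => F ω - G ω; P] = 2 * s) :
    Var[F; P] = s ∧ Var[G; P] = s ∧ Var[H; P] = s := by
  have F2 := hF.memLp 2 P
  have G2 := hG.memLp 2 P
  have H2 := hH.memLp 2 P
  rw [covariance_fun_sub_fun_sub H2 F2 F2 G2, covariance_comm H F, covariance_comm H G,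
    hFH.covariance_eq_zero F2 H2, hGH.covariance_eq_zero G2 H2, hFG.covariance_eq_zero F2 G2,
    covariance_self hF.1.aemeasurable] at hcov
  rw [variance_sub_of_indepFun hH hF hFH.symm] at hvarHF
  rw [variance_sub_of_indepFun hF hG hFG] at hvarFG
  refine ⟨?_, ?_, ?_⟩ <;> linarith

theorem integral_pow_four_of_cube_sub_eq (hF : BddMeas F) (hG : BddMeas G) (h : IndepFun F G P)
    (hF0 : ∫ ω, F ω ∂P = 0) (hG0 : ∫ ω, G ω ∂P = 0) {s : ℝ}
    (hF2 : ∫ ω, F ω ^ 2 ∂P = s) (hG2 : ∫ ω, G ω ^ 2 ∂P = s)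
    (hcube : ∀ᵐ ω ∂P, (F ω - G ω) ^ 3 = 4 * s * (F ω - G ω)) :
    ∫ ω, F ω ^ 4 ∂P = s ^ 2 := by
  have expand : (fun ω => F ω ^ 4) =ᵐ[P] fun ω => 3 * (F ω ^ 3 * G ω ^ 1)
      - 3 * (F ω ^ 2 * G ω ^ 2) + F ω ^ 1 * G ω ^ 3 + 4 * s * F ω ^ 2
      - 4 * s * (F ω ^ 1 * G ω ^ 1) := by
    filter_upwards [hcube] with ω hω
    linear_combination F ω * hω
  have int (m n : ℕ) : Integrable (fun ω => F ω ^ m * G ω ^ n) P :=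
    ((hF.pow m).mul (hG.pow n)).integrable P
  have int2 := (hF.pow 2).integrable P
  rw [integral_congr_ae expand, integral_sub (by fun_prop) (by fun_prop),
    integral_add (by fun_prop) (by fun_prop), integral_add (by fun_prop) (by fun_prop),
    integral_sub (by fun_prop) (by fun_prop)]
  simp only [integral_const_mul, integral_pow_mul_pow hF hG h]
  simp only [pow_one, hF0, hG0, hF2, hG2]
  ring

theorem sq_ae_eq_of_integral_pow_four (hF : BddMeas F) {s : ℝ} (hF2 : ∫ ω, F ω ^ 2 ∂P = s)
    (hF4 : ∫ ω, F ω ^ 4 ∂P = s ^ 2) : ∀ᵐ ω ∂P, F ω ^ 2 = s := by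
  have var : Var[fun ω => F ω ^ 2; P] = 0 := by
    have sq : (fun ω => F ω ^ 2) ^ 2 = fun ω => F ω ^ 4 := by ext ω; simp only [Pi.pow_apply]; ring
    rw [variance_eq_sub ((hF.pow 2).memLp 2 P), sq, hF4, hF2, sub_self]
  simpa only [hF2] using ae_eq_integral_of_variance_eq_zero ((hF.pow 2).memLp 2 P) var

-- The cubic relation says that `F - G` takes values in `{0, 2σ, -2σ}` with `σ² = Var F`. It
-- determines the fourth moment of `F`, which makes the variance of `(F - mean)²` vanish.
theorem sub_integral_sq_ae_eq_variance (hF : BddMeas F) (hG : BddMeas G) (h : IndepFun F G P)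
    (hmean : ∫ ω, F ω ∂P = ∫ ω, G ω ∂P) (hvar : Var[F; P] = Var[G; P])
    (hcube : ∀ᵐ ω ∂P, (F ω - G ω) ^ 3 = 4 * Var[F; P] * (F ω - G ω)) :
    ∀ᵐ ω ∂P, (F ω - ∫ ω, F ω ∂P) ^ 2 = Var[F; P] := by
  set m := ∫ ω, F ω ∂P
  have centred {H : Ω → ℝ} (hH : BddMeas H) (hm : ∫ ω, H ω ∂P = m) :
      ∫ ω, (H ω - m) ∂P = 0 ∧ ∫ ω, (H ω - m) ^ 2 ∂P = Var[H; P] := by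
    rw [variance_eq_integral hH.1.aemeasurable, integral_sub (hH.integrable P) (integrable_const m),
      hm]
    simp
  obtain ⟨hF0, hF2⟩ := centred hF rfl
  obtain ⟨hG0, hG2⟩ := centred hG hmean.symm
  refine sq_ae_eq_of_integral_pow_four (hF.sub (.const m)) hF2
    (integral_pow_four_of_cube_sub_eq (hF.sub (.const m)) (hG.sub (.const m))
      (h.comp (measurable_id.sub_const m) (measurable_id.sub_const m)) hF0 hG0 hF2
      (hG2.trans hvar.symm) ?_)
  simpa only [sub_sub_sub_cancel_right] using hcube

theorem mul_self_ae_eq_of_cube_sub_eq (hF : BddMeas F) (hG : BddMeas G) (h : IndepFun F G P)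
    (hF1 : ∫ ω, F ω ∂P = 1 / 2) (hG1 : ∫ ω, G ω ∂P = 1 / 2)
    (hFvar : Var[F; P] = 1 / 4) (hGvar : Var[G; P] = 1 / 4)
    (hcube : ∀ᵐ ω ∂P, (F ω - G ω) ^ 3 = F ω - G ω) : ∀ᵐ ω ∂P, F ω * F ω = F ω := by
  have hsq := sub_integral_sq_ae_eq_variance hF hG h (hF1.trans hG1.symm) (hFvar.trans hGvar.symm)
    (by filter_upwards [hcube] with ω hω; rw [hω, hFvar]; ring)
  rw [hF1, hFvar] at hsq
  filter_upwards [hsq] with ω hω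
  linear_combination hω

theorem ae_mul_self_eq_of_cyclic_differences
    (hF : BddMeas F) (hG : BddMeas G) (hH : BddMeas H)
    (hFG : IndepFun F G P) (hFH : IndepFun F H P) (hGH : IndepFun G H P)
    (hF1 : ∫ ω, F ω ∂P = 1 / 2)
    (hHF1 : ∫ ω, (H ω - F ω) ∂P = 0) (hFG1 : ∫ ω, (F ω - G ω) ∂P = 0)
    (hHF2 : ∫ ω, (H ω - F ω) ^ 2 ∂P = 1 / 2) (hFG2 : ∫ ω, (F ω - G ω) ^ 2 ∂P = 1 / 2)
    (hcov : ∫ ω, (H ω - F ω) * (F ω - G ω) ∂P = -(1 / 4))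
    (hHFcube : ∀ᵐ ω ∂P, (H ω - F ω) ^ 3 = H ω - F ω)
    (hFGcube : ∀ᵐ ω ∂P, (F ω - G ω) ^ 3 = F ω - G ω) :
    ∫ ω, G ω ∂P = 1 / 2 ∧
      ∀ᵐ ω ∂P, F ω * F ω = F ω ∧ G ω * G ω = G ω ∧ H ω * H ω = H ω := by
  have hG1 : ∫ ω, G ω ∂P = 1 / 2 := by
    rw [integral_sub (hF.integrable P) (hG.integrable P)] at hFG1
    linarith
  have hH1 : ∫ ω, H ω ∂P = 1 / 2 := by
    rw [integral_sub (hH.integrable P) (hF.integrable P)] at hHF1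
    linarith
  have hHF := hH.sub hF
  have hFG' := hF.sub hG
  obtain ⟨hFvar, hGvar, hHvar⟩ := variance_eq_of_cyclic_differences hF hG hH hFG hFH hGH
    (s := 1 / 4)
    (by rw [covariance_eq_sub (hHF.memLp 2 P) (hFG'.memLp 2 P), hHF1, zero_mul, sub_zero]
        exact hcov)
    (by rw [variance_of_integral_eq_zero hHF.1.aemeasurable hHF1, hHF2]; norm_num)
    (by rw [variance_of_integral_eq_zero hFG'.1.aemeasurable hFG1, hFG2]; norm_num)
  have hGFcube : ∀ᵐ ω ∂P, (G ω - F ω) ^ 3 = G ω - F ω := by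
    filter_upwards [hFGcube] with ω hω
    linear_combination -hω
  refine ⟨hG1, ?_⟩
  filter_upwards [mul_self_ae_eq_of_cube_sub_eq hG hF hFG.symm hG1 hF1 hGvar hFvar hGFcube,
    mul_self_ae_eq_of_cube_sub_eq hF hG hFG hF1 hG1 hFvar hGvar hFGcube,
    mul_self_ae_eq_of_cube_sub_eq hH hF hFH.symm hH1 hF1 hHvar hFvar hHFcube] with ω hGω hFω hHω
  exact ⟨hFω, hGω, hHω⟩

end FourthMoment

section Coordinates

variable {X Y Z : Type*} [MeasurableSpace X] [MeasurableSpace Y] [MeasurableSpace Z]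
  (μ : Measure X) (ν : Measure Y) (ρ : Measure Z)
  [IsProbabilityMeasure μ] [IsProbabilityMeasure ν] [IsProbabilityMeasure ρ]

theorem measurePreserving_swap_fst_snd_fst :
    MeasurePreserving (fun ω : X × Y × Z => (ω.2.1, ω.1, ω.2.2))
      (μ.prod (ν.prod ρ)) (ν.prod (μ.prod ρ)) := by
  have assoc := (measurePreserving_prodAssoc μ ν ρ).symm
  have swap : MeasurePreserving (Prod.map Prod.swap id : (X × Y) × Z → (Y × X) × Z) _ _ :=
    (Measure.measurePreserving_swap (μ := μ) (ν := ν)).prod (.id ρ)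
  exact (measurePreserving_prodAssoc ν μ ρ).comp (swap.comp assoc)

theorem measurePreserving_snd_snd_fst_snd_fst :
    MeasurePreserving (fun ω : X × Y × Z => (ω.2.2, ω.1, ω.2.1))
      (μ.prod (ν.prod ρ)) (ρ.prod (μ.prod ν)) :=
  (measurePreserving_swap_fst_snd_fst μ ρ ν).comp
    ((MeasurePreserving.id μ).prod Measure.measurePreserving_swap)

theorem indepFun_comp_fst_comp_snd {Ω A B : Type*} [MeasurableSpace Ω] [MeasurableSpace A]
    [MeasurableSpace B] {P : Measure Ω} {κ : Measure A} {η : Measure B} [IsProbabilityMeasure κ]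
    [IsProbabilityMeasure η] {T : Ω → A × B} (hT : MeasurePreserving T P (κ.prod η)) :
    IndepFun (fun ω => (T ω).1) (fun ω => (T ω).2) P := by
  have h := indepFun_prod (μ := κ) (ν := η) measurable_id measurable_id
  rw [indepFun_iff_measure_inter_preimage_eq_mul] at h ⊢
  intro s t hs ht
  have hs' := hT.measure_preimage (measurable_fst hs).nullMeasurableSet
  have ht' := hT.measure_preimage (measurable_snd ht).nullMeasurableSet
  have hst := hT.measure_preimage ((measurable_fst hs).inter (measurable_snd ht)).nullMeasurableSet
  exact hst.trans ((h s t hs ht).trans (congrArg₂ _ hs' ht').symm)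

theorem indepFun_fst_snd :
    IndepFun (fun ω : X × Y × Z => ω.1) (fun ω => ω.2) (μ.prod (ν.prod ρ)) :=
  indepFun_comp_fst_comp_snd (.id _)

theorem indepFun_snd_fst_prodMk :
    IndepFun (fun ω : X × Y × Z => ω.2.1) (fun ω => (ω.1, ω.2.2)) (μ.prod (ν.prod ρ)) :=
  indepFun_comp_fst_comp_snd (measurePreserving_swap_fst_snd_fst μ ν ρ)

theorem indepFun_snd_snd_prodMk :
    IndepFun (fun ω : X × Y × Z => ω.2.2) (fun ω => (ω.1, ω.2.1)) (μ.prod (ν.prod ρ)) :=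
  indepFun_comp_fst_comp_snd (measurePreserving_snd_snd_fst_snd_fst μ ν ρ)

theorem BddMeas.integral_prod_prod {F : X × Y × Z → ℝ} (hF : BddMeas F) :
    ∫ ω, F ω ∂μ.prod (ν.prod ρ) = ∫ x, ∫ y, ∫ z, F (x, y, z) ∂ρ ∂ν ∂μ := by
  rw [integral_prod _ (hF.integrable _)]
  exact integral_congr_ae (ae_of_all _ fun x => integral_prod _
    ((hF.comp (T := fun q : Y × Z => (x, q)) (by fun_prop)).integrable _))

variable {α : X × Z → ℝ} {β : X × Y → ℝ} {γ : Y × Z → ℝ}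

-- Freezing a generic `x₀` splits `γ`; subtracting the frozen relation from the original one leaves
-- a relation between `α` and `β` in which a generic `y₀` can be frozen.
theorem exists_additive_splitting (hα : BddMeas α) (hβ : BddMeas β)
    (hsum : ∀ᵐ ω ∂μ.prod (ν.prod ρ), α (ω.1, ω.2.2) + β (ω.1, ω.2.1) + γ (ω.2.1, ω.2.2) = 0) :
    ∃ (f : X → ℝ) (g : Y → ℝ) (h : Z → ℝ), BddMeas f ∧ BddMeas g ∧ BddMeas h ∧
      ∀ᵐ ω ∂μ.prod (ν.prod ρ), α (ω.1, ω.2.2) = h ω.2.2 - f ω.1 ∧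
        β (ω.1, ω.2.1) = f ω.1 - g ω.2.1 ∧ γ (ω.2.1, ω.2.2) = g ω.2.1 - h ω.2.2 := by
  obtain ⟨x₀, hx₀⟩ := (Measure.ae_ae_of_ae_prod hsum).exists
  have frozen : ∀ᵐ ω ∂μ.prod (ν.prod ρ), α (x₀, ω.2.2) + β (x₀, ω.2.1) + γ ω.2 = 0 :=
    Measure.quasiMeasurePreserving_snd.ae hx₀
  have diff : ∀ᵐ ω ∂μ.prod (ν.prod ρ),
      β (ω.1, ω.2.1) - β (x₀, ω.2.1) = α (x₀, ω.2.2) - α (ω.1, ω.2.2) := by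
    filter_upwards [hsum, frozen] with ω h1 h2
    linear_combination h1 - h2
  have swap := (measurePreserving_swap_fst_snd_fst ν μ ρ).quasiMeasurePreserving
  obtain ⟨y₀, hy₀⟩ := (Measure.ae_ae_of_ae_prod (swap.ae diff)).exists
  have diff_frozen : ∀ᵐ ω ∂μ.prod (ν.prod ρ),
      β (ω.1, y₀) - β (x₀, y₀) = α (x₀, ω.2.2) - α (ω.1, ω.2.2) :=
    (Measure.quasiMeasurePreserving_snd.comp
      (measurePreserving_swap_fst_snd_fst μ ν ρ).quasiMeasurePreserving).ae hy₀
  refine ⟨fun x => β (x, y₀) - β (x₀, y₀), fun y => (-1) * β (x₀, y), fun z => α (x₀, z),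
    (hβ.comp (by fun_prop)).sub (.const _), (hβ.comp (by fun_prop)).const_mul _,
    hα.comp (by fun_prop), ?_⟩
  filter_upwards [hsum, frozen, diff_frozen] with ω h1 h2 h3
  exact ⟨by linear_combination h3, by linear_combination h1 - h2 - h3, by linear_combination h2⟩

/-- Functions of the three coordinates that are almost surely bits, the first two of them fair: in
the ring, they tell which way each source sends its token. -/
structure IsTokenBits (f : X → ℝ) (g : Y → ℝ) (h : Z → ℝ) : Prop where
  bddMeas_fst : BddMeas f
  bddMeas_snd : BddMeas g
  bddMeas_thd : BddMeas h
  integral_fst : ∫ ω, f ω.1 ∂μ.prod (ν.prod ρ) = 1 / 2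
  integral_snd : ∫ ω, g ω.2.1 ∂μ.prod (ν.prod ρ) = 1 / 2
  ae_mul_self : ∀ᵐ ω ∂μ.prod (ν.prod ρ),
    f ω.1 * f ω.1 = f ω.1 ∧ g ω.2.1 * g ω.2.1 = g ω.2.1 ∧ h ω.2.2 * h ω.2.2 = h ω.2.2

theorem exists_isTokenBits (hα : BddMeas α) (hβ : BddMeas β)
    (hsum : ∀ᵐ ω ∂μ.prod (ν.prod ρ), α (ω.1, ω.2.2) + β (ω.1, ω.2.1) + γ (ω.2.1, ω.2.2) = 0)
    (hα3 : ∀ᵐ ω ∂μ.prod (ν.prod ρ), α (ω.1, ω.2.2) ^ 3 = α (ω.1, ω.2.2))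
    (hβ3 : ∀ᵐ ω ∂μ.prod (ν.prod ρ), β (ω.1, ω.2.1) ^ 3 = β (ω.1, ω.2.1))
    (hα1 : ∫ ω, α (ω.1, ω.2.2) ∂μ.prod (ν.prod ρ) = 0)
    (hβ1 : ∫ ω, β (ω.1, ω.2.1) ∂μ.prod (ν.prod ρ) = 0)
    (hα2 : ∫ ω, α (ω.1, ω.2.2) ^ 2 ∂μ.prod (ν.prod ρ) = 1 / 2)
    (hβ2 : ∫ ω, β (ω.1, ω.2.1) ^ 2 ∂μ.prod (ν.prod ρ) = 1 / 2)
    (hαβ : ∫ ω, α (ω.1, ω.2.2) * β (ω.1, ω.2.1) ∂μ.prod (ν.prod ρ) = -(1 / 4)) :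
    ∃ f g h, IsTokenBits μ ν ρ f g h ∧ ∀ᵐ ω ∂μ.prod (ν.prod ρ),
      α (ω.1, ω.2.2) = h ω.2.2 - f ω.1 ∧ β (ω.1, ω.2.1) = f ω.1 - g ω.2.1 ∧
        γ (ω.2.1, ω.2.2) = g ω.2.1 - h ω.2.2 := by
  set P := μ.prod (ν.prod ρ)
  obtain ⟨f₀, g₀, h₀, hf₀, hg₀, hh₀, hsplit₀⟩ := exists_additive_splitting μ ν ρ hα hβ hsum
  set c := ∫ ω, f₀ ω.1 ∂P - 1 / 2 with hc
  obtain ⟨f, hf, hf_def⟩ : ∃ f, BddMeas f ∧ f = fun x => f₀ x - c := ⟨_, hf₀.sub (.const c), rfl⟩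
  obtain ⟨g, hg, hg_def⟩ : ∃ g, BddMeas g ∧ g = fun y => g₀ y - c := ⟨_, hg₀.sub (.const c), rfl⟩
  obtain ⟨h, hh, hh_def⟩ : ∃ h, BddMeas h ∧ h = fun z => h₀ z - c := ⟨_, hh₀.sub (.const c), rfl⟩
  have hf1 : ∫ ω, f ω.1 ∂P = 1 / 2 := by
    rw [hf_def, integral_sub ((hf₀.comp measurable_fst).integrable P) (integrable_const c)]
    simp [hc]
  have hsplit : ∀ᵐ ω ∂P, α (ω.1, ω.2.2) = h ω.2.2 - f ω.1 ∧
      β (ω.1, ω.2.1) = f ω.1 - g ω.2.1 ∧ γ (ω.2.1, ω.2.2) = g ω.2.1 - h ω.2.2 := by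
    simpa only [hf_def, hg_def, hh_def, sub_sub_sub_cancel_right] using hsplit₀
  have eα : (fun ω : X × Y × Z => α (ω.1, ω.2.2)) =ᵐ[P] fun ω => h ω.2.2 - f ω.1 :=
    hsplit.mono fun _ hω => hω.1
  have eβ : (fun ω : X × Y × Z => β (ω.1, ω.2.1)) =ᵐ[P] fun ω => f ω.1 - g ω.2.1 :=
    hsplit.mono fun _ hω => hω.2.1
  obtain ⟨hg1, hbits⟩ := ae_mul_self_eq_of_cyclic_differences
    (hf.comp measurable_fst) (hg.comp measurable_snd.fst) (hh.comp measurable_snd.snd)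
    ((indepFun_fst_snd μ ν ρ).comp hf.1 (hg.1.comp measurable_fst))
    ((indepFun_fst_snd μ ν ρ).comp hf.1 (hh.1.comp measurable_snd))
    ((indepFun_snd_fst_prodMk μ ν ρ).comp hg.1 (hh.1.comp measurable_snd)) hf1
    ((integral_congr_ae eα).symm.trans hα1) ((integral_congr_ae eβ).symm.trans hβ1)
    ((integral_congr_ae (eα.pow_const 2)).symm.trans hα2)
    ((integral_congr_ae (eβ.pow_const 2)).symm.trans hβ2)
    ((integral_congr_ae (eα.mul eβ)).symm.trans hαβ)
    (by filter_upwards [hα3, eα] with ω hω e; rwa [← e])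
    (by filter_upwards [hβ3, eβ] with ω hω e; rwa [← e])
  exact ⟨f, g, h, ⟨hf, hg, hh, hf1, hg1, hbits⟩, hsplit⟩

end Coordinates

section FairBit

variable {Ω A B : Type*} [MeasurableSpace Ω] [MeasurableSpace A] [MeasurableSpace B]
  {P : Measure Ω} {U : Ω → A} {V : Ω → B} {φ : A → ℝ} {ψ : B → ℝ}

theorem integral_comp_mul_comp (hUV : IndepFun U V P) (hU : Measurable U) (hV : Measurable V)
    (hφ : BddMeas φ) (hψ : BddMeas ψ) :
    ∫ ω, φ (U ω) * ψ (V ω) ∂P = (∫ ω, φ (U ω) ∂P) * ∫ ω, ψ (V ω) ∂P :=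
  (hUV.comp hφ.1 hψ.1).integral_fun_mul_eq_mul_integral
    (hφ.comp hU).1.aestronglyMeasurable (hψ.comp hV).1.aestronglyMeasurable

theorem integral_one_sub_mul_eq_integral_mul [IsProbabilityMeasure P] (hUV : IndepFun U V P)
    (hU : Measurable U) (hV : Measurable V) (hφ : BddMeas φ) (hψ : BddMeas ψ)
    (hfair : ∫ ω, φ (U ω) ∂P = 1 / 2) :
    ∫ ω, (1 - φ (U ω)) * ψ (V ω) ∂P = ∫ ω, φ (U ω) * ψ (V ω) ∂P := by
  rw [integral_comp_mul_comp hUV hU hV ((BddMeas.const 1).sub hφ) hψ,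
    integral_comp_mul_comp hUV hU hV hφ hψ,
    integral_sub (integrable_const 1) ((hφ.comp hU).integrable P), hfair]
  norm_num

end FairBit

section Responses

theorem sum_mul_eq_of_forall_ne_zero {ι : Type*} [Fintype ι] {q v : ι → ℝ} {c : ℝ}
    (hq : ∑ i, q i = 1) (h : ∀ i, q i ≠ 0 → v i = c) : ∑ i, v i * q i = c := by
  have hterm : ∀ i, v i * q i = c * q i := fun i => by
    by_cases hi : q i = 0
    · rw [hi, mul_zero, mul_zero]
    · rw [h i hi]
  simp only [hterm, ← Finset.mul_sum, hq, mul_one]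

/-- A response kernel: outcome `i` is output with probability `p i x` on input `x`. -/
structure IsResponse {ι α : Type*} [Fintype ι] [MeasurableSpace α] (p : ι → α → ℝ) : Prop where
  measurable : ∀ i, Measurable (p i)
  nonneg : ∀ i x, 0 ≤ p i x
  sum_eq_one : ∀ x, ∑ i, p i x = 1

/-- The conditional mean of `v` under the response kernel `p`. -/
def responseMean {ι α : Type*} [Fintype ι] (p : ι → α → ℝ) (v : ι → ℝ) (x : α) : ℝ :=
  ∑ i, v i * p i x

namespace IsResponse

variable {ι α : Type*} [Fintype ι] [MeasurableSpace α] {p : ι → α → ℝ}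

theorem le_one (hp : IsResponse p) (i : ι) (x : α) : p i x ≤ 1 :=
  hp.sum_eq_one x ▸ Finset.single_le_sum (fun j _ => hp.nonneg j x) (Finset.mem_univ i)

theorem bddMeas (hp : IsResponse p) (i : ι) : BddMeas (p i) :=
  .of_mem_Icc (hp.measurable i) fun x => ⟨hp.nonneg i x, hp.le_one i x⟩

theorem comp_perm (hp : IsResponse p) (σ : Equiv.Perm ι) : IsResponse fun i => p (σ i) where
  measurable i := hp.measurable (σ i)
  nonneg i := hp.nonneg (σ i)
  sum_eq_one x := (Equiv.sum_comp σ fun i => p i x).trans (hp.sum_eq_one x)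

theorem exists_ne_zero (hp : IsResponse p) (x : α) : ∃ i, p i x ≠ 0 := by
  by_contra! h
  simpa [h] using hp.sum_eq_one x

theorem bddMeas_responseMean (hp : IsResponse p) (v : ι → ℝ) : BddMeas (responseMean p v) :=
  .sum fun i _ => (hp.bddMeas i).const_mul (v i)

theorem responseMean_eq_of_forall_ne_zero (hp : IsResponse p) {v : ι → ℝ} {x : α} {c : ℝ}
    (h : ∀ i, p i x ≠ 0 → v i = c) : responseMean p v x = c :=
  sum_mul_eq_of_forall_ne_zero (hp.sum_eq_one x) h

end IsResponse

end Responses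

namespace Outc

/-- The number of tokens an outcome reports in excess of one. -/
def excess : Outc → ℝ
  | zero => -1
  | one _ => 0
  | two => 1

theorem excess_cube (a : Outc) : a.excess ^ 3 = a.excess := by
  cases a <;> norm_num [excess]

theorem sum_eq (q : Outc → ℝ) : ∑ a, q a = q zero + ∑ k, q (one k) + q two := by
  have : (Finset.univ : Finset Outc) = {zero, one 0, one 1, two} := by decide
  rw [this, Fin.sum_univ_two]
  simp [add_assoc]

end Outc

/-- The outcome distribution `q` of a party that receives one token if `s = 1` and another one if
`t = 0`, and always reports the number of tokens it received. -/
structure IsTokenResponse (q : Outc → ℝ) (s t : ℝ) : Prop where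
  sum_eq_one : ∑ a, q a = 1
  excess_eq : ∀ a, q a ≠ 0 → a.excess = s - t
  mul_self_left : s * s = s
  mul_self_right : t * t = t

namespace IsTokenResponse

variable {q : Outc → ℝ} {s t : ℝ}

theorem two_sub_zero (h : IsTokenResponse q s t) : q .two - q .zero = s - t := by
  have := sum_mul_eq_of_forall_ne_zero h.sum_eq_one h.excess_eq
  simp only [Outc.sum_eq, Outc.excess, zero_mul, Finset.sum_const_zero] at this
  linear_combination this

theorem two_add_zero (h : IsTokenResponse q s t) : q .two + q .zero = (s - t) ^ 2 := by
  have := sum_mul_eq_of_forall_ne_zero h.sum_eq_one (v := fun a => a.excess ^ 2) fun a ha => by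
    rw [h.excess_eq a ha]
  simp only [Outc.sum_eq, Outc.excess, ne_eq, OfNat.ofNat_ne_zero, not_false_eq_true, zero_pow,
    zero_mul, Finset.sum_const_zero] at this
  linear_combination this

theorem apply_two (h : IsTokenResponse q s t) : q .two = s * (1 - t) := by
  linear_combination (1 / 2) * h.two_sub_zero + (1 / 2) * h.two_add_zero
    + (1 / 2) * h.mul_self_left + (1 / 2) * h.mul_self_right

theorem apply_zero (h : IsTokenResponse q s t) : q .zero = t * (1 - s) := by
  linear_combination (1 / 2) * h.two_add_zero - (1 / 2) * h.two_sub_zero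
    + (1 / 2) * h.mul_self_left + (1 / 2) * h.mul_self_right

theorem mul_sum_one (h : IsTokenResponse q s t) : s * t * ∑ k, q (.one k) = s * t := by
  have hsum := h.sum_eq_one
  rw [Outc.sum_eq] at hsum
  linear_combination s * t * hsum - s * t * h.two_add_zero
    + (2 * t ^ 2 - t * (s + 1)) * h.mul_self_left + (2 * s - s * (t + 1)) * h.mul_self_right

end IsTokenResponse

theorem add_add_sub_two_le_mul_mul {a b c : ℝ} (ha1 : a ≤ 1) (hb : 0 ≤ b) (hb1 : b ≤ 1)
    (hc1 : c ≤ 1) : a + b + c - 2 ≤ a * b * c := by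
  nlinarith [mul_nonneg (sub_nonneg.2 ha1) (sub_nonneg.2 hb1),
    mul_nonneg (sub_nonneg.2 (mul_le_one₀ ha1 hb hb1)) (sub_nonneg.2 hc1)]

/-- A local model on the network with sources `X`, `Y`, `Z` in which the first party is connected
to `X` and `Z`, the second to `X` and `Y`, the third to `Y` and `Z`, and the merged party, with
outcomes in `ι`, to `Z` only. -/
structure LocalModel (X Y Z ι : Type*) [MeasurableSpace X] [MeasurableSpace Y] [MeasurableSpace Z]
    [Fintype ι] where
  μ : Measure X
  ν : Measure Y
  ρ : Measure Z
  isProbabilityMeasure_μ : IsProbabilityMeasure μ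
  isProbabilityMeasure_ν : IsProbabilityMeasure ν
  isProbabilityMeasure_ρ : IsProbabilityMeasure ρ
  p₁ : Outc → X × Z → ℝ
  p₂ : Outc → X × Y → ℝ
  p₃ : Outc → Y × Z → ℝ
  pM : ι → Z → ℝ
  isResponse_p₁ : IsResponse p₁
  isResponse_p₂ : IsResponse p₂
  isResponse_p₃ : IsResponse p₃
  isResponse_pM : IsResponse pM

attribute [instance] LocalModel.isProbabilityMeasure_μ LocalModel.isProbabilityMeasure_ν
  LocalModel.isProbabilityMeasure_ρ

namespace LocalModel

variable {X Y Z ι : Type*} [MeasurableSpace X] [MeasurableSpace Y] [MeasurableSpace Z] [Fintype ι]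
  (M : LocalModel X Y Z ι)

/-- The joint law of the hidden variables. -/
noncomputable abbrev hidden : Measure (X × Y × Z) := M.μ.prod (M.ν.prod M.ρ)

/-- The probability of the outcome tuple `o` given the hidden variables `ω`. -/
def condProb (o : Outc × Outc × Outc × ι) (ω : X × Y × Z) : ℝ :=
  M.p₁ o.1 (ω.1, ω.2.2) * M.p₂ o.2.1 (ω.1, ω.2.1) * M.p₃ o.2.2.1 (ω.2.1, ω.2.2)
    * M.pM o.2.2.2 ω.2.2

/-- The probability of the outcome tuple `o`. -/
noncomputable def prob (o : Outc × Outc × Outc × ι) : ℝ := ∫ ω, M.condProb o ω ∂M.hidden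

theorem bddMeas_p₁ (a : Outc) : BddMeas fun ω : X × Y × Z => M.p₁ a (ω.1, ω.2.2) :=
  (M.isResponse_p₁.bddMeas a).comp (by fun_prop)

theorem bddMeas_p₂ (a : Outc) : BddMeas fun ω : X × Y × Z => M.p₂ a (ω.1, ω.2.1) :=
  (M.isResponse_p₂.bddMeas a).comp (by fun_prop)

theorem bddMeas_p₃ (a : Outc) : BddMeas fun ω : X × Y × Z => M.p₃ a (ω.2.1, ω.2.2) :=
  (M.isResponse_p₃.bddMeas a).comp (by fun_prop)

theorem bddMeas_pM (m : ι) : BddMeas fun ω : X × Y × Z => M.pM m ω.2.2 :=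
  (M.isResponse_pM.bddMeas m).comp (by fun_prop)

theorem bddMeas_condProb (o : Outc × Outc × Outc × ι) : BddMeas (M.condProb o) :=
  (((M.bddMeas_p₁ o.1).mul (M.bddMeas_p₂ o.2.1)).mul (M.bddMeas_p₃ o.2.2.1)).mul
    (M.bddMeas_pM o.2.2.2)

theorem condProb_nonneg (o : Outc × Outc × Outc × ι) (ω : X × Y × Z) : 0 ≤ M.condProb o ω :=
  mul_nonneg (mul_nonneg (mul_nonneg (M.isResponse_p₁.nonneg _ _) (M.isResponse_p₂.nonneg _ _))
    (M.isResponse_p₃.nonneg _ _)) (M.isResponse_pM.nonneg _ _)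

theorem sum_condProb (ω : X × Y × Z) : ∑ o, M.condProb o ω = 1 := by
  simp only [condProb, Fintype.sum_prod_type, ← Finset.mul_sum,
    M.isResponse_p₁.sum_eq_one, M.isResponse_p₂.sum_eq_one, M.isResponse_p₃.sum_eq_one,
    M.isResponse_pM.sum_eq_one, mul_one]

theorem integral_sum_mul_condProb (G : Outc × Outc × Outc × ι → ℝ) :
    ∫ ω, ∑ o, G o * M.condProb o ω ∂M.hidden = ∑ o, G o * M.prob o := by
  rw [integral_finsetSum _ fun o _ => ((M.bddMeas_condProb o).const_mul (G o)).integrable _]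
  simp only [integral_const_mul, prob]

/-- The local model obtained by exchanging the outcomes `0` and `2` of the first three parties. -/
def reflect : LocalModel X Y Z ι where
  __ := M
  p₁ a := M.p₁ (Equiv.swap .zero .two a)
  p₂ a := M.p₂ (Equiv.swap .zero .two a)
  p₃ a := M.p₃ (Equiv.swap .zero .two a)
  isResponse_p₁ := M.isResponse_p₁.comp_perm _
  isResponse_p₂ := M.isResponse_p₂.comp_perm _
  isResponse_p₃ := M.isResponse_p₃.comp_perm _

/-- The numbers of tokens reported by the four parties, where `e m` is the excess over the average
reported by the merged party with outcome `m`, have the same law as if each of the four sources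
sent its token in a uniformly random direction. -/
def IsTokenCounting (e : ι → ℝ) : Prop :=
  ∀ g : ℝ → ℝ → ℝ → ℝ → ℝ,
    ∑ o, g o.1.excess o.2.1.excess o.2.2.1.excess (e o.2.2.2) * M.prob o =
      (∑ i : Fin 2, ∑ j : Fin 2, ∑ k : Fin 2, ∑ l : Fin 2, g (i - j) (j - k) (k - l) (l - i)) / 16

variable {M} {e : ι → ℝ}

theorem excess_swap (a : Outc) : (Equiv.swap Outc.zero Outc.two a).excess = -a.excess := by
  rcases a with _ | k | _ <;> simp [Outc.excess, Equiv.swap_apply_def]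

theorem IsTokenCounting.reflect (hM : M.IsTokenCounting e) :
    M.reflect.IsTokenCounting fun m => -e m := by
  intro g
  have h := hM fun a b c d => g (-a) (-b) (-c) (-d)
  let σ := Equiv.swap Outc.zero Outc.two
  rw [← (σ.prodCongr (σ.prodCongr (σ.prodCongr (.refl ι)))).sum_comp] at h
  simp only [Equiv.prodCongr_apply, Prod.map, σ, excess_swap, neg_neg] at h
  refine (Eq.trans ?_ h).trans ?_
  · rfl
  · simp only [Fin.sum_univ_two]
    norm_num
    ring

/-- The mean number of tokens, in excess of one, reported by the first party. -/
noncomputable abbrev mean₁ (M : LocalModel X Y Z ι) : X × Z → ℝ := responseMean M.p₁ Outc.excess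

/-- The mean number of tokens, in excess of one, reported by the second party. -/
noncomputable abbrev mean₂ (M : LocalModel X Y Z ι) : X × Y → ℝ := responseMean M.p₂ Outc.excess

/-- The mean number of tokens, in excess of one, reported by the third party. -/
noncomputable abbrev mean₃ (M : LocalModel X Y Z ι) : Y × Z → ℝ := responseMean M.p₃ Outc.excess

theorem IsTokenCounting.ae_sum_excess_eq_zero (hM : M.IsTokenCounting e) :
    ∀ᵐ ω ∂M.hidden, ∀ o, M.condProb o ω ≠ 0 →
      o.1.excess + o.2.1.excess + o.2.2.1.excess + e o.2.2.2 = 0 := by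
  have hint := (M.integral_sum_mul_condProb _).trans (hM fun a b c d => (a + b + c + d) ^ 2)
  have hbdd : BddMeas fun ω => ∑ o : Outc × Outc × Outc × ι,
      (o.1.excess + o.2.1.excess + o.2.2.1.excess + e o.2.2.2) ^ 2 * M.condProb o ω :=
    .sum fun o _ => (M.bddMeas_condProb o).const_mul _
  have hnonneg (ω : X × Y × Z) (o : Outc × Outc × Outc × ι) :
      0 ≤ (o.1.excess + o.2.1.excess + o.2.2.1.excess + e o.2.2.2) ^ 2 * M.condProb o ω :=
    mul_nonneg (sq_nonneg _) (M.condProb_nonneg o ω)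
  rw [show (∑ i : Fin 2, ∑ j : Fin 2, ∑ k : Fin 2, ∑ l : Fin 2,
      ((i : ℝ) - j + (j - k) + (k - l) + (l - i)) ^ 2) / 16 = 0 by simp,
    integral_eq_zero_iff_of_nonneg (fun ω => Finset.sum_nonneg fun o _ => hnonneg ω o)
      (hbdd.integrable _)] at hint
  filter_upwards [hint] with ω hω o ho
  have hterm := (Finset.sum_eq_zero_iff_of_nonneg fun o _ => hnonneg ω o).1 hω o (Finset.mem_univ o)
  exact pow_eq_zero_iff two_ne_zero |>.1 ((mul_eq_zero.1 hterm).resolve_right ho)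

theorem excess_eq_responseMean {ω : X × Y × Z} (h : ∀ o, M.condProb o ω ≠ 0 →
      o.1.excess + o.2.1.excess + o.2.2.1.excess + e o.2.2.2 = 0) :
    (∀ a, M.p₁ a (ω.1, ω.2.2) ≠ 0 → a.excess = M.mean₁ (ω.1, ω.2.2)) ∧
    (∀ a, M.p₂ a (ω.1, ω.2.1) ≠ 0 → a.excess = M.mean₂ (ω.1, ω.2.1)) ∧
    (∀ a, M.p₃ a (ω.2.1, ω.2.2) ≠ 0 → a.excess = M.mean₃ (ω.2.1, ω.2.2)) ∧
    (∀ m, M.pM m ω.2.2 ≠ 0 → e m = responseMean M.pM e ω.2.2) ∧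
    M.mean₁ (ω.1, ω.2.2) + M.mean₂ (ω.1, ω.2.1) + M.mean₃ (ω.2.1, ω.2.2)
      + responseMean M.pM e ω.2.2 = 0 := by
  have total {a b c m} (ha : M.p₁ a (ω.1, ω.2.2) ≠ 0) (hb : M.p₂ b (ω.1, ω.2.1) ≠ 0)
      (hc : M.p₃ c (ω.2.1, ω.2.2) ≠ 0) (hm : M.pM m ω.2.2 ≠ 0) :
      a.excess + b.excess + c.excess + e m = 0 :=
    h (a, b, c, m) (mul_ne_zero (mul_ne_zero (mul_ne_zero ha hb) hc) hm)
  obtain ⟨a, ha⟩ := M.isResponse_p₁.exists_ne_zero (ω.1, ω.2.2)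
  obtain ⟨b, hb⟩ := M.isResponse_p₂.exists_ne_zero (ω.1, ω.2.1)
  obtain ⟨c, hc⟩ := M.isResponse_p₃.exists_ne_zero (ω.2.1, ω.2.2)
  obtain ⟨m, hm⟩ := M.isResponse_pM.exists_ne_zero ω.2.2
  have h₀ := total ha hb hc hm
  have h₁ : ∀ a', M.p₁ a' (ω.1, ω.2.2) ≠ 0 → a'.excess = a.excess := fun a' ha' => by
    linarith [total ha' hb hc hm]
  have h₂ : ∀ b', M.p₂ b' (ω.1, ω.2.1) ≠ 0 → b'.excess = b.excess := fun b' hb' => by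
    linarith [total ha hb' hc hm]
  have h₃ : ∀ c', M.p₃ c' (ω.2.1, ω.2.2) ≠ 0 → c'.excess = c.excess := fun c' hc' => by
    linarith [total ha hb hc' hm]
  have h₄ : ∀ m', M.pM m' ω.2.2 ≠ 0 → e m' = e m := fun m' hm' => by
    linarith [total ha hb hc hm']
  rw [mean₁, mean₂, mean₃, M.isResponse_p₁.responseMean_eq_of_forall_ne_zero h₁,
    M.isResponse_p₂.responseMean_eq_of_forall_ne_zero h₂,
    M.isResponse_p₃.responseMean_eq_of_forall_ne_zero h₃,
    M.isResponse_pM.responseMean_eq_of_forall_ne_zero h₄]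
  exact ⟨h₁, h₂, h₃, h₄, h₀⟩

theorem IsTokenCounting.integral_responseMean (hM : M.IsTokenCounting e)
    (g : ℝ → ℝ → ℝ → ℝ → ℝ) :
    ∫ ω, g (M.mean₁ (ω.1, ω.2.2)) (M.mean₂ (ω.1, ω.2.1)) (M.mean₃ (ω.2.1, ω.2.2))
        (responseMean M.pM e ω.2.2) ∂M.hidden =
      (∑ i : Fin 2, ∑ j : Fin 2, ∑ k : Fin 2, ∑ l : Fin 2,
        g (i - j) (j - k) (k - l) (l - i)) / 16 := by
  refine Eq.trans (integral_congr_ae ?_) ((M.integral_sum_mul_condProb _).trans (hM g))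
  filter_upwards [hM.ae_sum_excess_eq_zero] with ω hω
  obtain ⟨h₁, h₂, h₃, h₄, -⟩ := excess_eq_responseMean hω
  refine (sum_mul_eq_of_forall_ne_zero (M.sum_condProb ω) fun o ho => ?_).symm
  simp only [condProb, mul_ne_zero_iff] at ho
  rw [h₁ _ ho.1.1.1, h₂ _ ho.1.1.2, h₃ _ ho.1.2, h₄ _ ho.2]

variable (M) in
/-- The bits `f`, `g`, `h` tell which way the three sources send their tokens in the local model
`M` whenever the merged party outputs `m`. -/
structure IsRoutedBy (m : ι) (f : X → ℝ) (g : Y → ℝ) (h : Z → ℝ) : Prop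
    extends IsTokenBits M.μ M.ν M.ρ f g h where
  ae_isTokenResponse : ∀ᵐ ω ∂M.hidden,
    IsTokenResponse (M.p₁ · (ω.1, ω.2.2)) (h ω.2.2) (f ω.1) ∧
    IsTokenResponse (M.p₂ · (ω.1, ω.2.1)) (f ω.1) (g ω.2.1) ∧
    (M.pM m ω.2.2 ≠ 0 → IsTokenResponse (M.p₃ · (ω.2.1, ω.2.2)) (g ω.2.1) (h ω.2.2))

theorem IsTokenCounting.exists_isRoutedBy (hM : M.IsTokenCounting e) {m : ι} (hm : e m = 0) :
    ∃ f g h, M.IsRoutedBy m f g h := by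
  have law := hM.integral_responseMean
  have hpoint := hM.ae_sum_excess_eq_zero.mono fun ω => excess_eq_responseMean
  obtain ⟨f, g, h, hbits, hsplit⟩ := exists_isTokenBits M.μ M.ν M.ρ
    (γ := fun q => M.mean₃ q + responseMean M.pM e q.2)
    (M.isResponse_p₁.bddMeas_responseMean Outc.excess)
    (M.isResponse_p₂.bddMeas_responseMean Outc.excess)
    (by filter_upwards [hpoint] with ω ⟨_, _, _, _, h⟩; linarith)
    (by filter_upwards [hpoint] with ω ⟨h, _⟩
        obtain ⟨a, ha⟩ := M.isResponse_p₁.exists_ne_zero (ω.1, ω.2.2)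
        have hcube := a.excess_cube
        rwa [h a ha] at hcube)
    (by filter_upwards [hpoint] with ω ⟨_, h, _⟩
        obtain ⟨a, ha⟩ := M.isResponse_p₂.exists_ne_zero (ω.1, ω.2.1)
        have hcube := a.excess_cube
        rwa [h a ha] at hcube)
    ((law fun a _ _ _ => a).trans (by norm_num [Fin.sum_univ_two]))
    ((law fun _ b _ _ => b).trans (by norm_num [Fin.sum_univ_two]))
    ((law fun a _ _ _ => a ^ 2).trans (by norm_num [Fin.sum_univ_two]))
    ((law fun _ b _ _ => b ^ 2).trans (by norm_num [Fin.sum_univ_two]))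
    ((law fun a b _ _ => a * b).trans (by norm_num [Fin.sum_univ_two]))
  refine ⟨f, g, h, hbits, ?_⟩
  filter_upwards [hpoint, hsplit, hbits.ae_mul_self] with ω ⟨h₁, h₂, h₃, h₄, _⟩ ⟨e₁, e₂, e₃⟩
    ⟨hf, hg, hh⟩
  refine ⟨⟨M.isResponse_p₁.sum_eq_one _, fun a ha => (h₁ a ha).trans e₁, hh, hf⟩,
    ⟨M.isResponse_p₂.sum_eq_one _, fun a ha => (h₂ a ha).trans e₂, hf, hg⟩,
    fun hpM => ⟨M.isResponse_p₃.sum_eq_one _, fun a ha => (h₃ a ha).trans ?_, hg, hh⟩⟩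
  rw [← e₃, ← h₄ m hpM, hm, add_zero]

namespace IsRoutedBy

variable (M) in
/-- The conditional probability, given the hidden variables, that the merged party outputs `m`,
restricted to the event that the three sources all send their tokens in the direction encoded by
the bit `1`. -/
def routedWeight (m : ι) (f : X → ℝ) (g : Y → ℝ) (h : Z → ℝ) (ω : X × Y × Z) : ℝ :=
  f ω.1 * g ω.2.1 * h ω.2.2 * M.pM m ω.2.2

variable {m : ι} {f : X → ℝ} {g : Y → ℝ} {h : Z → ℝ}

theorem bddMeas_routedWeight (hR : M.IsRoutedBy m f g h) : BddMeas (routedWeight M m f g h) :=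
  (((hR.bddMeas_fst.comp (by fun_prop)).mul (hR.bddMeas_snd.comp (by fun_prop))).mul
    (hR.bddMeas_thd.comp (by fun_prop))).mul (M.bddMeas_pM m)

theorem integral_routedWeight_mul_p₁ (hR : M.IsRoutedBy m f g h) (k : Fin 2) :
    ∫ ω, routedWeight M m f g h ω * M.p₁ (.one k) (ω.1, ω.2.2) ∂M.hidden =
      M.prob (.one k, .two, .zero, m) := by
  have hfair := integral_one_sub_mul_eq_integral_mul
    (indepFun_snd_fst_prodMk M.μ M.ν M.ρ) (by fun_prop) (by fun_prop) hR.bddMeas_snd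
    (((hR.bddMeas_fst.comp measurable_fst).mul
      ((hR.bddMeas_thd.mul (M.isResponse_pM.bddMeas m)).comp measurable_snd)).mul
      (M.isResponse_p₁.bddMeas (.one k))) hR.integral_snd
  refine Eq.trans (integral_congr_ae (ae_of_all _ fun ω => ?_))
    (hfair.symm.trans (integral_congr_ae ?_))
  · simp only [routedWeight]
    ring
  · filter_upwards [hR.ae_isTokenResponse, hR.ae_mul_self] with ω ⟨_, h₂, h₃⟩ ⟨_, hg, _⟩
    by_cases hm : M.pM m ω.2.2 = 0
    · simp only [condProb, hm, mul_zero, zero_mul]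
    · simp only [condProb, h₂.apply_two, (h₃ hm).apply_zero]
      linear_combination -f ω.1 * h ω.2.2 * M.pM m ω.2.2 * M.p₁ (.one k) (ω.1, ω.2.2) * hg

theorem integral_routedWeight_mul_p₃ (hR : M.IsRoutedBy m f g h) (k : Fin 2) :
    ∫ ω, routedWeight M m f g h ω * M.p₃ (.one k) (ω.2.1, ω.2.2) ∂M.hidden =
      M.prob (.two, .zero, .one k, m) := by
  have hfair := integral_one_sub_mul_eq_integral_mul
    (indepFun_fst_snd M.μ M.ν M.ρ) (by fun_prop) (by fun_prop) hR.bddMeas_fst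
    (((hR.bddMeas_snd.comp measurable_fst).mul
      ((hR.bddMeas_thd.mul (M.isResponse_pM.bddMeas m)).comp measurable_snd)).mul
      (M.isResponse_p₃.bddMeas (.one k))) hR.integral_fst
  refine Eq.trans (integral_congr_ae (ae_of_all _ fun ω => ?_))
    (hfair.symm.trans (integral_congr_ae ?_))
  · simp only [routedWeight]
    ring
  · filter_upwards [hR.ae_isTokenResponse, hR.ae_mul_self] with ω ⟨h₁, h₂, _⟩ ⟨hf, _, _⟩
    simp only [condProb, h₁.apply_two, h₂.apply_zero]
    linear_combination -g ω.2.1 * h ω.2.2 * M.pM m ω.2.2 * M.p₃ (.one k) (ω.2.1, ω.2.2) * hf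

theorem integral_routedWeight (hR : M.IsRoutedBy m f g h) :
    ∫ ω, routedWeight M m f g h ω ∂M.hidden = ∑ k, M.prob (.one k, .two, .zero, m) := by
  simp only [← hR.integral_routedWeight_mul_p₁]
  rw [← integral_finsetSum _ fun k _ =>
    (hR.bddMeas_routedWeight.mul (M.bddMeas_p₁ (.one k))).integrable _]
  refine integral_congr_ae ?_
  filter_upwards [hR.ae_isTokenResponse] with ω ⟨h₁, _, _⟩
  rw [← Finset.mul_sum, routedWeight]
  linear_combination -g ω.2.1 * M.pM m ω.2.2 * h₁.mul_sum_one

theorem sum_integral_routedWeight_mul_p₂ (hR : M.IsRoutedBy m f g h) :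
    ∑ k, ∫ ω, routedWeight M m f g h ω * M.p₂ (.one k) (ω.1, ω.2.1) ∂M.hidden =
      ∫ ω, routedWeight M m f g h ω ∂M.hidden := by
  rw [← integral_finsetSum _ fun k _ =>
    (hR.bddMeas_routedWeight.mul (M.bddMeas_p₂ (.one k))).integrable _]
  refine integral_congr_ae ?_
  filter_upwards [hR.ae_isTokenResponse] with ω ⟨_, h₂, _⟩
  rw [← Finset.mul_sum, routedWeight]
  linear_combination h ω.2.2 * M.pM m ω.2.2 * h₂.mul_sum_one

theorem integral_thd_mul_fst_snd_p₂ (hR : M.IsRoutedBy m f g h) (k : Fin 2) {φ : Z → ℝ}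
    (hφ : BddMeas φ) :
    ∫ ω, φ ω.2.2 * (f ω.1 * g ω.2.1 * M.p₂ (.one k) (ω.1, ω.2.1)) ∂M.hidden =
      (∫ ω, φ ω.2.2 ∂M.hidden) * ∫ ω, f ω.1 * g ω.2.1 * M.p₂ (.one k) (ω.1, ω.2.1) ∂M.hidden :=
  integral_comp_mul_comp (indepFun_snd_snd_prodMk M.μ M.ν M.ρ) (by fun_prop) (by fun_prop) hφ
    (((hR.bddMeas_fst.comp measurable_fst).mul (hR.bddMeas_snd.comp measurable_snd)).mul
      (M.isResponse_p₂.bddMeas (.one k)))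

theorem integral_routedWeight_mul_p₂ (hR : M.IsRoutedBy m f g h) (k : Fin 2) :
    ∫ ω, routedWeight M m f g h ω * M.p₂ (.one k) (ω.1, ω.2.1) ∂M.hidden =
      (∫ ω, h ω.2.2 * M.pM m ω.2.2 ∂M.hidden) *
        ∫ ω, f ω.1 * g ω.2.1 * M.p₂ (.one k) (ω.1, ω.2.1) ∂M.hidden := by
  rw [← hR.integral_thd_mul_fst_snd_p₂ k (hR.bddMeas_thd.mul (M.isResponse_pM.bddMeas m))]
  refine integral_congr_ae (ae_of_all _ fun ω => ?_)
  simp only [routedWeight]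
  ring

theorem prob_zero_one_two (hR : M.IsRoutedBy m f g h) (k : Fin 2) :
    M.prob (.zero, .one k, .two, m) = (∫ ω, (1 - h ω.2.2) * M.pM m ω.2.2 ∂M.hidden) *
      ∫ ω, f ω.1 * g ω.2.1 * M.p₂ (.one k) (ω.1, ω.2.1) ∂M.hidden := by
  rw [← hR.integral_thd_mul_fst_snd_p₂ k (φ := fun z => (1 - h z) * M.pM m z)
    (((BddMeas.const 1).sub hR.bddMeas_thd).mul (M.isResponse_pM.bddMeas m))]
  refine integral_congr_ae ?_
  filter_upwards [hR.ae_isTokenResponse, hR.ae_mul_self] with ω ⟨h₁, _, h₃⟩ ⟨_, _, hh⟩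
  by_cases hm : M.pM m ω.2.2 = 0
  · simp only [condProb, hm, mul_zero, zero_mul]
  · simp only [condProb, h₁.apply_zero, (h₃ hm).apply_two]
    linear_combination f ω.1 * g ω.2.1 * M.pM m ω.2.2 * M.p₂ (.one k) (ω.1, ω.2.1) * hh

theorem sum_prob_mul_integral_routedWeight_mul_p₂ (hR : M.IsRoutedBy m f g h) (k : Fin 2) :
    (∑ i, M.prob (.zero, .one i, .two, m)) *
        ∫ ω, routedWeight M m f g h ω * M.p₂ (.one k) (ω.1, ω.2.1) ∂M.hidden =
      (∫ ω, routedWeight M m f g h ω ∂M.hidden) * M.prob (.zero, .one k, .two, m) := by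
  rw [← hR.sum_integral_routedWeight_mul_p₂]
  simp only [hR.prob_zero_one_two, hR.integral_routedWeight_mul_p₂, ← Finset.mul_sum]
  ring

theorem ae_routedWeight_mul_le_condProb (hR : M.IsRoutedBy m f g h) (a b c : Outc) :
    ∀ᵐ ω ∂M.hidden, routedWeight M m f g h ω *
        (M.p₁ a (ω.1, ω.2.2) + M.p₂ b (ω.1, ω.2.1) + M.p₃ c (ω.2.1, ω.2.2) - 2) ≤
      M.condProb (a, b, c, m) ω := by
  filter_upwards [hR.ae_mul_self] with ω ⟨hf, hg, hh⟩
  have hbit : IsIdempotentElem (f ω.1 * g ω.2.1 * h ω.2.2) :=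
    (IsIdempotentElem.mul (a := f ω.1) hf hg).mul hh
  rcases IsIdempotentElem.iff_eq_zero_or_one.1 hbit with hbit | hbit
  · rw [routedWeight, hbit, zero_mul, zero_mul]
    exact M.condProb_nonneg _ ω
  · rw [routedWeight, hbit, one_mul, condProb, mul_comm]
    have h₁ := M.isResponse_p₁
    have h₂ := M.isResponse_p₂
    have h₃ := M.isResponse_p₃
    exact mul_le_mul_of_nonneg_right (add_add_sub_two_le_mul_mul (h₁.le_one _ _) (h₂.nonneg _ _)
      (h₂.le_one _ _) (h₃.le_one _ _)) (M.isResponse_pM.nonneg _ _)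

theorem mul_three_mul_sub_two_le_prob (hR : M.IsRoutedBy m f g h) {k : Fin 2} {A B r : ℝ}
    (hA : A ≠ 0) (hAsum : ∑ i, M.prob (.zero, .one i, .two, m) = A)
    (hBsum : ∑ i, M.prob (.one i, .two, .zero, m) = B)
    (h₁ : M.prob (.one k, .two, .zero, m) = B * r) (h₂ : M.prob (.zero, .one k, .two, m) = A * r)
    (h₃ : M.prob (.two, .zero, .one k, m) = B * r) :
    B * (3 * r - 2) ≤ M.prob (.one k, .one k, .one k, m) := by
  have hw := hR.bddMeas_routedWeight
  have e₁ := (hR.integral_routedWeight_mul_p₁ k).trans h₁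
  have e₂ : ∫ ω, routedWeight M m f g h ω * M.p₂ (.one k) (ω.1, ω.2.1) ∂M.hidden = B * r := by
    have := hR.sum_prob_mul_integral_routedWeight_mul_p₂ k
    rw [hAsum, hR.integral_routedWeight, hBsum, h₂] at this
    exact mul_left_cancel₀ hA (by linear_combination this)
  have e₃ := (hR.integral_routedWeight_mul_p₃ k).trans h₃
  have i₁ := (hw.mul (M.bddMeas_p₁ (.one k))).integrable M.hidden
  have i₂ := (hw.mul (M.bddMeas_p₂ (.one k))).integrable M.hidden
  have i₃ := (hw.mul (M.bddMeas_p₃ (.one k))).integrable M.hidden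
  have i₀ := (hw.mul (.const 2)).integrable M.hidden
  refine le_trans (le_of_eq ?_) (integral_mono_ae (((i₁.add i₂).add i₃).sub i₀)
    ((M.bddMeas_condProb _).integrable _) ?_)
  · rw [integral_sub' ((i₁.add i₂).add i₃) i₀, integral_add' (i₁.add i₂) i₃, integral_add' i₁ i₂,
      e₁, e₂, e₃, integral_mul_const, hR.integral_routedWeight, hBsum]
    ring
  · filter_upwards [hR.ae_routedWeight_mul_le_condProb (.one k) (.one k) (.one k)] with ω hω
    refine le_trans (le_of_eq ?_) hω
    simp only [Pi.sub_apply, Pi.add_apply]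
    ring

end IsRoutedBy

end LocalModel

section Ring

theorem finNext_castSucc {n : ℕ} (k : Fin n) : finNext k.castSucc = k.succ := by
  ext
  simp [finNext, Nat.mod_eq_of_lt]

theorem finNext_last (n : ℕ) : finNext (Fin.last n) = 0 := by
  ext
  simp [finNext]

theorem finNext_bijective (n : ℕ) : Function.Bijective (finNext (N := n + 1)) := by
  refine Finite.surjective_iff_bijective.1 fun k => ?_
  induction k using Fin.cases with
  | zero => exact ⟨_, finNext_last n⟩
  | succ k => exact ⟨_, finNext_castSucc k⟩

theorem sum_sub_finNext_eq_zero {n : ℕ} (x : Fin (n + 1) → ℝ) :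
    ∑ k, (x k - x (finNext k)) = 0 := by
  rw [Finset.sum_sub_distrib, (finNext_bijective n).sum_comp x, sub_self]

theorem sum_fun_fin_succ {α β : Type*} [Fintype α] [AddCommMonoid β] {n : ℕ}
    (f : (Fin (n + 1) → α) → β) : ∑ a, f a = ∑ a₀, ∑ a' : Fin n → α, f (Fin.cons a₀ a') := by
  rw [← Fintype.sum_prod_type']
  exact (Fintype.sum_equiv (Fin.consEquiv fun _ => α) _ _ fun _ => rfl).symm

theorem prod_ofFn_apply {σ R : Type*} [Fintype σ] [DecidableEq σ] [CommSemiring R] (n : ℕ)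
    (T : Fin (n + 1) → Matrix σ σ R) (i j : σ) :
    (List.ofFn T).prod i j = ∑ L : Fin n → σ, ∏ k : Fin (n + 1),
      T k ((Fin.cons i L : Fin (n + 1) → σ) k) ((Fin.snoc L j : Fin (n + 1) → σ) k) := by
  induction n generalizing i with
  | zero => simp [Fin.snoc]
  | succ n ih =>
    rw [List.ofFn_succ, List.prod_cons, Matrix.mul_apply, sum_fun_fin_succ]
    refine Finset.sum_congr rfl fun l _ => ?_
    rw [ih, Finset.mul_sum]
    refine Finset.sum_congr rfl fun L _ => ?_
    rw [Fin.prod_univ_succ (n := n + 1), ← Fin.cons_snoc_eq_snoc_cons]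
    simp only [Fin.cons_zero, Fin.cons_succ]

theorem sum_prod_finNext_eq_trace {σ R : Type*} [Fintype σ] [DecidableEq σ] [CommSemiring R]
    {n : ℕ} (T : Fin (n + 1) → Matrix σ σ R) :
    ∑ L : Fin (n + 1) → σ, ∏ k, T k (L k) (L (finNext k)) = (List.ofFn T).prod.trace := by
  rw [sum_fun_fin_succ, Matrix.trace]
  refine Finset.sum_congr rfl fun i _ => ?_
  rw [Matrix.diag, prod_ofFn_apply]
  refine Finset.sum_congr rfl fun L _ => Finset.prod_congr rfl fun k _ => ?_
  congr 1
  induction k using Fin.lastCases with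
  | last => rw [finNext_last, Fin.cons_zero, Fin.snoc_last]
  | cast k => rw [finNext_castSucc, Fin.cons_succ, Fin.snoc_castSucc]

/-- The amplitude of the outcome `a` as a function of the bits received from the two neighbouring
sources, where the anticorrelation of `ψ⁺` has been absorbed into the second index: each source
contributes one bit, shared by the two transfer matrices next to it. -/
noncomputable def transferMatrix (u : ℝ) (a : Outc) : Matrix (Fin 2) (Fin 2) ℝ :=
  .of fun l r => basisVec u a l r.rev

variable {u : ℝ}

theorem transferMatrix_zero : transferMatrix u .zero = !![0, 1; 0, 0] := by
  ext i j
  fin_cases i <;> fin_cases j <;> simp [transferMatrix, basisVec]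

theorem transferMatrix_two : transferMatrix u .two = !![0, 0; 1, 0] := by
  ext i j
  fin_cases i <;> fin_cases j <;> simp [transferMatrix, basisVec]

theorem transferMatrix_one (k : Fin 2) :
    transferMatrix u (.one k) = .diagonal ![uco u k, vco u k] := by
  ext i j
  fin_cases i <;> fin_cases j <;> simp [transferMatrix, basisVec]

theorem excess_eq_of_transferMatrix_ne_zero {a : Outc} {l r : Fin 2}
    (h : transferMatrix u a l r ≠ 0) : a.excess = (l : ℝ) - r := by
  cases a <;> fin_cases l <;> fin_cases r <;> simp [transferMatrix, basisVec, Outc.excess] at h ⊢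

theorem uco_sq_add_uco_sq (h : u ^ 2 ≤ 1) : uco u 0 ^ 2 + uco u 1 ^ 2 = 1 := by
  simp [uco, Real.sq_sqrt (sub_nonneg.2 h)]

theorem vco_sq_add_vco_sq (h : u ^ 2 ≤ 1) : vco u 0 ^ 2 + vco u 1 ^ 2 = 1 := by
  simp [vco, Real.sq_sqrt (sub_nonneg.2 h)]

theorem sum_transferMatrix_mul (h : u ^ 2 ≤ 1) (l r l' r' : Fin 2) :
    ∑ a, transferMatrix u a l r * transferMatrix u a l' r' =
      if l = l' ∧ r = r' then 1 else 0 := by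
  have := Real.sq_sqrt (sub_nonneg.2 h)
  rw [Outc.sum_eq, Fin.sum_univ_two, transferMatrix_zero, transferMatrix_two, transferMatrix_one,
    transferMatrix_one]
  fin_cases l <;> fin_cases r <;> fin_cases l' <;> fin_cases r' <;>
    simp [uco, vco] <;> linarith

theorem ringAmp_eq_sum_prod_transferMatrix (N : ℕ) (u : ℝ) (a : Fin N → Outc) :
    ringAmp N u a = (Real.sqrt 2)⁻¹ ^ N *
      ∑ L : Fin N → Fin 2, ∏ k, transferMatrix u (a k) (L k) (L (finNext k)) := by
  have sum_right (k : Fin N) (l l' : Fin 2) :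
      ∑ r, basisVec u (a k) l r * psiPlus r l' =
        (Real.sqrt 2)⁻¹ * transferMatrix u (a k) l l' := by
    fin_cases l' <;> simp [transferMatrix, psiPlus, mul_comm]
  rw [ringAmp, Finset.mul_sum]
  refine Finset.sum_congr rfl fun L _ => ?_
  have swap := Finset.prod_univ_sum (fun _ : Fin N => (Finset.univ : Finset (Fin 2)))
    fun k r => basisVec u (a k) (L k) r * psiPlus r (L (finNext k))
  simpa only [sum_right, Fintype.piFinset_univ, Finset.prod_mul_distrib, Finset.prod_const,
    Finset.card_univ, Fintype.card_fin] using swap.symm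

theorem inv_sqrt_two_pow_sq (N : ℕ) : ((Real.sqrt 2)⁻¹ ^ N) ^ 2 = (1 / 2 : ℝ) ^ N := by
  rw [← pow_mul, mul_comm, pow_mul, inv_pow, Real.sq_sqrt zero_le_two, one_div]

theorem sum_prod_transferMatrix_mul {N : ℕ} (h : u ^ 2 ≤ 1) (L L' : Fin N → Fin 2) :
    ∑ a : Fin N → Outc, (∏ k, transferMatrix u (a k) (L k) (L (finNext k))) *
      ∏ k, transferMatrix u (a k) (L' k) (L' (finNext k)) = if L = L' then 1 else 0 := by
  have swap := Finset.prod_univ_sum (fun _ : Fin N => (Finset.univ : Finset Outc)) fun k a =>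
    transferMatrix u a (L k) (L (finNext k)) * transferMatrix u a (L' k) (L' (finNext k))
  simp only [sum_transferMatrix_mul h, Fintype.piFinset_univ, Finset.prod_mul_distrib] at swap
  rw [← swap, Fintype.prod_ite_zero]
  simp only [Finset.prod_const_one]
  exact if_congr ⟨fun h => funext fun k => (h k).1, fun h => by simp [h]⟩ rfl rfl

-- The amplitudes are orthonormal in the source bits, so the outcome law is a uniform mixture over
-- them as far as token counts are concerned.
theorem sum_excess_mul_ringP (N : ℕ) (h : u ^ 2 ≤ 1) (g : (Fin N → ℝ) → ℝ) :
    ∑ a : Fin N → Outc, g (fun k => (a k).excess) * ringP N u a =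
      (1 / 2) ^ N * ∑ L : Fin N → Fin 2, g fun k => (L k : ℝ) - L (finNext k) := by
  set b : (Fin N → Outc) → (Fin N → Fin 2) → ℝ := fun a L =>
    ∏ k, transferMatrix u (a k) (L k) (L (finNext k))
  have count (a : Fin N → Outc) (L : Fin N → Fin 2) :
      g (fun k => (a k).excess) * b a L = g (fun k => (L k : ℝ) - L (finNext k)) * b a L := by
    by_cases hb : b a L = 0
    · rw [hb, mul_zero, mul_zero]
    · have hcount : (fun k => (a k).excess) = fun k => (L k : ℝ) - L (finNext k) := funext fun k =>
        excess_eq_of_transferMatrix_ne_zero (Finset.prod_ne_zero_iff.1 hb k (Finset.mem_univ k))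
      rw [hcount]
  calc ∑ a : Fin N → Outc, g (fun k => (a k).excess) * ringP N u a
      = ∑ a, (1 / 2) ^ N * ∑ L, ∑ L', g (fun k => (L k : ℝ) - L (finNext k)) *
          (b a L * b a L') := by
        refine Finset.sum_congr rfl fun a _ => ?_
        rw [ringP, ringAmp_eq_sum_prod_transferMatrix, mul_pow, inv_sqrt_two_pow_sq, sq,
          Finset.sum_mul_sum, mul_left_comm, Finset.mul_sum]
        simp only [Finset.mul_sum, ← mul_assoc]
        simp only [mul_assoc ((1 / 2 : ℝ) ^ N), b] at count ⊢
        simp only [count]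
    _ = (1 / 2) ^ N * ∑ L, ∑ L', g (fun k => (L k : ℝ) - L (finNext k)) * ∑ a, b a L * b a L' := by
        rw [← Finset.mul_sum, Finset.sum_comm]
        refine congrArg _ (Finset.sum_congr rfl fun L _ => ?_)
        rw [Finset.sum_comm]
        simp only [Finset.mul_sum]
    _ = (1 / 2) ^ N * ∑ L : Fin N → Fin 2, g fun k => (L k : ℝ) - L (finNext k) := by
        simp only [b, sum_prod_transferMatrix_mul h, mul_ite, mul_one, mul_zero, Finset.sum_ite_eq,
          Finset.mem_univ, if_true]

theorem prod_ofFn_transferMatrix_one {n : ℕ} (i : Fin n → Fin 2) :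
    (List.ofFn fun j => transferMatrix u (.one (i j))).prod =
      Matrix.diagonal ![∏ j, uco u (i j), ∏ j, vco u (i j)] := by
  simp only [transferMatrix_one]
  have := map_list_prod (Matrix.diagonalRingHom (Fin 2) ℝ)
    (List.ofFn fun j => ![uco u (i j), vco u (i j)])
  rw [List.map_ofFn, List.prod_ofFn] at this
  refine this.symm.trans (congrArg Matrix.diagonal ?_)
  ext l
  rw [Finset.prod_apply]
  fin_cases l <;> rfl

/-- The outcome tuple of the ring in which the first three parties output `a`, `b`, `c` and the
remaining ones output `m`. -/
def ringOutcome {α : Type*} {n : ℕ} (a b c : α) (m : Fin n → α) : Fin (n + 3) → α :=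
  Fin.cons a (Fin.cons b (Fin.cons c m : Fin (n + 1) → α) : Fin (n + 2) → α)

theorem sum_ringOutcome {α β : Type*} [Fintype α] [AddCommMonoid β] {n : ℕ}
    (f : (Fin (n + 3) → α) → β) :
    ∑ a, f a = ∑ a, ∑ b, ∑ c, ∑ m : Fin n → α, f (ringOutcome a b c m) := by
  simp only [sum_fun_fin_succ, ringOutcome]

theorem ringP_ringOutcome_one {n : ℕ} (a b c : Outc) (i : Fin n → Fin 2) :
    ringP (n + 3) u (ringOutcome a b c fun j => .one (i j)) =
      (1 / 2) ^ (n + 3) * (transferMatrix u a * (transferMatrix u b * (transferMatrix u c *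
        Matrix.diagonal ![∏ j, uco u (i j), ∏ j, vco u (i j)]))).trace ^ 2 := by
  rw [ringP, ringAmp_eq_sum_prod_transferMatrix, sum_prod_finNext_eq_trace, mul_pow,
    inv_sqrt_two_pow_sq]
  simp only [List.ofFn_succ (n := n + 2), List.ofFn_succ (n := n + 1), List.ofFn_succ (n := n),
    ringOutcome, List.prod_cons, Fin.cons_zero, Fin.cons_succ, prod_ofFn_transferMatrix_one]

theorem sum_sub_finNext_succ_succ_succ {n : ℕ} (x : Fin (n + 4) → ℝ) :
    ∑ j : Fin (n + 1), (x j.succ.succ.succ - x (finNext j.succ.succ.succ)) = x 3 - x 0 := by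
  have htotal := sum_sub_finNext_eq_zero x
  have h₀ : finNext (0 : Fin (n + 4)) = 1 := finNext_castSucc 0
  have h₁ : finNext (1 : Fin (n + 4)) = 2 := finNext_castSucc 1
  have h₂ : finNext (2 : Fin (n + 4)) = 3 := finNext_castSucc 2
  simp only [Fin.sum_univ_succ (n := n + 3), Fin.sum_univ_succ (n := n + 2),
    Fin.sum_univ_succ (n := n + 1), Fin.succ_zero_eq_one, Fin.succ_one_eq_two, h₀, h₁, h₂] at htotal
  linarith

theorem sum_merged_excess_mul_ringP {n : ℕ} (h : u ^ 2 ≤ 1) (g : ℝ → ℝ → ℝ → ℝ → ℝ) :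
    ∑ a : Outc, ∑ b : Outc, ∑ c : Outc, ∑ m : Fin (n + 1) → Outc,
        g a.excess b.excess c.excess (∑ j, (m j).excess) * ringP (n + 4) u (ringOutcome a b c m) =
      (∑ i : Fin 2, ∑ j : Fin 2, ∑ k : Fin 2, ∑ l : Fin 2, g (i - j) (j - k) (k - l) (l - i)) /
        16 := by
  have hring := sum_excess_mul_ringP (n + 4) h fun x =>
    g (x 0) (x 1) (x 2) (∑ j : Fin (n + 1), x j.succ.succ.succ)
  have h₀ : finNext (0 : Fin (n + 4)) = 1 := finNext_castSucc 0
  have h₁ : finNext (1 : Fin (n + 4)) = 2 := finNext_castSucc 1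
  have h₂ : finNext (2 : Fin (n + 4)) = 3 := finNext_castSucc 2
  have telescope (L : Fin (n + 4) → Fin 2) := sum_sub_finNext_succ_succ_succ fun k => (L k : ℝ)
  simp only [h₀, h₁, h₂, telescope, sum_ringOutcome] at hring
  calc _ = (1 / 2 : ℝ) ^ (n + 4) * ∑ i : Fin 2, ∑ j : Fin 2, ∑ k : Fin 2,
        ∑ L : Fin (n + 1) → Fin 2, g (i - j) (j - k) (k - L 0) (L 0 - i) := hring
    _ = (1 / 2 : ℝ) ^ (n + 4) * (2 ^ n * ∑ i : Fin 2, ∑ j : Fin 2, ∑ k : Fin 2, ∑ l : Fin 2,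
        g (i - j) (j - k) (k - l) (l - i)) := by
      simp only [sum_fun_fin_succ, Fin.cons_zero, Finset.sum_const, Finset.card_univ,
        Fintype.card_pi, Fintype.card_fin, Finset.prod_const, nsmul_eq_mul, ← Finset.mul_sum]
      push_cast
      rfl
    _ = _ := by
      have hpow : (1 / 2 : ℝ) ^ (n + 4) * 2 ^ n = 1 / 16 := by
        rw [pow_add, mul_right_comm, ← mul_pow]
        norm_num
      rw [← mul_assoc, hpow, one_div_mul_eq_div]

theorem exists_prod_eq_pow_mul_pow {R : Type*} [CommMonoid R] {n s t : ℕ} (h : n = s + t) :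
    ∃ i : Fin n → Fin 2, ∀ c : Fin 2 → R, ∏ j, c (i j) = c 0 ^ s * c 1 ^ t := by
  subst h
  exact ⟨Fin.addCases (fun _ => 0) fun _ => 1, fun c => by simp [Fin.prod_univ_add]⟩

theorem sq_sub_lt_three_mul_sq_sub_two {u v x : ℝ} (hu0 : 0 < u) (hu : 1 / 2 < u ^ 4)
    (hu1 : u < 1) (huv : u ^ 2 + v ^ 2 = 1) (hx : u * v ^ 2 ≤ x) (hx' : x ≤ u ^ 3) :
    (u ^ 3 - x) ^ 2 < 3 * u ^ 2 - 2 := by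
  have hu2 : 0 < 1 - u ^ 2 := by nlinarith
  calc (u ^ 3 - x) ^ 2 ≤ (u ^ 3 - u * v ^ 2) ^ 2 :=
        pow_le_pow_left₀ (sub_nonneg.2 hx') (sub_le_sub_left hx _) 2
    _ = 3 * u ^ 2 - 2 - 2 * (1 - u ^ 2) * (2 * u ^ 4 - 1) := by
        rw [eq_sub_of_add_eq' huv]; ring
    _ < 3 * u ^ 2 - 2 := sub_lt_self _ (mul_pos (mul_pos two_pos hu2) (by linarith))

namespace LocalModel

variable {X Y Z : Type*} [MeasurableSpace X] [MeasurableSpace Y] [MeasurableSpace Z] {n : ℕ}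

/-- The local model reproduces the outcome distribution of the ring with `n + 4` parties, the last
`n + 1` of which are merged. -/
def ReproducesRing (u : ℝ) (M : LocalModel X Y Z (Fin (n + 1) → Outc)) : Prop :=
  ∀ a b c m, M.prob (a, b, c, m) = ringP (n + 4) u (ringOutcome a b c m)

namespace ReproducesRing

variable {M : LocalModel X Y Z (Fin (n + 1) → Outc)}

theorem isTokenCounting (hM : M.ReproducesRing u) (h : u ^ 2 ≤ 1) :
    M.IsTokenCounting fun m => ∑ j, (m j).excess := by
  intro g
  simp only [Fintype.sum_prod_type, hM _ _ _ _]
  exact sum_merged_excess_mul_ringP h g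

theorem prob_one (hM : M.ReproducesRing u) (a b c : Outc) (i : Fin (n + 1) → Fin 2) :
    M.prob (a, b, c, fun j => .one (i j)) =
      (1 / 2) ^ (n + 4) * (transferMatrix u a * (transferMatrix u b * (transferMatrix u c *
        Matrix.diagonal ![∏ j, uco u (i j), ∏ j, vco u (i j)]))).trace ^ 2 :=
  (hM a b c _).trans (ringP_ringOutcome_one a b c i)

theorem prob_one_two_zero_ones (hM : M.ReproducesRing u) (k : Fin 2) (i : Fin (n + 1) → Fin 2) :
    M.prob (.one k, .two, .zero, fun j => .one (i j)) =
      (1 / 2) ^ (n + 4) * (vco u k * ∏ j, vco u (i j)) ^ 2 := by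
  simp [hM.prob_one, transferMatrix_zero, transferMatrix_one, transferMatrix_two,
    Matrix.trace_fin_two, Matrix.diagonal_vec2]

theorem prob_two_zero_one_ones (hM : M.ReproducesRing u) (k : Fin 2) (i : Fin (n + 1) → Fin 2) :
    M.prob (.two, .zero, .one k, fun j => .one (i j)) =
      (1 / 2) ^ (n + 4) * (vco u k * ∏ j, vco u (i j)) ^ 2 := by
  simp [hM.prob_one, transferMatrix_zero, transferMatrix_one, transferMatrix_two,
    Matrix.trace_fin_two, Matrix.diagonal_vec2]

theorem prob_zero_one_two_ones (hM : M.ReproducesRing u) (k : Fin 2) (i : Fin (n + 1) → Fin 2) :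
    M.prob (.zero, .one k, .two, fun j => .one (i j)) =
      (1 / 2) ^ (n + 4) * (vco u k * ∏ j, uco u (i j)) ^ 2 := by
  simp [hM.prob_one, transferMatrix_zero, transferMatrix_one, transferMatrix_two,
    Matrix.trace_fin_two, Matrix.diagonal_vec2]

theorem prob_one_zero_two_ones (hM : M.ReproducesRing u) (k : Fin 2) (i : Fin (n + 1) → Fin 2) :
    M.prob (.one k, .zero, .two, fun j => .one (i j)) =
      (1 / 2) ^ (n + 4) * (uco u k * ∏ j, uco u (i j)) ^ 2 := by
  simp [hM.prob_one, transferMatrix_zero, transferMatrix_one, transferMatrix_two,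
    Matrix.trace_fin_two, Matrix.diagonal_vec2]

theorem prob_zero_two_one_ones (hM : M.ReproducesRing u) (k : Fin 2) (i : Fin (n + 1) → Fin 2) :
    M.prob (.zero, .two, .one k, fun j => .one (i j)) =
      (1 / 2) ^ (n + 4) * (uco u k * ∏ j, uco u (i j)) ^ 2 := by
  simp [hM.prob_one, transferMatrix_zero, transferMatrix_one, transferMatrix_two,
    Matrix.trace_fin_two, Matrix.diagonal_vec2]

theorem prob_two_one_zero_ones (hM : M.ReproducesRing u) (k : Fin 2) (i : Fin (n + 1) → Fin 2) :
    M.prob (.two, .one k, .zero, fun j => .one (i j)) =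
      (1 / 2) ^ (n + 4) * (uco u k * ∏ j, vco u (i j)) ^ 2 := by
  simp [hM.prob_one, transferMatrix_zero, transferMatrix_one, transferMatrix_two,
    Matrix.trace_fin_two, Matrix.diagonal_vec2]

theorem prob_one_one_one_ones (hM : M.ReproducesRing u) (k : Fin 2) (i : Fin (n + 1) → Fin 2) :
    M.prob (.one k, .one k, .one k, fun j => .one (i j)) = (1 / 2) ^ (n + 4) *
      (uco u k ^ 3 * ∏ j, uco u (i j) + vco u k ^ 3 * ∏ j, vco u (i j)) ^ 2 := by
  simp [hM.prob_one, transferMatrix_one, Matrix.trace_fin_two, Matrix.diagonal_vec2, pow_succ,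
    mul_assoc]

theorem prod_vco_sq_mul_le (hM : M.ReproducesRing u) (h : u ^ 2 ≤ 1) {i : Fin (n + 1) → Fin 2}
    (hi : ∏ j, uco u (i j) ≠ 0) (k : Fin 2) :
    (∏ j, vco u (i j)) ^ 2 * (3 * vco u k ^ 2 - 2) ≤
      (uco u k ^ 3 * ∏ j, uco u (i j) + vco u k ^ 3 * ∏ j, vco u (i j)) ^ 2 := by
  have hv := vco_sq_add_vco_sq h
  obtain ⟨f, g, h', hR⟩ := (hM.isTokenCounting h).exists_isRoutedBy (m := fun j => .one (i j))
    (by simp [Outc.excess])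
  have hbound := hR.mul_three_mul_sub_two_le_prob (k := k)
    (A := (1 / 2) ^ (n + 4) * (∏ j, uco u (i j)) ^ 2)
    (B := (1 / 2) ^ (n + 4) * (∏ j, vco u (i j)) ^ 2) (r := vco u k ^ 2) (by positivity)
    (by simp only [hM.prob_zero_one_two_ones, Fin.sum_univ_two]
        linear_combination (1 / 2) ^ (n + 4) * (∏ j, uco u (i j)) ^ 2 * hv)
    (by simp only [hM.prob_one_two_zero_ones, Fin.sum_univ_two]
        linear_combination (1 / 2) ^ (n + 4) * (∏ j, vco u (i j)) ^ 2 * hv)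
    (by rw [hM.prob_one_two_zero_ones]; ring)
    (by rw [hM.prob_zero_one_two_ones]; ring)
    (by rw [hM.prob_two_zero_one_ones]; ring)
  rw [hM.prob_one_one_one_ones, mul_assoc] at hbound
  exact le_of_mul_le_mul_left hbound (by positivity)

theorem prod_uco_sq_mul_le (hM : M.ReproducesRing u) (h : u ^ 2 ≤ 1) {i : Fin (n + 1) → Fin 2}
    (hi : ∏ j, vco u (i j) ≠ 0) (k : Fin 2) :
    (∏ j, uco u (i j)) ^ 2 * (3 * uco u k ^ 2 - 2) ≤
      (uco u k ^ 3 * ∏ j, uco u (i j) + vco u k ^ 3 * ∏ j, vco u (i j)) ^ 2 := by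
  have hu := uco_sq_add_uco_sq h
  obtain ⟨f, g, h', hR⟩ := (hM.isTokenCounting h).reflect.exists_isRoutedBy
    (m := fun j => .one (i j)) (by simp [Outc.excess])
  have h₁ (k : Fin 2) : M.reflect.prob (.one k, .two, .zero, fun j => .one (i j)) = _ :=
    hM.prob_one_zero_two_ones k i
  have h₂ (k : Fin 2) : M.reflect.prob (.zero, .one k, .two, fun j => .one (i j)) = _ :=
    hM.prob_two_one_zero_ones k i
  have h₃ : M.reflect.prob (.two, .zero, .one k, fun j => .one (i j)) = _ :=
    hM.prob_zero_two_one_ones k i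
  have h₁₁₁ : M.reflect.prob (.one k, .one k, .one k, fun j => .one (i j)) = _ :=
    hM.prob_one_one_one_ones k i
  have hbound := hR.mul_three_mul_sub_two_le_prob (k := k)
    (A := (1 / 2) ^ (n + 4) * (∏ j, vco u (i j)) ^ 2)
    (B := (1 / 2) ^ (n + 4) * (∏ j, uco u (i j)) ^ 2) (r := uco u k ^ 2) (by positivity)
    (by simp only [h₂, Fin.sum_univ_two]
        linear_combination (1 / 2) ^ (n + 4) * (∏ j, vco u (i j)) ^ 2 * hu)
    (by simp only [h₁, Fin.sum_univ_two]
        linear_combination (1 / 2) ^ (n + 4) * (∏ j, uco u (i j)) ^ 2 * hu)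
    (by rw [h₁]; ring)
    (by rw [h₂]; ring)
    (by rw [h₃]; ring)
  rw [h₁₁₁, mul_assoc] at hbound
  exact le_of_mul_le_mul_left hbound (by positivity)

theorem three_mul_sq_sub_two_le_of_eq_four_mul_add (hM : M.ReproducesRing u) (hu0 : 0 < u)
    (hu1 : u < 1) {k q : ℕ} (hn : n + 1 = 4 * k + q) (hq : q ≤ 3) :
    3 * u ^ 2 - 2 ≤ (u ^ 3 - u ^ q * Real.sqrt (1 - u ^ 2) ^ (3 - q)) ^ 2 := by
  have hu2 : u ^ 2 < 1 := by nlinarith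
  have hv : 0 < Real.sqrt (1 - u ^ 2) := Real.sqrt_pos.2 (sub_pos.2 hu2)
  obtain ⟨i, hi⟩ := exists_prod_eq_pow_mul_pow (R := ℝ) (s := 2 * k + q) (t := 2 * k)
    (hn.trans (by ring))
  have hbound := hM.prod_vco_sq_mul_le hu2.le (i := i) (by simp [hi, uco, hu0.ne', hv.ne']) 1
  simp only [hi] at hbound
  simp only [uco, vco, Matrix.cons_val_zero, Matrix.cons_val_one] at hbound
  set v := Real.sqrt (1 - u ^ 2)
  have hsplit : v ^ 3 = v ^ q * v ^ (3 - q) := by rw [← pow_add, Nat.add_sub_cancel' hq]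
  rw [(even_two_mul k).neg_pow, hsplit] at hbound
  refine le_of_mul_le_mul_left (a := (v ^ (2 * k + q) * u ^ (2 * k)) ^ 2) ?_ (by positivity)
  exact (le_of_eq (by ring)).trans (hbound.trans_eq (by ring))

theorem three_mul_sq_sub_two_le_of_eq_four_mul (hM : M.ReproducesRing u) (hu0 : 0 < u)
    (hu1 : u < 1) {k : ℕ} (hn : n + 1 = 4 * (k + 1)) :
    3 * u ^ 2 - 2 ≤ (u ^ 3 - u ^ 2 * Real.sqrt (1 - u ^ 2)) ^ 2 := by
  have hu2 : u ^ 2 < 1 := by nlinarith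
  have hv : 0 < Real.sqrt (1 - u ^ 2) := Real.sqrt_pos.2 (sub_pos.2 hu2)
  obtain ⟨i, hi⟩ := exists_prod_eq_pow_mul_pow (R := ℝ) (s := 2 * k + 1) (t := 2 * k + 3)
    (hn.trans (by ring))
  have hbound := hM.prod_uco_sq_mul_le hu2.le (i := i) (by simp [hi, vco, hu0.ne', hv.ne']) 0
  simp only [hi] at hbound
  simp only [uco, vco, Matrix.cons_val_zero, Matrix.cons_val_one] at hbound
  set v := Real.sqrt (1 - u ^ 2)
  rw [Odd.neg_pow ⟨k + 1, by ring⟩] at hbound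
  refine le_of_mul_le_mul_left (a := (u ^ (2 * k + 1) * v ^ (2 * k + 3)) ^ 2) ?_ (by positivity)
  exact (le_of_eq (by ring)).trans (hbound.trans_eq (by ring))

end ReproducesRing

theorem not_reproducesRing (M : LocalModel X Y Z (Fin (n + 1) → Outc)) (hu0 : 0 < u)
    (hu : 1 / 2 < u ^ 4) (hu1 : u < 1) : ¬ M.ReproducesRing u := by
  intro hM
  set v := Real.sqrt (1 - u ^ 2)
  have hv0 : 0 ≤ v := Real.sqrt_nonneg _
  have huv : u ^ 2 + v ^ 2 = 1 := by rw [Real.sq_sqrt (by nlinarith)]; ring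
  have hvu : v ≤ u := abs_le_of_sq_le_sq' (by nlinarith) hu0.le |>.2
  have hle : u * v ^ 2 ≤ u ^ 2 * v := by
    nlinarith [mul_nonneg (mul_nonneg hu0.le hv0) (sub_nonneg.2 hvu)]
  have hle' : u ^ 2 * v ≤ u ^ 3 := by nlinarith [sq_nonneg u]
  suffices ∃ x, u * v ^ 2 ≤ x ∧ x ≤ u ^ 3 ∧ 3 * u ^ 2 - 2 ≤ (u ^ 3 - x) ^ 2 by
    obtain ⟨x, hx, hx', hbound⟩ := this
    exact hbound.not_gt (sq_sub_lt_three_mul_sq_sub_two hu0 hu hu1 huv hx hx')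
  have hcard := Nat.div_add_mod (n + 1) 4
  have hmod := Nat.mod_lt (n + 1) (zero_lt_four)
  interval_cases hq : (n + 1) % 4
  · obtain ⟨k, hk⟩ := Nat.exists_eq_succ_of_ne_zero (n := (n + 1) / 4) (by omega)
    have := hM.three_mul_sq_sub_two_le_of_eq_four_mul hu0 hu1 (k := k) (by omega)
    exact ⟨u ^ 2 * v, hle, hle', this⟩
  · have := hM.three_mul_sq_sub_two_le_of_eq_four_mul_add hu0 hu1 hcard.symm (by norm_num)
    exact ⟨u ^ 1 * v ^ 2, by simp, by linarith, this⟩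
  · have := hM.three_mul_sq_sub_two_le_of_eq_four_mul_add hu0 hu1 hcard.symm (by norm_num)
    exact ⟨u ^ 2 * v ^ 1, by linarith, by linarith, this⟩
  · have := hM.three_mul_sq_sub_two_le_of_eq_four_mul_add hu0 hu1 hcard.symm (by norm_num)
    exact ⟨u ^ 3 * v ^ 0, by linarith, by linarith, this⟩

end LocalModel

end Ring

theorem stmt_15_general (n : ℕ) (u : ℝ) (hu0 : 0 < u) (hu : 1 / 2 < u ^ 4) (hu1 : u < 1) :
    ¬ ∃ (Λ₁ : Type*) (Λ₂ : Type*) (Λ₃ : Type*)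
        (m₁ : MeasurableSpace Λ₁) (m₂ : MeasurableSpace Λ₂) (m₃ : MeasurableSpace Λ₃)
        (μ₁ : @Measure Λ₁ m₁) (μ₂ : @Measure Λ₂ m₂) (μ₃ : @Measure Λ₃ m₃)
        (p₁ : Outc → Λ₁ → Λ₃ → ℝ) (p₂ : Outc → Λ₁ → Λ₂ → ℝ)
        (p₃ : Outc → Λ₂ → Λ₃ → ℝ) (pM : (Fin (n + 1) → Outc) → Λ₃ → ℝ),
      IsProbabilityMeasure μ₁ ∧ IsProbabilityMeasure μ₂ ∧ IsProbabilityMeasure μ₃ ∧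
      (∀ a, @Measurable _ _ (m₁.prod m₃) _ fun q : Λ₁ × Λ₃ => p₁ a q.1 q.2) ∧
      (∀ a, @Measurable _ _ (m₁.prod m₂) _ fun q : Λ₁ × Λ₂ => p₂ a q.1 q.2) ∧
      (∀ a, @Measurable _ _ (m₂.prod m₃) _ fun q : Λ₂ × Λ₃ => p₃ a q.1 q.2) ∧
      (∀ f, @Measurable _ _ m₃ _ (pM f)) ∧
      (∀ x y, (∀ a, 0 ≤ p₁ a x y) ∧ ∑ a, p₁ a x y = 1) ∧
      (∀ x y, (∀ a, 0 ≤ p₂ a x y) ∧ ∑ a, p₂ a x y = 1) ∧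
      (∀ x y, (∀ a, 0 ≤ p₃ a x y) ∧ ∑ a, p₃ a x y = 1) ∧
      (∀ x, (∀ f, 0 ≤ pM f x) ∧ ∑ f : Fin (n + 1) → Outc, pM f x = 1) ∧
      (∀ a : Fin (n + 4) → Outc,
        ringP (n + 4) u a =
          ∫ x₁, ∫ x₂, ∫ x₃,
            p₁ (a 0) x₁ x₃ * p₂ (a 1) x₁ x₂
              * p₃ (a 2) x₂ x₃
              * pM (fun k => a k.succ.succ.succ) x₃
            ∂μ₃ ∂μ₂ ∂μ₁) := by
  rintro ⟨Λ₁, Λ₂, Λ₃, m₁, m₂, m₃, μ₁, μ₂, μ₃, p₁, p₂, p₃, pM, hμ₁, hμ₂, hμ₃, hm₁, hm₂, hm₃, hmM,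
    hp₁, hp₂, hp₃, hpM, hring⟩
  let M : LocalModel Λ₁ Λ₂ Λ₃ (Fin (n + 1) → Outc) :=
    { μ := μ₁, ν := μ₂, ρ := μ₃
      isProbabilityMeasure_μ := hμ₁, isProbabilityMeasure_ν := hμ₂, isProbabilityMeasure_ρ := hμ₃
      p₁ := fun a q => p₁ a q.1 q.2
      p₂ := fun a q => p₂ a q.1 q.2
      p₃ := fun a q => p₃ a q.1 q.2
      pM := pM
      isResponse_p₁ := ⟨hm₁, fun a q => (hp₁ q.1 q.2).1 a, fun q => (hp₁ q.1 q.2).2⟩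
      isResponse_p₂ := ⟨hm₂, fun a q => (hp₂ q.1 q.2).1 a, fun q => (hp₂ q.1 q.2).2⟩
      isResponse_p₃ := ⟨hm₃, fun a q => (hp₃ q.1 q.2).1 a, fun q => (hp₃ q.1 q.2).2⟩
      isResponse_pM := ⟨hmM, fun f z => (hpM z).1 f, fun z => (hpM z).2⟩ }
  refine M.not_reproducesRing hu0 hu hu1 fun a b c m => ?_
  exact (BddMeas.integral_prod_prod _ _ _ (M.bddMeas_condProb (a, b, c, m))).trans
    (hring (ringOutcome a b c m)).symm

/-- for every `N ≥ 4` and `0.841 < u < 1`, the `N`-party ring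
distribution is nonlocal on the network where parties `A₄,…,A_N` are merged into a
single party `M` sharing a common source `λ₃` with `A₁` and `A₃` (`λ₁` connects
`A₁,A₂` and `λ₂` connects `A₂,A₃`).  Parties are `0`-indexed: `A_j = a (j-1)`. -/
theorem stmt_15 (N : ℕ) (hN : 4 ≤ N) (u : ℝ) (hu : (0.841 : ℝ) < u) (hu1 : u < 1) :
    ¬ ∃ (Λ₁ Λ₂ Λ₃ : Type)
        (m₁ : MeasurableSpace Λ₁) (m₂ : MeasurableSpace Λ₂) (m₃ : MeasurableSpace Λ₃)
        (μ₁ : @Measure Λ₁ m₁) (μ₂ : @Measure Λ₂ m₂) (μ₃ : @Measure Λ₃ m₃)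
        (p₁ : Outc → Λ₁ → Λ₃ → ℝ) (p₂ : Outc → Λ₁ → Λ₂ → ℝ)
        (p₃ : Outc → Λ₂ → Λ₃ → ℝ) (pM : (Fin (N - 3) → Outc) → Λ₃ → ℝ),
      IsProbabilityMeasure μ₁ ∧ IsProbabilityMeasure μ₂ ∧ IsProbabilityMeasure μ₃ ∧
      (∀ a, @Measurable _ _ (m₁.prod m₃) _ fun q : Λ₁ × Λ₃ => p₁ a q.1 q.2) ∧
      (∀ a, @Measurable _ _ (m₁.prod m₂) _ fun q : Λ₁ × Λ₂ => p₂ a q.1 q.2) ∧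
      (∀ a, @Measurable _ _ (m₂.prod m₃) _ fun q : Λ₂ × Λ₃ => p₃ a q.1 q.2) ∧
      (∀ f, @Measurable _ _ m₃ _ (pM f)) ∧
      (∀ x y, (∀ a, 0 ≤ p₁ a x y) ∧ ∑ a, p₁ a x y = 1) ∧
      (∀ x y, (∀ a, 0 ≤ p₂ a x y) ∧ ∑ a, p₂ a x y = 1) ∧
      (∀ x y, (∀ a, 0 ≤ p₃ a x y) ∧ ∑ a, p₃ a x y = 1) ∧
      (∀ x, (∀ f, 0 ≤ pM f x) ∧ ∑ f : Fin (N - 3) → Outc, pM f x = 1) ∧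
      (∀ a : Fin N → Outc,
        ringP N u a =
          ∫ x₁, ∫ x₂, ∫ x₃,
            p₁ (a ⟨0, by omega⟩) x₁ x₃ * p₂ (a ⟨1, by omega⟩) x₁ x₂
              * p₃ (a ⟨2, by omega⟩) x₂ x₃
              * pM (fun k => a ⟨(k : ℕ) + 3, by have := k.isLt; omega⟩) x₃
            ∂μ₃ ∂μ₂ ∂μ₁) := by
  obtain ⟨n, rfl⟩ := Nat.exists_eq_add_of_le' hN
  exact stmt_15_general n u (by linarith)
    (by nlinarith [pow_lt_pow_left₀ hu (by norm_num) two_ne_zero]) hu1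
end

section
/- For every N ≥ 3 that is either odd or divisible by 4, there exists ε > 0 (depending on N) such that for all real u with 1−ε < u < 1, the N-party ring distribution P_Q(a₁,…,a_N) is nonlocal on the triangle network obtained by merging parties A₃,…,A_N into a single party M: there do not exist types Λ₁, Λ₂, Λ₃ with probability distributions μ₁, μ₂, μ₃ and response kernels p₁(a₁|λ₃,λ₁), p₂(a₂|λ₁,λ₂), p_M(a₃,…,a_N|λ₂,λ₃) (each a_j ∈ {0, 1₀, 1₁, 2}, the merged party outputting (a₃,…,a_N) jointly) such that P_Q(a₁,…,a_N) equals the expectation over independently sampled λ₁, λ₂, λ₃ of the product p₁(a₁|λ₃,λ₁)·p₂(a₂|λ₁,λ₂)·p_M(a₃,…,a_N|λ₂,λ₃), for all outcomes. -/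
open MeasureTheory

/-!
The outcomes of a party count the qubits in state `1` it receives. Each source emits exactly one
such token, so the excesses of these numbers over one add up to zero. In a local model the parties
answer independently, whence each excess is a function of the hidden variables of that party, and,
the three of them adding up to zero, they are differences `t₁ - t₃`, `t₂ - t₁`, `t₃ - t₂` of
functions of single hidden variables. Their joint law forces each `tᵢ`, up to a common constant, to
be a fair coin: tokens travel in the local model as well. Hence the distribution has a part `q` in
which all tokens travel in the same direction, and as no party sees whether the opposite source
turned its token around, the one-party marginals of `q` are known.

The `defect` of `q` measures the correlation of the merged party's outcome with the outcomes `1₁` of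
the two other ones, and it vanishes on average. Let `v = √(1 - u²)`. The quantum amplitudes bound it
below by `-O(v ^ (N + 1))`; but when the merged party has an odd number `s` of outcomes `1₁`, with
`N / 2 - 2 < s < N / 2`, the two directions of travel interfere destructively and leave a defect of
at least a multiple of `(u v) ^ N`, up to the same error. This is absurd for small `v`, and such an
`s` exists unless `N` is `2` modulo `4`.
-/

open ProbabilityTheory

section Rigidity

variable {Ω : Type*} {mΩ : MeasurableSpace Ω} {μ : Measure Ω}

lemma integrable_pow_of_memLp [IsFiniteMeasure μ] {f : Ω → ℝ} {p : ENNReal} (hf : MemLp f p μ)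
    {n : ℕ} (hn : n ≤ p) : Integrable (fun ω => f ω ^ n) μ :=
  (integrable_norm_iff (hf.1.pow n)).1 <| by
    simpa only [Pi.pow_apply, norm_pow] using (hf.mono_exponent hn).integrable_norm_pow'

variable {f g : Ω → ℝ}

lemma variance_sub_of_indepFun_s16 (hf : MemLp f 2 μ) (hg : MemLp g 2 μ) (hfg : IndepFun f g μ) :
    Var[f - g; μ] = Var[f; μ] + Var[g; μ] := by
  rw [sub_eq_add_neg, hfg.neg_right.variance_add hf hg.neg, variance_neg]

lemma variance_eq_of_variance_sub_eq {f₁ f₂ f₃ : Ω → ℝ} {v : ℝ} (h₁ : MemLp f₁ 2 μ)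
    (h₂ : MemLp f₂ 2 μ) (h₃ : MemLp f₃ 2 μ) (h₁₂ : IndepFun f₁ f₂ μ) (h₁₃ : IndepFun f₁ f₃ μ)
    (h₂₃ : IndepFun f₂ f₃ μ) (hv₁₃ : Var[f₁ - f₃; μ] = 2 * v) (hv₂₁ : Var[f₂ - f₁; μ] = 2 * v)
    (hv₂₃ : Var[f₂ - f₃; μ] = 2 * v) : Var[f₁; μ] = v ∧ Var[f₂; μ] = v ∧ Var[f₃; μ] = v := by
  rw [variance_sub_of_indepFun_s16 h₁ h₃ h₁₃] at hv₁₃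
  rw [variance_sub_of_indepFun_s16 h₂ h₁ h₁₂.symm] at hv₂₁
  rw [variance_sub_of_indepFun_s16 h₂ h₃ h₂₃] at hv₂₃
  refine ⟨?_, ?_, ?_⟩ <;> linarith

lemma indepFun_comp_of_measurePreserving {Ω' β γ : Type*} [MeasurableSpace Ω'] [MeasurableSpace β]
    [MeasurableSpace γ] {ν : Measure Ω'} {φ : Ω → Ω'} (hφ : MeasurePreserving φ μ ν)
    {X : Ω' → β} {Y : Ω' → γ} (hX : Measurable X) (hY : Measurable Y) (h : IndepFun X Y ν) :
    IndepFun (X ∘ φ) (Y ∘ φ) μ := by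
  rw [indepFun_iff_measure_inter_preimage_eq_mul] at h ⊢
  intro s t hs ht
  simp only [Set.preimage_comp, ← Set.preimage_inter]
  rw [hφ.measure_preimage ((hX hs).inter (hY ht)).nullMeasurableSet,
    hφ.measure_preimage (hX hs).nullMeasurableSet, hφ.measure_preimage (hY ht).nullMeasurableSet,
    h s t hs ht]

variable [IsProbabilityMeasure μ]

-- Multiplying `(f + g) ^ 3 = f + g` by `f` and integrating, independence leaves `∫ f ^ 4 = 1 / 16`.
lemma sq_ae_eq_of_add_pow_three_eq (hfg : IndepFun f g μ) (hf : MemLp f 4 μ) (hg : MemLp g 4 μ)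
    (hf1 : ∫ ω, f ω ∂μ = 0) (hg1 : ∫ ω, g ω ∂μ = 0) (hf2 : ∫ ω, f ω ^ 2 ∂μ = 1 / 4)
    (hg2 : ∫ ω, g ω ^ 2 ∂μ = 1 / 4) (h : ∀ᵐ ω ∂μ, (f ω + g ω) ^ 3 = f ω + g ω) :
    ∀ᵐ ω ∂μ, f ω ^ 2 = 1 / 4 := by
  have hfi (i : ℕ) (hi : i ≤ 4) : Integrable (fun ω => f ω ^ i) μ :=
    integrable_pow_of_memLp hf (mod_cast hi)
  have hgi (i : ℕ) (hi : i ≤ 4) : Integrable (fun ω => g ω ^ i) μ :=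
    integrable_pow_of_memLp hg (mod_cast hi)
  have hindep (i j : ℕ) : IndepFun (fun ω => f ω ^ i) (fun ω => g ω ^ j) μ :=
    hfg.comp (measurable_id.pow_const i) (measurable_id.pow_const j)
  have hint (i j : ℕ) (hi : i ≤ 4) (hj : j ≤ 4) : Integrable (fun ω => f ω ^ i * g ω ^ j) μ :=
    (hindep i j).integrable_mul (hfi i hi) (hgi j hj)
  have hmul (i j : ℕ) (hi : i ≤ 4) (hj : j ≤ 4) :
      ∫ ω, f ω ^ i * g ω ^ j ∂μ = (∫ ω, f ω ^ i ∂μ) * ∫ ω, g ω ^ j ∂μ :=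
    (hindep i j).integral_fun_mul_eq_mul_integral (hfi i hi).1 (hgi j hj).1
  have h4 : ∫ ω, f ω ^ 4 ∂μ = 1 / 16 := by
    have hexp : (fun ω => f ω ^ 4) =ᵐ[μ] fun ω => f ω ^ 2 + f ω ^ 1 * g ω ^ 1
        - 3 * (f ω ^ 3 * g ω ^ 1) - 3 * (f ω ^ 2 * g ω ^ 2) - f ω ^ 1 * g ω ^ 3 := by
      filter_upwards [h] with ω hω
      linear_combination f ω * hω
    have h11 := hint 1 1 (by simp) (by simp)
    have h31 := (hint 3 1 (by simp) (by simp)).const_mul 3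
    have h22 := (hint 2 2 (by simp) (by simp)).const_mul 3
    have h13 := hint 1 3 (by simp) (by simp)
    have h20 := hfi 2 (by simp)
    rw [integral_congr_ae hexp, integral_sub (by fun_prop) h13, integral_sub (by fun_prop) h22,
      integral_sub (by fun_prop) h31, integral_add h20 h11, integral_const_mul, integral_const_mul,
      hmul 1 1, hmul 3 1, hmul 2 2, hmul 1 3]
    all_goals norm_num [hf1, hg1, hf2, hg2]
  have hf22 : MemLp (fun ω => f ω ^ 2) 2 μ :=
    (memLp_two_iff_integrable_sq (hfi 2 (by simp)).1).2 <| by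
      simpa only [← pow_mul] using hfi (2 * 2) le_rfl
  have hvar : Var[fun ω => f ω ^ 2; μ] = 0 := by
    rw [variance_eq_sub hf22]
    simp only [Pi.pow_apply, ← pow_mul]
    rw [h4, hf2]
    norm_num
  simpa only [hf2] using ae_eq_integral_of_variance_eq_zero hf22 hvar

lemma sub_integral_sq_ae_eq_of_sub_pow_three_eq (hfg : IndepFun f g μ) (hf : MemLp f 4 μ)
    (hg : MemLp g 4 μ) (hmean : ∫ ω, f ω ∂μ = ∫ ω, g ω ∂μ) (hvarf : Var[f; μ] = 1 / 4)
    (hvarg : Var[g; μ] = 1 / 4) (h : ∀ᵐ ω ∂μ, (f ω - g ω) ^ 3 = f ω - g ω) :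
    ∀ᵐ ω ∂μ, (f ω - ∫ x, f x ∂μ) ^ 2 = 1 / 4 := by
  have hfi : Integrable f μ := hf.integrable (by norm_num)
  have hgi : Integrable g μ := hg.integrable (by norm_num)
  rw [variance_eq_integral hf.1.aemeasurable] at hvarf
  rw [variance_eq_integral hg.1.aemeasurable] at hvarg
  refine sq_ae_eq_of_add_pow_three_eq (g := fun ω => (∫ x, g x ∂μ) - g ω)
    (hfg.comp (measurable_id.sub_const _) (measurable_id.const_sub _))
    (hf.sub (memLp_const _)) ((memLp_const _).sub hg) ?_ ?_ hvarf ?_ ?_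
  · simp [integral_sub hfi (integrable_const _)]
  · simp [integral_sub (integrable_const _) hgi]
  · simpa only [sub_sq_comm] using hvarg
  · filter_upwards [h] with ω hω
    rw [hmean]
    linear_combination hω

lemma exists_ae_eq_indicator_add_const {Λ : Type*} [MeasurableSpace Λ] {K : Ω → Λ} {k : Λ → ℝ}
    (hK : Measurable K) (hk : Measurable k)
    (h : ∀ᵐ ω ∂μ, (k (K ω) - ∫ ω', k (K ω') ∂μ) ^ 2 = 1 / 4) :
    ∃ S, MeasurableSet S ∧ μ.real (K ⁻¹' S) = 1 / 2 ∧
      ∀ᵐ ω ∂μ, k (K ω) = S.indicator 1 (K ω) + ((∫ ω', k (K ω') ∂μ) - 1 / 2) := by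
  set m := ∫ ω, k (K ω) ∂μ
  have hS : MeasurableSet {x | m < k x} := measurableSet_lt measurable_const hk
  have hkS : ∀ᵐ ω ∂μ, k (K ω) = {x | m < k x}.indicator 1 (K ω) + (m - 1 / 2) := by
    filter_upwards [h] with ω hω
    rw [show (1 / 4 : ℝ) = (1 / 2) ^ 2 by norm_num, sq_eq_sq_iff_eq_or_eq_neg] at hω
    simp only [Set.indicator_apply, Set.mem_ofPred_eq, Pi.one_apply]
    split_ifs <;> rcases hω with hω | hω <;> linarith
  refine ⟨_, hS, ?_, hkS⟩
  have hint : m = ∫ ω, ((K ⁻¹' {x | m < k x}).indicator 1 ω + (m - 1 / 2)) ∂μ :=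
    integral_congr_ae hkS
  rw [integral_add ((integrable_const 1).indicator (hK hS)) (integrable_const _),
    integral_indicator_one (hK hS), integral_const, probReal_univ, one_smul] at hint
  linarith

lemma pow_three_ae_eq_self (hf : MemLp f ⊤ μ) (h : ∫ ω, (f ω ^ 3 - f ω) ^ 2 ∂μ = 0) :
    ∀ᵐ ω ∂μ, f ω ^ 3 = f ω := by
  have hfi (n : ℕ) : Integrable (fun ω => f ω ^ n) μ := integrable_pow_of_memLp hf le_top
  have hint : Integrable (fun ω => (f ω ^ 3 - f ω) ^ 2) μ :=
    (((hfi 6).sub ((hfi 4).const_mul 2)).add (hfi 2)).congr <| .of_forall fun ω => by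
      simp only [Pi.add_apply, Pi.sub_apply]
      ring
  filter_upwards [(integral_eq_zero_iff_of_nonneg (fun ω => sq_nonneg _) hint).1 h] with ω hω
  exact sub_eq_zero.1 (pow_eq_zero_iff two_ne_zero |>.1 hω)

/-- The mean of `φ` over the numbers of tokens, minus one, received by the first two parties of the
triangle when the token of source `k` goes to its first (`t_k = 0`) or second (`t_k = 1`) party with
equal probability. -/
noncomputable def tokenMean (φ : ℝ → ℝ → ℝ) : ℝ :=
  (∑ t₁ : Fin 2, ∑ t₂ : Fin 2, ∑ t₃ : Fin 2, φ (t₁ - t₃) (t₂ - t₁)) / 8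

lemma sub_integral_sq_ae_eq_of_integral_eq_tokenMean {f₁ f₂ f₃ : Ω → ℝ}
    (h₁ : MemLp f₁ ⊤ μ) (h₂ : MemLp f₂ ⊤ μ) (h₃ : MemLp f₃ ⊤ μ)
    (h₁₂ : IndepFun f₁ f₂ μ) (h₁₃ : IndepFun f₁ f₃ μ) (h₂₃ : IndepFun f₂ f₃ μ)
    (h : ∀ φ : ℝ → ℝ → ℝ, ∫ ω, φ (f₁ ω - f₃ ω) (f₂ ω - f₁ ω) ∂μ = tokenMean φ) :
    (∫ ω, f₂ ω ∂μ = ∫ ω, f₁ ω ∂μ ∧ ∫ ω, f₃ ω ∂μ = ∫ ω, f₁ ω ∂μ) ∧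
      (∀ᵐ ω ∂μ, (f₁ ω - ∫ x, f₁ x ∂μ) ^ 2 = 1 / 4) ∧
      (∀ᵐ ω ∂μ, (f₂ ω - ∫ x, f₂ x ∂μ) ^ 2 = 1 / 4) ∧
      ∀ᵐ ω ∂μ, (f₃ ω - ∫ x, f₃ x ∂μ) ^ 2 = 1 / 4 := by
  have hi {f : Ω → ℝ} (hf : MemLp f ⊤ μ) : Integrable f μ := hf.integrable le_top
  have hvar {D : Ω → ℝ} (hD : MemLp D ⊤ μ) (hD1 : ∫ ω, D ω ∂μ = 0)
      (hD2 : ∫ ω, D ω ^ 2 ∂μ = 1 / 2) : Var[D; μ] = 2 * (1 / 4) := by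
    rw [variance_of_integral_eq_zero hD.1.aemeasurable hD1, hD2]
    norm_num
  have hm₁₃ : ∫ ω, (f₁ - f₃) ω ∂μ = 0 := by
    simpa [tokenMean, Fin.sum_univ_two] using h fun x _ => x
  have hm₂₁ : ∫ ω, (f₂ - f₁) ω ∂μ = 0 := by
    simpa [tokenMean, Fin.sum_univ_two] using h fun _ y => y
  have hm₂₃ : ∫ ω, (f₂ - f₃) ω ∂μ = 0 := by
    simpa [tokenMean, Fin.sum_univ_two] using h fun x y => x + y
  obtain ⟨hv₁, hv₂, hv₃⟩ := variance_eq_of_variance_sub_eq (h₁.mono_exponent le_top)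
    (h₂.mono_exponent le_top) (h₃.mono_exponent le_top) h₁₂ h₁₃ h₂₃
    (hvar (h₁.sub h₃) hm₁₃ ((h fun x _ => x ^ 2).trans (by norm_num [tokenMean])))
    (hvar (h₂.sub h₁) hm₂₁ ((h fun _ y => y ^ 2).trans (by norm_num [tokenMean])))
    (hvar (h₂.sub h₃) hm₂₃ (((integral_congr_ae <| .of_forall fun ω => by
      simp).trans (h fun x y => (x + y) ^ 2)).trans (by norm_num [tokenMean])))
  have hcube₁₃ := pow_three_ae_eq_self (h₁.sub h₃)
    ((h fun x _ => (x ^ 3 - x) ^ 2).trans (by norm_num [tokenMean]))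
  have hcube₂₁ := pow_three_ae_eq_self (h₂.sub h₁)
    ((h fun _ y => (y ^ 3 - y) ^ 2).trans (by norm_num [tokenMean]))
  have hcube₃₁ : ∀ᵐ ω ∂μ, (f₃ ω - f₁ ω) ^ 3 = f₃ ω - f₁ ω := by
    filter_upwards [hcube₁₃] with ω hω
    simp only [Pi.sub_apply] at hω
    linear_combination -hω
  simp only [Pi.sub_apply, integral_sub (hi h₁) (hi h₃), integral_sub (hi h₂) (hi h₁),
    sub_eq_zero] at hm₁₃ hm₂₁
  have h4 {f : Ω → ℝ} (hf : MemLp f ⊤ μ) : MemLp f 4 μ := hf.mono_exponent le_top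
  exact ⟨⟨hm₂₁, hm₁₃.symm⟩,
    sub_integral_sq_ae_eq_of_sub_pow_three_eq h₁₃ (h4 h₁) (h4 h₃) hm₁₃ hv₁ hv₃ hcube₁₃,
    sub_integral_sq_ae_eq_of_sub_pow_three_eq h₁₂.symm (h4 h₂) (h4 h₁) hm₂₁ hv₂ hv₁ hcube₂₁,
    sub_integral_sq_ae_eq_of_sub_pow_three_eq h₁₃.symm (h4 h₃) (h4 h₁) hm₁₃.symm hv₃ hv₁ hcube₃₁⟩

end Rigidity

section Triangle

variable {Λ₁ Λ₂ Λ₃ : Type*} [MeasurableSpace Λ₁] [MeasurableSpace Λ₂] [MeasurableSpace Λ₃]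

/-- The cyclic relabelling of the three sources, by which a statement about one party of the
triangle is transported to the others. -/
def rotate : Λ₁ × Λ₂ × Λ₃ ≃ᵐ Λ₂ × Λ₃ × Λ₁ :=
  MeasurableEquiv.prodComm.trans MeasurableEquiv.prodAssoc

lemma measurePreserving_rotate (μ₁ : Measure Λ₁) (μ₂ : Measure Λ₂) (μ₃ : Measure Λ₃)
    [SFinite μ₁] [SFinite μ₂] [SFinite μ₃] :
    MeasurePreserving rotate (μ₁.prod (μ₂.prod μ₃)) (μ₂.prod (μ₃.prod μ₁)) :=
  (measurePreserving_prodAssoc μ₂ μ₃ μ₁).comp Measure.measurePreserving_swap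

variable {μ₁ : Measure Λ₁} {μ₂ : Measure Λ₂} {μ₃ : Measure Λ₃}

-- Freezing `x₂` expresses `X` through `Y` and `Z`; freezing `x₃` afterwards expresses `Y`.
lemma exists_potential [SFinite μ₁] [SFinite μ₂] [SFinite μ₃] [NeZero μ₂] [NeZero μ₃]
    {G : Type*} [AddCommGroup G] {X : Λ₃ × Λ₁ → G} {Y : Λ₁ × Λ₂ → G} {Z : Λ₂ × Λ₃ → G}
    (h : ∀ᵐ ω ∂μ₁.prod (μ₂.prod μ₃),
      X (ω.2.2, ω.1) + Y (ω.1, ω.2.1) + Z (ω.2.1, ω.2.2) = 0) :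
    ∃ x₂ x₃, ∀ᵐ ω ∂μ₁.prod (μ₂.prod μ₃),
      X (ω.2.2, ω.1) = -Y (ω.1, x₂) - Z (x₂, ω.2.2) ∧
        Y (ω.1, ω.2.1) = Z (x₂, x₃) - Z (ω.2.1, x₃) + Y (ω.1, x₂) := by
  have hrot₁ := measurePreserving_rotate μ₁ μ₂ μ₃
  have hrot₂ := measurePreserving_rotate μ₂ μ₃ μ₁
  have hrot₃ := measurePreserving_rotate μ₃ μ₁ μ₂
  have h₂ : ∀ᵐ ω ∂μ₂.prod (μ₃.prod μ₁), X ω.2 = -Y (ω.2.2, ω.1) - Z (ω.1, ω.2.1) := by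
    filter_upwards [(hrot₃.comp hrot₂).quasiMeasurePreserving.ae h] with ω hω
    rw [← sub_eq_zero, ← hω]
    dsimp only [Function.comp_apply]
    abel
  obtain ⟨x₂, hx₂⟩ := (Measure.ae_ae_of_ae_prod h₂).exists
  have h₃ : ∀ᵐ x₃ ∂μ₃, ∀ᵐ z ∂μ₁.prod μ₂, X (x₃, z.1) + Y z + Z (z.2, x₃) = 0 :=
    Measure.ae_ae_of_ae_prod (hrot₃.quasiMeasurePreserving.ae h)
  obtain ⟨x₃, hX, hYZ⟩ := ((Measure.ae_ae_of_ae_prod hx₂).and h₃).exists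
  refine ⟨x₂, x₃, ?_⟩
  filter_upwards [((Measure.quasiMeasurePreserving_snd (μ := μ₂)).comp
      hrot₁.quasiMeasurePreserving).ae hx₂,
    (Measure.quasiMeasurePreserving_fst (μ := μ₁)).ae hX,
    ((Measure.quasiMeasurePreserving_snd (μ := μ₃)).comp
      (hrot₂.comp hrot₁).quasiMeasurePreserving).ae hYZ]
    with ω hω₁ hω₂ hω₃
  refine ⟨hω₁, ?_⟩
  replace hω₃ : X (x₃, ω.1) + Y (ω.1, ω.2.1) + Z (ω.2.1, x₃) = 0 := hω₃
  rw [← sub_eq_zero, ← hω₃, hω₂]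
  abel

variable [IsProbabilityMeasure μ₁] [IsProbabilityMeasure μ₂] [IsProbabilityMeasure μ₃]

-- Each `tᵢ` is an indicator up to a constant, and the three constants agree.
lemma exists_tokens_of_integral_eq_tokenMean {t₁ : Λ₁ → ℝ} {t₂ : Λ₂ → ℝ} {t₃ : Λ₃ → ℝ}
    (ht₁ : Measurable t₁) (ht₂ : Measurable t₂) (ht₃ : Measurable t₃) (hm₁ : MemLp t₁ ⊤ μ₁)
    (hm₂ : MemLp t₂ ⊤ μ₂) (hm₃ : MemLp t₃ ⊤ μ₃)
    (hlaw : ∀ φ : ℝ → ℝ → ℝ, ∫ ω, φ (t₁ ω.1 - t₃ ω.2.2) (t₂ ω.2.1 - t₁ ω.1)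
      ∂μ₁.prod (μ₂.prod μ₃) = tokenMean φ) :
    ∃ S₁ S₂ S₃, (MeasurableSet S₁ ∧ μ₁.real S₁ = 1 / 2) ∧ (MeasurableSet S₂ ∧ μ₂.real S₂ = 1 / 2) ∧
      (MeasurableSet S₃ ∧ μ₃.real S₃ = 1 / 2) ∧ ∀ᵐ ω ∂μ₁.prod (μ₂.prod μ₃),
        t₁ ω.1 - t₃ ω.2.2 = S₁.indicator 1 ω.1 - S₃.indicator 1 ω.2.2 ∧
          t₂ ω.2.1 - t₁ ω.1 = S₂.indicator 1 ω.2.1 - S₁.indicator 1 ω.1 := by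
  have hp₁ : MeasurePreserving Prod.fst (μ₁.prod (μ₂.prod μ₃)) μ₁ := measurePreserving_fst
  have hp₂₃ : MeasurePreserving Prod.snd (μ₁.prod (μ₂.prod μ₃)) (μ₂.prod μ₃) :=
    measurePreserving_snd
  have hp₂ := (measurePreserving_fst (μ := μ₂) (ν := μ₃)).comp hp₂₃
  have hp₃ := (measurePreserving_snd (μ := μ₂) (ν := μ₃)).comp hp₂₃
  obtain ⟨⟨h₂₁, h₃₁⟩, hr₁, hr₂, hr₃⟩ := sub_integral_sq_ae_eq_of_integral_eq_tokenMean
    (hm₁.comp_measurePreserving hp₁) (hm₂.comp_measurePreserving hp₂)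
    (hm₃.comp_measurePreserving hp₃) (indepFun_prod ht₁ (ht₂.comp measurable_fst))
    (indepFun_prod ht₁ (ht₃.comp measurable_snd)) (indepFun_comp_of_measurePreserving hp₂₃
      (ht₂.comp measurable_fst) (ht₃.comp measurable_snd) (indepFun_prod ht₂ ht₃)) hlaw
  obtain ⟨S₁, hS₁, hμ₁, hi₁⟩ := exists_ae_eq_indicator_add_const hp₁.measurable ht₁ hr₁
  obtain ⟨S₂, hS₂, hμ₂, hi₂⟩ := exists_ae_eq_indicator_add_const hp₂.measurable ht₂ hr₂
  obtain ⟨S₃, hS₃, hμ₃, hi₃⟩ := exists_ae_eq_indicator_add_const hp₃.measurable ht₃ hr₃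
  rw [hp₁.measureReal_preimage hS₁.nullMeasurableSet] at hμ₁
  rw [hp₂.measureReal_preimage hS₂.nullMeasurableSet] at hμ₂
  rw [hp₃.measureReal_preimage hS₃.nullMeasurableSet] at hμ₃
  refine ⟨S₁, S₂, S₃, ⟨hS₁, hμ₁⟩, ⟨hS₂, hμ₂⟩, ⟨hS₃, hμ₃⟩, ?_⟩
  filter_upwards [hi₁, hi₂, hi₃] with ω hω₁ hω₂ hω₃
  simp only [Function.comp_apply] at h₂₁ h₃₁ hω₂ hω₃
  rw [hω₁, hω₂, hω₃, h₂₁, h₃₁]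
  constructor <;> ring

lemma exists_tokens {X : Λ₃ × Λ₁ → ℝ} {Y : Λ₁ × Λ₂ → ℝ} {Z : Λ₂ × Λ₃ → ℝ} {C : ℝ}
    (hY : Measurable Y) (hZ : Measurable Z) (hYC : ∀ z, |Y z| ≤ C) (hZC : ∀ z, |Z z| ≤ C)
    (hsum : ∀ᵐ ω ∂μ₁.prod (μ₂.prod μ₃), X (ω.2.2, ω.1) + Y (ω.1, ω.2.1) + Z (ω.2.1, ω.2.2) = 0)
    (hlaw : ∀ φ : ℝ → ℝ → ℝ,
      ∫ ω, φ (X (ω.2.2, ω.1)) (Y (ω.1, ω.2.1)) ∂μ₁.prod (μ₂.prod μ₃) = tokenMean φ) :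
    ∃ S₁ S₂ S₃, (MeasurableSet S₁ ∧ μ₁.real S₁ = 1 / 2) ∧ (MeasurableSet S₂ ∧ μ₂.real S₂ = 1 / 2) ∧
      (MeasurableSet S₃ ∧ μ₃.real S₃ = 1 / 2) ∧ ∀ᵐ ω ∂μ₁.prod (μ₂.prod μ₃),
        X (ω.2.2, ω.1) = S₁.indicator 1 ω.1 - S₃.indicator 1 ω.2.2 ∧
          Y (ω.1, ω.2.1) = S₂.indicator 1 ω.2.1 - S₁.indicator 1 ω.1 := by
  obtain ⟨x₂, x₃, hpot⟩ := exists_potential hsum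
  let t₁ (x : Λ₁) := -Y (x, x₂)
  let t₂ (x : Λ₂) := Z (x₂, x₃) - Z (x, x₃)
  let t₃ (x : Λ₃) := Z (x₂, x)
  have ht₁ : Measurable t₁ := by fun_prop
  have ht₂ : Measurable t₂ := by fun_prop
  have ht₃ : Measurable t₃ := by fun_prop
  have hm₁ : MemLp t₁ ⊤ μ₁ := memLp_top_of_bound ht₁.aestronglyMeasurable C <|
    .of_forall fun x => by simpa [t₁] using hYC _
  have hm₂ : MemLp t₂ ⊤ μ₂ := memLp_top_of_bound ht₂.aestronglyMeasurable (C + C) <|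
    .of_forall fun x => (abs_sub _ _).trans (add_le_add (hZC _) (hZC _))
  have hm₃ : MemLp t₃ ⊤ μ₃ := memLp_top_of_bound ht₃.aestronglyMeasurable C <|
    .of_forall fun x => hZC _
  have hdiff : ∀ᵐ ω ∂μ₁.prod (μ₂.prod μ₃), X (ω.2.2, ω.1) = t₁ ω.1 - t₃ ω.2.2 ∧
      Y (ω.1, ω.2.1) = t₂ ω.2.1 - t₁ ω.1 := by
    filter_upwards [hpot] with ω hω
    exact ⟨hω.1, by rw [hω.2, sub_neg_eq_add]⟩
  have hlaw' (φ : ℝ → ℝ → ℝ) : ∫ ω, φ (t₁ ω.1 - t₃ ω.2.2) (t₂ ω.2.1 - t₁ ω.1)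
      ∂μ₁.prod (μ₂.prod μ₃) = tokenMean φ := by
    rw [← hlaw φ]
    refine integral_congr_ae ?_
    filter_upwards [hdiff] with ω hω
    rw [hω.1, hω.2]
  obtain ⟨S₁, S₂, S₃, hS₁, hS₂, hS₃, hS⟩ :=
    exists_tokens_of_integral_eq_tokenMean ht₁ ht₂ ht₃ hm₁ hm₂ hm₃ hlaw'
  refine ⟨S₁, S₂, S₃, hS₁, hS₂, hS₃, ?_⟩
  filter_upwards [hdiff, hS] with ω hω hω'
  rwa [hω.1, hω.2]

end Triangle

section Box

variable {Λ₁ Λ₂ Λ₃ : Type*} [MeasurableSpace Λ₁] [MeasurableSpace Λ₂] [MeasurableSpace Λ₃]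
  {μ₁ : Measure Λ₁} {μ₂ : Measure Λ₂} {μ₃ : Measure Λ₃}

lemma setIntegral_eq_ite {Ω : Type*} [MeasurableSpace Ω] {μ : Measure Ω} {E : Set Ω} {f : Ω → ℝ}
    {c : Prop} [Decidable c] (h : ∀ᵐ ω ∂μ, f ω ≠ 0 → (ω ∈ E ↔ c)) :
    ∫ ω in E, f ω ∂μ = if c then ∫ ω, f ω ∂μ else 0 := by
  split_ifs with hc
  · exact setIntegral_eq_integral_of_ae_compl_eq_zero <| by
      filter_upwards [h] with ω hω hωE
      by_contra hf
      exact hωE ((hω hf).2 hc)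
  · exact setIntegral_eq_zero_of_ae_eq_zero <| by
      filter_upwards [h] with ω hω hωE
      by_contra hf
      exact hc ((hω hf).1 hωE)

lemma measureReal_eq_compl [IsProbabilityMeasure μ₁] {S : Set Λ₁} (hS : MeasurableSet S)
    (hμ : μ₁.real S = 1 / 2) : μ₁.real S = μ₁.real Sᶜ := by
  rw [probReal_compl_eq_one_sub hS, hμ]
  norm_num

variable [SFinite μ₁] [SFinite μ₂] [SFinite μ₃]
  {T₁ T₁' : Set Λ₁} {T₂ T₂' : Set Λ₂} {T₃ T₃' : Set Λ₃}

lemma setIntegral_prod_comp_snd_congr (h : μ₁.real T₁ = μ₁.real T₁') (F : Λ₂ → ℝ) :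
    ∫ ω in T₁ ×ˢ T₂, F ω.2 ∂μ₁.prod μ₂ = ∫ ω in T₁' ×ˢ T₂, F ω.2 ∂μ₁.prod μ₂ := by
  have hmul (T : Set Λ₁) : ∫ ω in T ×ˢ T₂, F ω.2 ∂μ₁.prod μ₂ = μ₁.real T * ∫ y in T₂, F y ∂μ₂ := by
    simpa using setIntegral_prod_mul (μ := μ₁) (ν := μ₂) (fun _ => (1 : ℝ)) F T T₂
  rw [hmul, hmul, h]

lemma setIntegral_box_comp_rotate (F : Λ₂ × Λ₃ × Λ₁ → ℝ) :
    ∫ ω in T₁ ×ˢ T₂ ×ˢ T₃, F (rotate ω) ∂μ₁.prod (μ₂.prod μ₃) =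
      ∫ ω in T₂ ×ˢ T₃ ×ˢ T₁, F ω ∂μ₂.prod (μ₃.prod μ₁) := by
  rw [← (measurePreserving_rotate μ₁ μ₂ μ₃).setIntegral_preimage_emb rotate.measurableEmbedding]
  congr 2
  ext ω
  exact ⟨fun ⟨h₁, h₂, h₃⟩ => ⟨h₂, h₃, h₁⟩, fun ⟨h₂, h₃, h₁⟩ => ⟨h₁, h₂, h₃⟩⟩

lemma setIntegral_box_congr₂ (h : μ₂.real T₂ = μ₂.real T₂') (F : Λ₃ × Λ₁ → ℝ) :
    ∫ ω in T₁ ×ˢ T₂ ×ˢ T₃, F (ω.2.2, ω.1) ∂μ₁.prod (μ₂.prod μ₃) =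
      ∫ ω in T₁ ×ˢ T₂' ×ˢ T₃, F (ω.2.2, ω.1) ∂μ₁.prod (μ₂.prod μ₃) :=
  (setIntegral_box_comp_rotate fun ω => F ω.2).trans <|
    (setIntegral_prod_comp_snd_congr h F).trans
      (setIntegral_box_comp_rotate fun ω => F ω.2).symm

lemma setIntegral_box_congr₃ (h : μ₃.real T₃ = μ₃.real T₃') (F : Λ₁ × Λ₂ → ℝ) :
    ∫ ω in T₁ ×ˢ T₂ ×ˢ T₃, F (ω.1, ω.2.1) ∂μ₁.prod (μ₂.prod μ₃) =
      ∫ ω in T₁ ×ˢ T₂ ×ˢ T₃', F (ω.1, ω.2.1) ∂μ₁.prod (μ₂.prod μ₃) :=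
  (setIntegral_box_comp_rotate fun ω => F (ω.2.2, ω.1)).trans <|
    (setIntegral_box_congr₂ h F).trans
      (setIntegral_box_comp_rotate fun ω => F (ω.2.2, ω.1)).symm

end Box

/-- Measurable response functions: `p a x` is the probability of output `a` given the hidden
variables `x`. -/
structure IsResponse_s16 {O Λ : Type*} [Fintype O] [MeasurableSpace Λ] (p : O → Λ → ℝ) : Prop where
  measurable a : Measurable (p a)
  nonneg a x : 0 ≤ p a x
  sum_eq_one x : ∑ a, p a x = 1

namespace IsResponse_s16

variable {O Λ : Type*} [Fintype O] [MeasurableSpace Λ] {p : O → Λ → ℝ}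

lemma le_one_s16 (hp : IsResponse_s16 p) (a : O) (x : Λ) : p a x ≤ 1 :=
  (hp.sum_eq_one x).symm ▸ Finset.single_le_sum (fun a _ => hp.nonneg a x) (Finset.mem_univ a)

lemma integrable (hp : IsResponse_s16 p) (a : O) {μ : Measure Λ} [IsFiniteMeasure μ] :
    Integrable (p a) μ :=
  .of_bound (hp.measurable a).aestronglyMeasurable 1 <| .of_forall fun x => by
    rw [Real.norm_eq_abs, abs_of_nonneg (hp.nonneg a x)]
    exact hp.le_one_s16 a x

end IsResponse_s16

/-- The mean of the labels `d` of the outputs under the response functions `p`. -/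
def meanLabel {O Λ : Type*} [Fintype O] (d : O → ℝ) (p : O → Λ → ℝ) (x : Λ) : ℝ :=
  ∑ a, d a * p a x

section MeanLabel

variable {O Λ : Type*} [Fintype O] {p : O → Λ → ℝ}

lemma meanLabel_eq {d : O → ℝ} {x : Λ} {k : ℝ} (hp : ∑ a, p a x = 1)
    (h : ∀ a, p a x ≠ 0 → d a = k) : meanLabel d p x = k := by
  rw [meanLabel, ← mul_one k, ← hp, Finset.mul_sum]
  refine Finset.sum_congr rfl fun a _ => ?_
  by_cases ha : p a x = 0
  · simp only [ha, mul_zero]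
  · rw [h a ha]

variable [MeasurableSpace Λ]

lemma IsResponse_s16.measurable_meanLabel (hp : IsResponse_s16 p) (d : O → ℝ) :
    Measurable (meanLabel d p) :=
  Finset.measurable_fun_sum _ fun a _ => (hp.measurable a).const_mul _

lemma IsResponse_s16.abs_meanLabel_le (hp : IsResponse_s16 p) (d : O → ℝ) (x : Λ) :
    |meanLabel d p x| ≤ ∑ a, |d a| :=
  (Finset.abs_sum_le_sum_abs _ _).trans <| Finset.sum_le_sum fun a _ => by
    rw [abs_mul, abs_of_nonneg (hp.nonneg a x)]
    exact mul_le_of_le_one_right (abs_nonneg _) (hp.le_one_s16 a x)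

end MeanLabel

section Indicator

variable {α β : Type*} {S : Set α} {T : Set β} {x : α} {y : β}

lemma indicator_sub_indicator_eq_zero_iff :
    (S.indicator 1 x - T.indicator 1 y : ℝ) = 0 ↔ (x ∈ S ↔ y ∈ T) := by
  by_cases hx : x ∈ S <;> by_cases hy : y ∈ T <;> simp [hx, hy]

lemma indicator_sub_indicator_eq_one_iff :
    (S.indicator 1 x - T.indicator 1 y : ℝ) = 1 ↔ x ∈ S ∧ y ∉ T := by
  by_cases hx : x ∈ S <;> by_cases hy : y ∈ T <;> norm_num [hx, hy]

lemma indicator_sub_indicator_eq_neg_one_iff :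
    (S.indicator 1 x - T.indicator 1 y : ℝ) = -1 ↔ x ∉ S ∧ y ∈ T := by
  by_cases hx : x ∈ S <;> by_cases hy : y ∈ T <;> norm_num [hx, hy]

end Indicator

section TriangleModel

variable {O₁ O₂ O₃ Λ₁ Λ₂ Λ₃ : Type*}

/-- The conditional probability of the outputs `a`, `b`, `c` of the three parties of the triangle
given the hidden variables of the three sources. -/
def jointWeight (p₁ : O₁ → Λ₃ × Λ₁ → ℝ) (p₂ : O₂ → Λ₁ × Λ₂ → ℝ) (p₃ : O₃ → Λ₂ × Λ₃ → ℝ)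
    (a : O₁) (b : O₂) (c : O₃) (ω : Λ₁ × Λ₂ × Λ₃) : ℝ :=
  p₁ a (ω.2.2, ω.1) * p₂ b (ω.1, ω.2.1) * p₃ c (ω.2.1, ω.2.2)

variable [Fintype O₁] [Fintype O₂] [Fintype O₃]
  [MeasurableSpace Λ₁] [MeasurableSpace Λ₂] [MeasurableSpace Λ₃]

/-- A local model of `P` on the triangle: the parties receive the hidden variables of the sources
`(3, 1)`, `(1, 2)` and `(2, 3)` respectively and answer independently. -/
structure IsTriangleModel (μ₁ : Measure Λ₁) (μ₂ : Measure Λ₂) (μ₃ : Measure Λ₃)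
    (p₁ : O₁ → Λ₃ × Λ₁ → ℝ) (p₂ : O₂ → Λ₁ × Λ₂ → ℝ) (p₃ : O₃ → Λ₂ × Λ₃ → ℝ)
    (P : O₁ → O₂ → O₃ → ℝ) : Prop where
  isResponse₁ : IsResponse_s16 p₁
  isResponse₂ : IsResponse_s16 p₂
  isResponse₃ : IsResponse_s16 p₃
  eq_integral a b c : P a b c =
    ∫ x₁, ∫ x₂, ∫ x₃, p₁ a (x₃, x₁) * p₂ b (x₁, x₂) * p₃ c (x₂, x₃) ∂μ₃ ∂μ₂ ∂μ₁

/-- The outputs of the three parties count tokens, shared by three sources that send one token each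
to either of their parties with equal probability: `d₁`, `d₂`, `d₃` are the numbers of tokens
received, minus one, read off from the outputs. -/
structure IsTokenCounting (P : O₁ → O₂ → O₃ → ℝ) (d₁ : O₁ → ℝ) (d₂ : O₂ → ℝ) (d₃ : O₃ → ℝ) :
    Prop where
  add_eq_zero {a b c} : P a b c ≠ 0 → d₁ a + d₂ b + d₃ c = 0
  sum_eq_tokenMean (φ : ℝ → ℝ → ℝ) : ∑ a, ∑ b, ∑ c, φ (d₁ a) (d₂ b) * P a b c = tokenMean φ

/-- The part `q` of `P` due to the tokens that all travel in the same, fixed direction around the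
triangle. Its one-party marginals are those of the events in which one token, which that party
cannot see, is turned around. -/
structure IsTokenPart (P q : O₁ → O₂ → O₃ → ℝ) (d₁ : O₁ → ℝ) (d₂ : O₂ → ℝ) : Prop where
  nonneg a b c : 0 ≤ q a b c
  le a b c : q a b c ≤ P a b c
  eq_zero {a b c} : ¬(d₁ a = 0 ∧ d₂ b = 0) → q a b c = 0
  marginal₁ a : ∑ b, ∑ c, q a b c = ∑ b, ∑ c, if d₁ a = 0 ∧ d₂ b = -1 then P a b c else 0
  marginal₂ b : ∑ a, ∑ c, q a b c = ∑ a, ∑ c, if d₁ a = 1 ∧ d₂ b = 0 then P a b c else 0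
  marginal₃ c : ∑ a, ∑ b, q a b c = ∑ a, ∑ b, if d₁ a = -1 ∧ d₂ b = 1 then P a b c else 0

namespace IsTriangleModel

variable {μ₁ : Measure Λ₁} {μ₂ : Measure Λ₂} {μ₃ : Measure Λ₃} {p₁ : O₁ → Λ₃ × Λ₁ → ℝ}
  {p₂ : O₂ → Λ₁ × Λ₂ → ℝ} {p₃ : O₃ → Λ₂ × Λ₃ → ℝ} {P : O₁ → O₂ → O₃ → ℝ}

lemma isResponse_jointWeight (h : IsTriangleModel μ₁ μ₂ μ₃ p₁ p₂ p₃ P) :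
    IsResponse_s16 fun j : O₁ × O₂ × O₃ => jointWeight p₁ p₂ p₃ j.1 j.2.1 j.2.2 where
  measurable j := by
    have h₁ := h.isResponse₁.measurable j.1
    have h₂ := h.isResponse₂.measurable j.2.1
    have h₃ := h.isResponse₃.measurable j.2.2
    unfold jointWeight
    fun_prop
  nonneg j ω := mul_nonneg (mul_nonneg (h.isResponse₁.nonneg _ _) (h.isResponse₂.nonneg _ _))
    (h.isResponse₃.nonneg _ _)
  sum_eq_one ω := by
    simp only [jointWeight, Fintype.sum_prod_type, ← Finset.mul_sum, h.isResponse₃.sum_eq_one,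
      h.isResponse₂.sum_eq_one, h.isResponse₁.sum_eq_one, mul_one]

lemma jointWeight_nonneg (h : IsTriangleModel μ₁ μ₂ μ₃ p₁ p₂ p₃ P) (a : O₁) (b : O₂) (c : O₃)
    (ω : Λ₁ × Λ₂ × Λ₃) : 0 ≤ jointWeight p₁ p₂ p₃ a b c ω :=
  h.isResponse_jointWeight.nonneg (a, b, c) ω

variable [IsProbabilityMeasure μ₁] [IsProbabilityMeasure μ₂] [IsProbabilityMeasure μ₃]

lemma integrable_jointWeight (h : IsTriangleModel μ₁ μ₂ μ₃ p₁ p₂ p₃ P) (a : O₁) (b : O₂) (c : O₃) :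
    Integrable (jointWeight p₁ p₂ p₃ a b c) (μ₁.prod (μ₂.prod μ₃)) :=
  h.isResponse_jointWeight.integrable (a, b, c)

lemma integral_jointWeight (h : IsTriangleModel μ₁ μ₂ μ₃ p₁ p₂ p₃ P) (a : O₁) (b : O₂) (c : O₃) :
    ∫ ω, jointWeight p₁ p₂ p₃ a b c ω ∂μ₁.prod (μ₂.prod μ₃) = P a b c := by
  have hint := h.integrable_jointWeight a b c
  rw [h.eq_integral, integral_prod _ hint]
  refine integral_congr_ae ?_
  filter_upwards [hint.prod_right_ae] with x₁ hx₁
  exact integral_prod _ hx₁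

lemma ae_ne_zero (h : IsTriangleModel μ₁ μ₂ μ₃ p₁ p₂ p₃ P) :
    ∀ᵐ ω ∂μ₁.prod (μ₂.prod μ₃), ∀ a b c, jointWeight p₁ p₂ p₃ a b c ω ≠ 0 → P a b c ≠ 0 := by
  simp only [ae_all_iff]
  intro a b c
  by_cases hP : P a b c = 0
  · have hint := (integral_eq_zero_iff_of_nonneg (h.jointWeight_nonneg a b c)
      (h.integrable_jointWeight a b c)).1 ((h.integral_jointWeight a b c).trans hP)
    filter_upwards [hint] with ω hω hw
    exact absurd hω hw
  · exact .of_forall fun _ _ => hP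

variable {d₁ : O₁ → ℝ} {d₂ : O₂ → ℝ} {d₃ : O₃ → ℝ}

-- As the parties answer independently, each label is determined by the two other ones.
lemma ae_label_eq_meanLabel (h : IsTriangleModel μ₁ μ₂ μ₃ p₁ p₂ p₃ P)
    (hP : IsTokenCounting P d₁ d₂ d₃) :
    ∀ᵐ ω ∂μ₁.prod (μ₂.prod μ₃), (∀ a b c, jointWeight p₁ p₂ p₃ a b c ω ≠ 0 →
        d₁ a = meanLabel d₁ p₁ (ω.2.2, ω.1) ∧ d₂ b = meanLabel d₂ p₂ (ω.1, ω.2.1)) ∧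
      meanLabel d₁ p₁ (ω.2.2, ω.1) + meanLabel d₂ p₂ (ω.1, ω.2.1)
        + meanLabel d₃ p₃ (ω.2.1, ω.2.2) = 0 := by
  filter_upwards [h.ae_ne_zero] with ω hω
  have hone₁ := h.isResponse₁.sum_eq_one (ω.2.2, ω.1)
  have hone₂ := h.isResponse₂.sum_eq_one (ω.1, ω.2.1)
  have hone₃ := h.isResponse₃.sum_eq_one (ω.2.1, ω.2.2)
  have hadd {a b c} (ha : p₁ a (ω.2.2, ω.1) ≠ 0) (hb : p₂ b (ω.1, ω.2.1) ≠ 0)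
      (hc : p₃ c (ω.2.1, ω.2.2) ≠ 0) : d₁ a + d₂ b + d₃ c = 0 :=
    hP.add_eq_zero (hω a b c (mul_ne_zero (mul_ne_zero ha hb) hc))
  obtain ⟨a₀, -, ha₀⟩ := Finset.exists_ne_zero_of_sum_ne_zero (hone₁.symm ▸ one_ne_zero)
  obtain ⟨b₀, -, hb₀⟩ := Finset.exists_ne_zero_of_sum_ne_zero (hone₂.symm ▸ one_ne_zero)
  obtain ⟨c₀, -, hc₀⟩ := Finset.exists_ne_zero_of_sum_ne_zero (hone₃.symm ▸ one_ne_zero)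
  have ha {a} (ha : p₁ a (ω.2.2, ω.1) ≠ 0) : d₁ a = d₁ a₀ := by
    linarith [hadd ha hb₀ hc₀, hadd ha₀ hb₀ hc₀]
  have hb {b} (hb : p₂ b (ω.1, ω.2.1) ≠ 0) : d₂ b = d₂ b₀ := by
    linarith [hadd ha₀ hb hc₀, hadd ha₀ hb₀ hc₀]
  have hc {c} (hc : p₃ c (ω.2.1, ω.2.2) ≠ 0) : d₃ c = d₃ c₀ := by
    linarith [hadd ha₀ hb₀ hc, hadd ha₀ hb₀ hc₀]
  rw [meanLabel_eq hone₁ fun _ => ha, meanLabel_eq hone₂ fun _ => hb,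
    meanLabel_eq hone₃ fun _ => hc]
  refine ⟨fun a b c hw => ?_, hadd ha₀ hb₀ hc₀⟩
  exact ⟨ha (left_ne_zero_of_mul (left_ne_zero_of_mul hw)),
    hb (right_ne_zero_of_mul (left_ne_zero_of_mul hw))⟩

lemma integral_meanLabel (h : IsTriangleModel μ₁ μ₂ μ₃ p₁ p₂ p₃ P)
    (hP : IsTokenCounting P d₁ d₂ d₃) (φ : ℝ → ℝ → ℝ) :
    ∫ ω, φ (meanLabel d₁ p₁ (ω.2.2, ω.1)) (meanLabel d₂ p₂ (ω.1, ω.2.1)) ∂μ₁.prod (μ₂.prod μ₃)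
      = tokenMean φ := by
  have hsplit : ∀ᵐ ω ∂μ₁.prod (μ₂.prod μ₃),
      φ (meanLabel d₁ p₁ (ω.2.2, ω.1)) (meanLabel d₂ p₂ (ω.1, ω.2.1))
        = ∑ j : O₁ × O₂ × O₃, φ (d₁ j.1) (d₂ j.2.1) * jointWeight p₁ p₂ p₃ j.1 j.2.1 j.2.2 ω := by
    filter_upwards [h.ae_label_eq_meanLabel hP] with ω hω
    refine (meanLabel_eq (d := fun j : O₁ × O₂ × O₃ => φ (d₁ j.1) (d₂ j.2.1))
      (h.isResponse_jointWeight.sum_eq_one ω) fun j hj => ?_).symm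
    rw [(hω.1 _ _ _ hj).1, (hω.1 _ _ _ hj).2]
  rw [integral_congr_ae hsplit, integral_finsetSum _ fun j _ =>
    (h.integrable_jointWeight j.1 j.2.1 j.2.2).const_mul _, ← hP.sum_eq_tokenMean φ]
  simp only [integral_const_mul, h.integral_jointWeight, Fintype.sum_prod_type]

lemma exists_tokens (h : IsTriangleModel μ₁ μ₂ μ₃ p₁ p₂ p₃ P) (hP : IsTokenCounting P d₁ d₂ d₃) :
    ∃ S₁ S₂ S₃, (MeasurableSet S₁ ∧ μ₁.real S₁ = 1 / 2) ∧ (MeasurableSet S₂ ∧ μ₂.real S₂ = 1 / 2) ∧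
      (MeasurableSet S₃ ∧ μ₃.real S₃ = 1 / 2) ∧ ∀ᵐ ω ∂μ₁.prod (μ₂.prod μ₃),
        ∀ a b c, jointWeight p₁ p₂ p₃ a b c ω ≠ 0 →
          d₁ a = S₁.indicator 1 ω.1 - S₃.indicator 1 ω.2.2 ∧
            d₂ b = S₂.indicator 1 ω.2.1 - S₁.indicator 1 ω.1 := by
  have hlabel := h.ae_label_eq_meanLabel hP
  obtain ⟨S₁, S₂, S₃, hS₁, hS₂, hS₃, hS⟩ := _root_.exists_tokens
    (h.isResponse₂.measurable_meanLabel d₂) (h.isResponse₃.measurable_meanLabel d₃)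
    (fun z => (h.isResponse₂.abs_meanLabel_le d₂ z).trans
      (le_add_of_nonneg_right (Finset.sum_nonneg fun c _ => abs_nonneg (d₃ c))))
    (fun z => (h.isResponse₃.abs_meanLabel_le d₃ z).trans
      (le_add_of_nonneg_left (Finset.sum_nonneg fun b _ => abs_nonneg (d₂ b))))
    (hlabel.mono fun _ hω => hω.2) (h.integral_meanLabel hP)
  refine ⟨S₁, S₂, S₃, hS₁, hS₂, hS₃, ?_⟩
  filter_upwards [hlabel, hS] with ω hω hωS a b c hw
  rw [← hωS.1, ← hωS.2]
  exact hω.1 a b c hw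

lemma sum_setIntegral₁ (h : IsTriangleModel μ₁ μ₂ μ₃ p₁ p₂ p₃ P) (E : Set (Λ₁ × Λ₂ × Λ₃))
    (a : O₁) : ∑ b, ∑ c, ∫ ω in E, jointWeight p₁ p₂ p₃ a b c ω ∂μ₁.prod (μ₂.prod μ₃) =
      ∫ ω in E, p₁ a (ω.2.2, ω.1) ∂μ₁.prod (μ₂.prod μ₃) := by
  have hint b c := (h.integrable_jointWeight a b c).integrableOn (s := E)
  simp only [← integral_finsetSum _ fun c _ => hint _ c]
  rw [← integral_finsetSum _ fun b _ => integrable_finsetSum _ fun c _ => hint b c]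
  simp only [jointWeight, ← Finset.mul_sum, h.isResponse₂.sum_eq_one, h.isResponse₃.sum_eq_one,
    mul_one]

lemma sum_setIntegral₂ (h : IsTriangleModel μ₁ μ₂ μ₃ p₁ p₂ p₃ P) (E : Set (Λ₁ × Λ₂ × Λ₃))
    (b : O₂) : ∑ a, ∑ c, ∫ ω in E, jointWeight p₁ p₂ p₃ a b c ω ∂μ₁.prod (μ₂.prod μ₃) =
      ∫ ω in E, p₂ b (ω.1, ω.2.1) ∂μ₁.prod (μ₂.prod μ₃) := by
  have hint a c := (h.integrable_jointWeight a b c).integrableOn (s := E)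
  simp only [← integral_finsetSum _ fun c _ => hint _ c]
  rw [← integral_finsetSum _ fun a _ => integrable_finsetSum _ fun c _ => hint a c]
  simp only [jointWeight, ← Finset.mul_sum, ← Finset.sum_mul, h.isResponse₁.sum_eq_one,
    h.isResponse₃.sum_eq_one, mul_one, one_mul]

lemma sum_setIntegral₃ (h : IsTriangleModel μ₁ μ₂ μ₃ p₁ p₂ p₃ P) (E : Set (Λ₁ × Λ₂ × Λ₃))
    (c : O₃) : ∑ a, ∑ b, ∫ ω in E, jointWeight p₁ p₂ p₃ a b c ω ∂μ₁.prod (μ₂.prod μ₃) =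
      ∫ ω in E, p₃ c ω.2 ∂μ₁.prod (μ₂.prod μ₃) := by
  have hint a b := (h.integrable_jointWeight a b c).integrableOn (s := E)
  simp only [← integral_finsetSum _ fun b _ => hint _ b]
  rw [← integral_finsetSum _ fun a _ => integrable_finsetSum _ fun b _ => hint a b]
  simp only [jointWeight, ← Finset.mul_sum, ← Finset.sum_mul, h.isResponse₁.sum_eq_one,
    h.isResponse₂.sum_eq_one, one_mul]

lemma setIntegral_jointWeight_eq_ite (h : IsTriangleModel μ₁ μ₂ μ₃ p₁ p₂ p₃ P)
    {X Y : Λ₁ × Λ₂ × Λ₃ → ℝ} (hXY : ∀ᵐ ω ∂μ₁.prod (μ₂.prod μ₃),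
      ∀ a b c, jointWeight p₁ p₂ p₃ a b c ω ≠ 0 → d₁ a = X ω ∧ d₂ b = Y ω)
    {E : Set (Λ₁ × Λ₂ × Λ₃)} {x y : ℝ} (hE : ∀ ω, ω ∈ E ↔ X ω = x ∧ Y ω = y)
    (a : O₁) (b : O₂) (c : O₃) :
    ∫ ω in E, jointWeight p₁ p₂ p₃ a b c ω ∂μ₁.prod (μ₂.prod μ₃) =
      if d₁ a = x ∧ d₂ b = y then P a b c else 0 := by
  rw [← h.integral_jointWeight]
  refine setIntegral_eq_ite ?_
  filter_upwards [hXY] with ω hω hw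
  rw [hE, (hω a b c hw).1, (hω a b c hw).2]

theorem exists_isTokenPart (h : IsTriangleModel μ₁ μ₂ μ₃ p₁ p₂ p₃ P)
    (hP : IsTokenCounting P d₁ d₂ d₃) : ∃ q, IsTokenPart P q d₁ d₂ := by
  obtain ⟨S₁, S₂, S₃, ⟨hS₁, hμ₁⟩, ⟨hS₂, hμ₂⟩, ⟨hS₃, hμ₃⟩, hS⟩ := h.exists_tokens hP
  refine ⟨fun a b c => ∫ ω in S₁ ×ˢ S₂ ×ˢ S₃, jointWeight p₁ p₂ p₃ a b c ω ∂μ₁.prod (μ₂.prod μ₃),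
    fun a b c => integral_nonneg (h.jointWeight_nonneg a b c), fun a b c => ?_,
    fun {a b c} hd => ?_, fun a => ?_, fun b => ?_, fun c => ?_⟩
  · rw [← h.integral_jointWeight]
    exact setIntegral_le_integral (h.integrable_jointWeight a b c)
      (.of_forall (h.jointWeight_nonneg a b c))
  · refine setIntegral_eq_zero_of_ae_eq_zero ?_
    filter_upwards [hS] with ω hω ⟨h₁, h₂, h₃⟩
    by_contra hw
    exact hd ⟨by simp [(hω a b c hw).1, h₁, h₃], by simp [(hω a b c hw).2, h₁, h₂]⟩
  · rw [h.sum_setIntegral₁, setIntegral_box_congr₂ (measureReal_eq_compl hS₂ hμ₂),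
      ← h.sum_setIntegral₁]
    exact Fintype.sum_congr _ _ fun b => Fintype.sum_congr _ _ fun c =>
      h.setIntegral_jointWeight_eq_ite hS (fun ω => by
        rw [indicator_sub_indicator_eq_zero_iff, indicator_sub_indicator_eq_neg_one_iff]
        simp only [Set.mem_prod, Set.mem_compl_iff]
        tauto) a b c
  · rw [h.sum_setIntegral₂, setIntegral_box_congr₃ (measureReal_eq_compl hS₃ hμ₃),
      ← h.sum_setIntegral₂]
    exact Fintype.sum_congr _ _ fun a => Fintype.sum_congr _ _ fun c =>
      h.setIntegral_jointWeight_eq_ite hS (fun ω => by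
        rw [indicator_sub_indicator_eq_one_iff, indicator_sub_indicator_eq_zero_iff]
        simp only [Set.mem_prod, Set.mem_compl_iff]
        tauto) a b c
  · rw [h.sum_setIntegral₃, setIntegral_prod_comp_snd_congr (measureReal_eq_compl hS₁ hμ₁),
      ← h.sum_setIntegral₃]
    exact Fintype.sum_congr _ _ fun a => Fintype.sum_congr _ _ fun b =>
      h.setIntegral_jointWeight_eq_ite hS (fun ω => by
        rw [indicator_sub_indicator_eq_neg_one_iff, indicator_sub_indicator_eq_one_iff]
        simp only [Set.mem_prod, Set.mem_compl_iff]
        tauto) a b c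

end IsTriangleModel

end TriangleModel

section Ring

open Matrix

lemma sum_pi_fin_succ {α M : Type*} [Fintype α] [AddCommMonoid M] {n : ℕ}
    (f : (Fin (n + 1) → α) → M) : ∑ b, f b = ∑ a, ∑ b : Fin n → α, f (Fin.cons a b) := by
  rw [← (Fin.consEquiv fun _ => α).sum_comp, Fintype.sum_prod_type]
  rfl

section Cycle

variable {ι R : Type*} [Fintype ι] [DecidableEq ι] [CommSemiring R] {m : ℕ}

lemma sum_prod_path_mul (M : Fin m → Matrix ι ι R) (g : ι → ι → R) :
    ∑ l : Fin (m + 1) → ι, (∏ k : Fin m, M k (l k.castSucc) (l k.succ)) * g (l 0) (l (Fin.last m))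
      = ∑ i, ∑ j, (List.ofFn M).prod i j * g i j := by
  induction m generalizing g with
  | zero =>
    rw [sum_pi_fin_succ]
    simp [Matrix.one_apply, Fin.last]
  | succ m ih =>
    rw [sum_pi_fin_succ]
    refine Finset.sum_congr rfl fun i _ => ?_
    have htail := ih (fun k => M k.succ) (fun i' j => M 0 i i' * g i j)
    simp only [Fin.prod_univ_succ, Fin.castSucc_zero, Fin.cons_zero, Fin.cons_succ,
      ← Fin.succ_castSucc, ← Fin.succ_last, List.ofFn_succ, List.prod_cons, Matrix.mul_apply,
      Finset.sum_mul]
    rw [Finset.sum_comm]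
    refine (Finset.sum_congr rfl fun l _ => ?_).trans (htail.trans ?_)
    · ring
    · exact Finset.sum_congr rfl fun i' _ => Finset.sum_congr rfl fun j _ => by ring

lemma sum_prod_cycle_eq_trace (M : Fin (m + 1) → Matrix ι ι R) :
    ∑ l : Fin (m + 1) → ι, ∏ k, M k (l k) (l (finNext k)) = (List.ofFn M).prod.trace := by
  have hlast : finNext (Fin.last m) = 0 := by
    ext
    simp [finNext]
  have hcast (k : Fin m) : finNext k.castSucc = k.succ := by
    ext
    simp [finNext, Nat.mod_eq_of_lt]
  simp only [Fin.prod_univ_castSucc, hlast, hcast]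
  rw [sum_prod_path_mul (fun k : Fin m => M k.castSucc) fun i j => M (Fin.last m) j i,
    List.ofFn_succ', List.prod_concat]
  simp [Matrix.trace, Matrix.mul_apply]

end Cycle

/-- `√2` times the operator that projecting onto an outcome `a` induces, through the state `ψ⁺` of
the source on its right, from the left qubit of the next party to the left qubit of the present
one. -/
noncomputable def transfer (u : ℝ) : Outc → Matrix (Fin 2) (Fin 2) ℝ
  | Outc.zero => !![0, 1; 0, 0]
  | Outc.one i => !![uco u i, 0; 0, vco u i]
  | Outc.two => !![0, 0; 1, 0]

/-- The ordered product of the transfer matrices of the outcomes of a chain of parties. -/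
noncomputable def chainMat (u : ℝ) {n : ℕ} (b : Fin n → Outc) : Matrix (Fin 2) (Fin 2) ℝ :=
  (List.ofFn fun k => transfer u (b k)).prod

variable {u : ℝ} {n : ℕ}

lemma chainMat_zero (b : Fin 0 → Outc) : chainMat u b = 1 := by
  simp [chainMat]

lemma chainMat_cons (a : Outc) (b : Fin n → Outc) :
    chainMat u (Fin.cons a b : Fin (n + 1) → Outc) = transfer u a * chainMat u b := by
  simp [chainMat, List.ofFn_succ]

lemma sum_basisVec_mul_psiPlus (a : Outc) (l l' : Fin 2) :
    ∑ r, basisVec u a l r * psiPlus r l' = (√2)⁻¹ * transfer u a l l' := by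
  cases a <;> fin_cases l <;> fin_cases l' <;> simp [basisVec, psiPlus, transfer, mul_comm]

lemma ringAmp_eq (a : Fin (n + 1) → Outc) :
    ringAmp (n + 1) u a = (√2)⁻¹ ^ (n + 1) * (chainMat u a).trace := by
  have hcontract (l : Fin (n + 1) → Fin 2) : ∑ r : Fin (n + 1) → Fin 2,
      (∏ k, basisVec u (a k) (l k) (r k)) * ∏ k, psiPlus (r k) (l (finNext k))
        = (√2)⁻¹ ^ (n + 1) * ∏ k, transfer u (a k) (l k) (l (finNext k)) := by
    simp only [← Finset.prod_mul_distrib]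
    rw [← Fintype.prod_sum fun k r => basisVec u (a k) (l k) r * psiPlus r (l (finNext k))]
    simp only [sum_basisVec_mul_psiPlus, Finset.prod_mul_distrib, Finset.prod_const,
      Finset.card_univ, Fintype.card_fin]
  simp only [ringAmp, hcontract, ← Finset.mul_sum]
  rw [sum_prod_cycle_eq_trace fun k => transfer u (a k), chainMat]

lemma ringP_eq (a : Fin (n + 1) → Outc) :
    ringP (n + 1) u a = (1 / 2) ^ (n + 1) * (chainMat u a).trace ^ 2 := by
  rw [ringP, ringAmp_eq, mul_pow, pow_right_comm, inv_pow, Real.sq_sqrt zero_le_two, one_div]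

lemma sum_outc {M : Type*} [AddCommMonoid M] (f : Outc → M) :
    ∑ a, f a = f .zero + (f (.one 0) + (f (.one 1) + f .two)) := by
  have huniv : (Finset.univ : Finset Outc) = {.zero, .one 0, .one 1, .two} := by decide
  rw [huniv, Finset.sum_insert (by decide), Finset.sum_insert (by decide),
    Finset.sum_insert (by decide), Finset.sum_singleton]

lemma sum_trace_transfer_mul_sq (hu : u ^ 2 ≤ 1) (C : Matrix (Fin 2) (Fin 2) ℝ) :
    ∑ a, (transfer u a * C).trace ^ 2 = ∑ i, ∑ j, C i j ^ 2 := by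
  have hv : √(1 - u ^ 2) ^ 2 = 1 - u ^ 2 := Real.sq_sqrt (sub_nonneg.2 hu)
  simp only [sum_outc, transfer, uco, vco, Matrix.trace_fin_two, Matrix.mul_apply,
    Fin.sum_univ_two]
  simp only [of_apply, cons_val', cons_val_zero, cons_val_fin_one, cons_val_one, zero_mul, one_mul,
    neg_mul, zero_add, add_zero]
  linear_combination (C 0 0 ^ 2 + C 1 1 ^ 2) * hv

lemma sum_sum_transfer_mul_sq (hu : u ^ 2 ≤ 1) (C : Matrix (Fin 2) (Fin 2) ℝ) :
    ∑ a, ∑ i, ∑ j, (transfer u a * C) i j ^ 2 = 2 * ∑ i, ∑ j, C i j ^ 2 := by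
  have hv : √(1 - u ^ 2) ^ 2 = 1 - u ^ 2 := Real.sq_sqrt (sub_nonneg.2 hu)
  simp only [sum_outc, transfer, uco, vco, Matrix.mul_apply, Fin.sum_univ_two]
  simp only [of_apply, cons_val', cons_val_zero, cons_val_fin_one, cons_val_one, zero_mul, one_mul,
    neg_mul, zero_add, add_zero]
  linear_combination (C 0 0 ^ 2 + C 1 1 ^ 2 + C 0 1 ^ 2 + C 1 0 ^ 2) * hv

lemma sum_sum_chainMat_mul_sq (hu : u ^ 2 ≤ 1) (n : ℕ) (C : Matrix (Fin 2) (Fin 2) ℝ) :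
    ∑ b : Fin n → Outc, ∑ i, ∑ j, (chainMat u b * C) i j ^ 2 = 2 ^ n * ∑ i, ∑ j, C i j ^ 2 := by
  induction n with
  | zero => simp [chainMat_zero]
  | succ n ih =>
    rw [sum_pi_fin_succ, Finset.sum_comm]
    simp only [chainMat_cons, Matrix.mul_assoc, sum_sum_transfer_mul_sq hu, ← Finset.mul_sum, ih]
    ring

lemma sum_trace_mul_chainMat_sq (hu : u ^ 2 ≤ 1) (n : ℕ) (C : Matrix (Fin 2) (Fin 2) ℝ) :
    ∑ b : Fin (n + 1) → Outc, (C * chainMat u b).trace ^ 2 = 2 ^ n * ∑ i, ∑ j, C i j ^ 2 := by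
  rw [sum_pi_fin_succ, Finset.sum_comm]
  simp only [Matrix.trace_mul_comm C, chainMat_cons, Matrix.mul_assoc,
    sum_trace_transfer_mul_sq hu, sum_sum_chainMat_mul_sq hu]

/-- The number of qubits in state `1`, minus one, in the states of an outcome. -/
def excess : Outc → ℝ
  | Outc.zero => -1
  | Outc.one _ => 0
  | Outc.two => 1

lemma excess_of_transfer_ne_zero {a : Outc} {i j : Fin 2} (h : transfer u a i j ≠ 0) :
    excess a = (i : ℝ) - (j : ℝ) := by
  cases a <;> fin_cases i <;> fin_cases j <;> simp [transfer] at h <;> simp [excess]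

lemma sum_excess_of_chainMat_ne_zero (b : Fin n → Outc) {i j : Fin 2} (h : chainMat u b i j ≠ 0) :
    ∑ k, excess (b k) = (i : ℝ) - (j : ℝ) := by
  induction n generalizing i with
  | zero =>
    rw [chainMat_zero, Matrix.one_apply, ite_ne_right_iff] at h
    simp [h.1]
  | succ n ih =>
    obtain ⟨a, b, rfl⟩ : ∃ a b', b = Fin.cons a b' := ⟨b 0, Fin.tail b, by simp⟩
    rw [chainMat_cons, Matrix.mul_apply] at h
    obtain ⟨k, -, hk⟩ := Finset.exists_ne_zero_of_sum_ne_zero h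
    simp only [Fin.sum_univ_succ, Fin.cons_zero, Fin.cons_succ]
    rw [excess_of_transfer_ne_zero (left_ne_zero_of_mul hk), ih b (right_ne_zero_of_mul hk),
      sub_add_sub_cancel]

lemma sum_excess_of_ringP_ne_zero (a : Fin (n + 1) → Outc) (h : ringP (n + 1) u a ≠ 0) :
    ∑ k, excess (a k) = 0 := by
  rw [ringP_eq, Matrix.trace_fin_two] at h
  obtain hdiag | hdiag : chainMat u a 0 0 ≠ 0 ∨ chainMat u a 1 1 ≠ 0 := by
    by_contra! h0
    simp [h0.1, h0.2] at h
  · simpa using sum_excess_of_chainMat_ne_zero a hdiag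
  · simpa using sum_excess_of_chainMat_ne_zero a hdiag

lemma chainMat_cons_one_zero_zero (i : Fin 2) (b : Fin n → Outc) :
    chainMat u (Fin.cons (.one i) b : Fin (n + 1) → Outc) 0 0 = uco u i * chainMat u b 0 0 := by
  simp [chainMat_cons, transfer, Matrix.mul_apply]

lemma chainMat_cons_one_one_one (i : Fin 2) (b : Fin n → Outc) :
    chainMat u (Fin.cons (.one i) b : Fin (n + 1) → Outc) 1 1 = vco u i * chainMat u b 1 1 := by
  simp [chainMat_cons, transfer, Matrix.mul_apply]

/-- The values of the diagonal of `chainMat u b` when `b` consists of `r` outcomes `1₀` and `s`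
outcomes `1₁`. -/
def HasChainDiag (u : ℝ) (b : Fin n → Outc) (r s : ℕ) : Prop :=
  chainMat u b 0 0 = u ^ r * √(1 - u ^ 2) ^ s ∧
    chainMat u b 1 1 = (-1) ^ s * (√(1 - u ^ 2) ^ r * u ^ s)

lemma hasChainDiag_zero (b : Fin 0 → Outc) : HasChainDiag u b 0 0 := by
  simp [HasChainDiag, chainMat_zero]

lemma HasChainDiag.cons_one_zero {b : Fin n → Outc} {r s : ℕ} (h : HasChainDiag u b r s) :
    HasChainDiag u (Fin.cons (.one 0) b : Fin (n + 1) → Outc) (r + 1) s := by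
  constructor
  · rw [chainMat_cons_one_zero_zero, h.1, uco, Matrix.cons_val_zero]
    ring
  · rw [chainMat_cons_one_one_one, h.2, vco, Matrix.cons_val_zero]
    ring

lemma HasChainDiag.cons_one_one {b : Fin n → Outc} {r s : ℕ} (h : HasChainDiag u b r s) :
    HasChainDiag u (Fin.cons (.one 1) b : Fin (n + 1) → Outc) r (s + 1) := by
  constructor
  · rw [chainMat_cons_one_zero_zero, h.1, uco, Matrix.cons_val_one, Matrix.cons_val_fin_one]
    ring
  · rw [chainMat_cons_one_one_one, h.2, vco, Matrix.cons_val_one, Matrix.cons_val_fin_one]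
    ring

lemma chainMat_diag_eq_zero_or_hasChainDiag (u : ℝ) (b : Fin n → Outc) :
    chainMat u b 0 0 = 0 ∨ chainMat u b 1 1 = 0 ∨ ∃ r s, r + s = n ∧ HasChainDiag u b r s := by
  induction n with
  | zero => exact .inr (.inr ⟨0, 0, rfl, hasChainDiag_zero b⟩)
  | succ n ih =>
    obtain ⟨a, b, rfl⟩ : ∃ a b', b = Fin.cons a b' := ⟨b 0, Fin.tail b, by simp⟩
    rcases a with _ | i | _
    · exact .inr (.inl (by simp [chainMat_cons, transfer, Matrix.mul_apply]))
    · rcases ih b with h | h | ⟨r, s, rfl, h⟩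
      · exact .inl (by rw [chainMat_cons_one_zero_zero, h, mul_zero])
      · exact .inr (.inl (by rw [chainMat_cons_one_one_one, h, mul_zero]))
      · fin_cases i
        · exact .inr (.inr ⟨r + 1, s, by ring, h.cons_one_zero⟩)
        · exact .inr (.inr ⟨r, s + 1, by ring, h.cons_one_one⟩)
    · exact .inl (by simp [chainMat_cons, transfer, Matrix.mul_apply])

lemma exists_hasChainDiag (u : ℝ) {r s : ℕ} (h : r + s = n) :
    ∃ b : Fin n → Outc, HasChainDiag u b r s := by
  subst h
  induction s with
  | zero =>
    induction r with
    | zero => exact ⟨Fin.elim0, hasChainDiag_zero _⟩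
    | succ r ih =>
      obtain ⟨b, hb⟩ := ih
      rw [Nat.add_right_comm]
      exact ⟨_, hb.cons_one_zero⟩
  | succ s ih =>
    obtain ⟨b, hb⟩ := ih
    exact ⟨_, hb.cons_one_one⟩

end Ring

section Merged

/-- The ring distribution seen by two neighbouring parties and the party merged from all others. -/
noncomputable def mergedP (n : ℕ) (u : ℝ) (a a' : Outc) (c : Fin (n + 1) → Outc) : ℝ :=
  ringP (n + 3) u (Fin.cons a (Fin.cons a' c : Fin (n + 2) → Outc) : Fin (n + 3) → Outc)

variable {n : ℕ} {u : ℝ}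

lemma mergedP_eq (a a' : Outc) (c : Fin (n + 1) → Outc) : mergedP n u a a' c =
    (1 / 2) ^ (n + 3) * (transfer u a * transfer u a' * chainMat u c).trace ^ 2 := by
  rw [mergedP, ringP_eq, chainMat_cons, chainMat_cons, Matrix.mul_assoc]

lemma sum_mergedP (hu : u ^ 2 ≤ 1) (a a' : Outc) :
    ∑ c, mergedP n u a a' c = (∑ i, ∑ j, (transfer u a * transfer u a') i j ^ 2) / 8 := by
  simp only [mergedP_eq, ← Finset.mul_sum, sum_trace_mul_chainMat_sq hu]
  have hpow : (1 / 2 : ℝ) ^ (n + 3) * 2 ^ n = 1 / 8 := by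
    rw [pow_add, mul_right_comm, ← mul_pow]
    norm_num
  rw [← mul_assoc, hpow, one_div_mul_eq_div]

lemma mergedP_zero_two (c : Fin (n + 1) → Outc) :
    mergedP n u .zero .two c = (1 / 2) ^ (n + 3) * chainMat u c 0 0 ^ 2 := by
  simp only [mergedP_eq, transfer, Matrix.trace_fin_two, Matrix.mul_apply, Fin.sum_univ_two]
  simp

lemma mergedP_one_one (i j : Fin 2) (c : Fin (n + 1) → Outc) : mergedP n u (.one i) (.one j) c =
    (1 / 2) ^ (n + 3) *
      (uco u i * uco u j * chainMat u c 0 0 + vco u i * vco u j * chainMat u c 1 1) ^ 2 := by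
  simp only [mergedP_eq, transfer, Matrix.trace_fin_two, Matrix.mul_apply, Fin.sum_univ_two]
  simp

lemma sum_mergedP_zero_two (hu : u ^ 2 ≤ 1) : ∑ c, mergedP n u .zero .two c = 1 / 8 := by
  simp [sum_mergedP hu, transfer, Matrix.mul_apply]

lemma sum_mergedP_one_zero (hu : u ^ 2 ≤ 1) (i : Fin 2) :
    ∑ c, mergedP n u (.one i) .zero c = uco u i ^ 2 / 8 := by
  simp [sum_mergedP hu, transfer, Matrix.mul_apply]

lemma sum_mergedP_two_one (hu : u ^ 2 ≤ 1) (i : Fin 2) :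
    ∑ c, mergedP n u .two (.one i) c = uco u i ^ 2 / 8 := by
  simp [sum_mergedP hu, transfer, Matrix.mul_apply]

lemma isTokenCounting_mergedP (hu : u ^ 2 ≤ 1) :
    IsTokenCounting (mergedP n u) excess excess fun c => ∑ k, excess (c k) where
  add_eq_zero {a a' c} h := by
    have hsum := sum_excess_of_ringP_ne_zero _ h
    simp only [Fin.sum_univ_succ (n := n + 2), Fin.sum_univ_succ (n := n + 1), Fin.cons_zero,
      Fin.cons_succ] at hsum
    linarith
  sum_eq_tokenMean φ := by
    have hv : √(1 - u ^ 2) ^ 2 = 1 - u ^ 2 := Real.sq_sqrt (sub_nonneg.2 hu)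
    simp only [← Finset.mul_sum, sum_mergedP hu, sum_outc, excess, transfer, uco, vco,
      Matrix.mul_apply, Fin.sum_univ_two, tokenMean]
    simp only [Matrix.of_apply, Matrix.cons_val', Matrix.cons_val_zero, Matrix.cons_val_fin_one,
      Matrix.cons_val_one, mul_zero, zero_mul, mul_one, one_mul, add_zero, zero_add, mul_neg,
      Fin.val_zero, Fin.val_one, Nat.cast_zero, Nat.cast_one, sub_self, zero_sub, sub_zero]
    linear_combination (φ 0 0 * (u ^ 2 + √(1 - u ^ 2) ^ 2 + 1) / 4
      + (φ 0 1 + φ 0 (-1) + φ 1 0 + φ (-1) 0) / 8) * hv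

/-- How much the outcomes `1₁` of the two neighbouring parties are over-represented in the part `q`
of the ring distribution, when the merged party outputs `c`. Their mean number in `q` is
`2 (1 - u²)`, and `mergedP n u .zero .two c` is the total weight of `c` in `q`. -/
noncomputable def defect (u : ℝ) (q : Outc → Outc → (Fin (n + 1) → Outc) → ℝ)
    (c : Fin (n + 1) → Outc) : ℝ :=
  ∑ a', q (.one 1) a' c + ∑ a, q a (.one 1) c - 2 * √(1 - u ^ 2) ^ 2 * mergedP n u .zero .two c

namespace IsTokenPart

variable {q : Outc → Outc → (Fin (n + 1) → Outc) → ℝ}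

lemma sum_sum_one_left (h : IsTokenPart (mergedP n u) q excess excess) (hu : u ^ 2 ≤ 1)
    (i : Fin 2) : ∑ a', ∑ c, q (.one i) a' c = uco u i ^ 2 / 8 := by
  rw [h.marginal₁, ← sum_mergedP_one_zero (n := n) hu]
  norm_num [sum_outc, excess]

lemma sum_sum_one_right (h : IsTokenPart (mergedP n u) q excess excess) (hu : u ^ 2 ≤ 1)
    (i : Fin 2) : ∑ a, ∑ c, q a (.one i) c = uco u i ^ 2 / 8 := by
  rw [h.marginal₂, ← sum_mergedP_two_one (n := n) hu]
  norm_num [sum_outc, excess]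

lemma sum_defect (h : IsTokenPart (mergedP n u) q excess excess) (hu : u ^ 2 ≤ 1) :
    ∑ c, defect u q c = 0 := by
  simp only [defect, Finset.sum_sub_distrib, Finset.sum_add_distrib, ← Finset.mul_sum]
  rw [Finset.sum_comm, h.sum_sum_one_left hu, Finset.sum_comm, h.sum_sum_one_right hu,
    sum_mergedP_zero_two hu, uco, Matrix.cons_val_one, Matrix.cons_val_fin_one]
  ring

lemma sum_one_one (h : IsTokenPart (mergedP n u) q excess excess) (c : Fin (n + 1) → Outc) :
    ∑ i, ∑ j, q (.one i) (.one j) c = (1 / 2) ^ (n + 3) * chainMat u c 0 0 ^ 2 :=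
  calc ∑ i, ∑ j, q (.one i) (.one j) c = ∑ a, ∑ b, q a b c := by
        simp [sum_outc, excess, h.eq_zero, add_assoc]
    _ = _ := h.marginal₃ c
    _ = mergedP n u .zero .two c := by norm_num [sum_outc, excess]
    _ = _ := mergedP_zero_two c

lemma defect_eq (h : IsTokenPart (mergedP n u) q excess excess) (c : Fin (n + 1) → Outc) :
    defect u q c = q (.one 0) (.one 1) c + q (.one 1) (.one 0) c + 2 * q (.one 1) (.one 1) c
      - 2 * √(1 - u ^ 2) ^ 2 * ((1 / 2) ^ (n + 3) * chainMat u c 0 0 ^ 2) := by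
  have hl : ∑ a', q (.one 1) a' c = q (.one 1) (.one 0) c + q (.one 1) (.one 1) c := by
    norm_num [sum_outc, excess, h.eq_zero]
  have hr : ∑ a, q a (.one 1) c = q (.one 0) (.one 1) c + q (.one 1) (.one 1) c := by
    norm_num [sum_outc, excess, h.eq_zero]
  rw [defect, hl, hr, mergedP_zero_two]
  ring

lemma neg_sq_le_defect₀ (h : IsTokenPart (mergedP n u) q excess excess)
    (c : Fin (n + 1) → Outc) :
    (1 / 2) ^ (n + 3) * (-2 * √(1 - u ^ 2) ^ 2 * chainMat u c 0 0 ^ 2) ≤ defect u q c := by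
  rw [h.defect_eq]
  linarith [h.nonneg (.one 0) (.one 1) c, h.nonneg (.one 1) (.one 0) c,
    h.nonneg (.one 1) (.one 1) c]

lemma neg_sq_le_defect₁ (h : IsTokenPart (mergedP n u) q excess excess) (hu : u ^ 2 ≤ 1)
    (c : Fin (n + 1) → Outc) :
    (1 / 2) ^ (n + 3) * (-2 * √(1 - u ^ 2) ^ 2 * chainMat u c 1 1 ^ 2) ≤ defect u q c := by
  have hv : √(1 - u ^ 2) ^ 2 = 1 - u ^ 2 := Real.sq_sqrt (sub_nonneg.2 hu)
  have hsum := h.sum_one_one c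
  have hle i j := (h.le (.one i) (.one j) c).trans_eq (mergedP_one_one i j c)
  have h₀₀ := hle 0 0
  have h₀₁ := hle 0 1
  have h₁₀ := hle 1 0
  simp only [Fin.sum_univ_two] at hsum
  simp only [uco, vco, Matrix.cons_val_zero, Matrix.cons_val_one] at h₀₀ h₀₁ h₁₀
  rw [h.defect_eq]
  linear_combination 2 * h₀₀ + h₀₁ + h₁₀ - 2 * hsum + (1 / 2) ^ (n + 3) *
    (2 * (1 + u ^ 2) * chainMat u c 0 0 ^ 2 + 2 * √(1 - u ^ 2) ^ 2 * chainMat u c 1 1 ^ 2) * hv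

lemma neg_quadratic_le_defect (h : IsTokenPart (mergedP n u) q excess excess) (hu : u ^ 2 ≤ 1)
    (c : Fin (n + 1) → Outc) :
    (1 / 2) ^ (n + 3) * -(√(1 - u ^ 2) ^ 4 * chainMat u c 0 0 ^ 2
      + 2 * (u ^ 2 * √(1 - u ^ 2) ^ 2) * (chainMat u c 0 0 * chainMat u c 1 1)
      + √(1 - u ^ 2) ^ 4 * chainMat u c 1 1 ^ 2) ≤ defect u q c := by
  have hv : √(1 - u ^ 2) ^ 2 = 1 - u ^ 2 := Real.sq_sqrt (sub_nonneg.2 hu)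
  have hsum := h.sum_one_one c
  have h₀₀ := (h.le (.one 0) (.one 0) c).trans_eq (mergedP_one_one 0 0 c)
  have h₁₁ := h.nonneg (.one 1) (.one 1) c
  simp only [Fin.sum_univ_two] at hsum
  simp only [uco, vco, Matrix.cons_val_zero] at h₀₀
  rw [h.defect_eq]
  linear_combination h₀₀ + h₁₁ - hsum - (1 / 2) ^ (n + 3) *
    (√(1 - u ^ 2) ^ 2 - 1 - u ^ 2) * chainMat u c 0 0 ^ 2 * hv

end IsTokenPart

end Merged

section Contradiction

lemma pow_mul_sq_le_pow {u v : ℝ} (hu : 0 ≤ u) (hu1 : u ≤ 1) (hv : 0 ≤ v) (hv1 : v ≤ 1)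
    {i j k l : ℕ} (h : l ≤ k + 2 * j) : v ^ k * (u ^ i * v ^ j) ^ 2 ≤ v ^ l :=
  calc v ^ k * (u ^ i * v ^ j) ^ 2 = (u ^ i) ^ 2 * v ^ (k + 2 * j) := by ring
    _ ≤ v ^ (k + 2 * j) :=
      mul_le_of_le_one_left (pow_nonneg hv _) (pow_le_one₀ (pow_nonneg hu i) (pow_le_one₀ hu hu1))
    _ ≤ v ^ l := pow_le_pow_of_le_one hv hv1 h

variable {n : ℕ} {u : ℝ} {q : Outc → Outc → (Fin (n + 1) → Outc) → ℝ} {c : Fin (n + 1) → Outc}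
  {r s t : ℕ}

namespace IsTokenPart

lemma le_defect_of_hasChainDiag (h : IsTokenPart (mergedP n u) q excess excess) (hu : 0 ≤ u)
    (hu1 : u ≤ 1) (hc : HasChainDiag u c r s) (hrs : r + s = n + 1) (hs : Odd s)
    (hlt : 2 * s < n + 3) (hgt : n + 3 < 2 * s + 4) :
    (1 / 2) ^ (n + 3) * (2 * (u * √(1 - u ^ 2)) ^ (n + 3) - 2 * √(1 - u ^ 2) ^ (n + 4))
      ≤ defect u q c := by
  refine le_trans ?_ (h.neg_quadratic_le_defect (pow_le_one₀ hu hu1) c)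
  rw [hc.1, hc.2, hs.neg_one_pow]
  have hv : 0 ≤ √(1 - u ^ 2) := Real.sqrt_nonneg _
  have hv1 : √(1 - u ^ 2) ≤ 1 := Real.sqrt_le_one.2 (sub_le_self _ (sq_nonneg u))
  generalize √(1 - u ^ 2) = v at hv hv1 ⊢
  have hA : v ^ 4 * (u ^ r * v ^ s) ^ 2 ≤ v ^ (n + 4) :=
    pow_mul_sq_le_pow hu hu1 hv hv1 (by omega)
  have hB : v ^ 4 * (u ^ s * v ^ r) ^ 2 ≤ v ^ (n + 4) :=
    pow_mul_sq_le_pow hu hu1 hv hv1 (by omega)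
  have hAB : (u * v) ^ (n + 3) = u ^ 2 * v ^ 2 * (u ^ r * v ^ s * (v ^ r * u ^ s)) := by
    rw [show n + 3 = r + s + 2 by omega]
    ring
  refine mul_le_mul_of_nonneg_left ?_ (by positivity)
  linear_combination hA + hB + 2 * hAB

lemma neg_pow_le_defect (h : IsTokenPart (mergedP n u) q excess excess) (hu : 0 ≤ u)
    (hu1 : u ≤ 1) (ht : Odd t) (hlt : 2 * t < n + 3) (hgt : n + 3 < 2 * t + 4)
    (c : Fin (n + 1) → Outc) :
    (1 / 2) ^ (n + 3) * -(2 * √(1 - u ^ 2) ^ (n + 4)) ≤ defect u q c := by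
  have hv : 0 ≤ √(1 - u ^ 2) := Real.sqrt_nonneg _
  have hv1 : √(1 - u ^ 2) ≤ 1 := Real.sqrt_le_one.2 (sub_le_self _ (sq_nonneg u))
  have hu2 : u ^ 2 ≤ 1 := pow_le_one₀ hu hu1
  have of_diag₀ (hA : √(1 - u ^ 2) ^ 2 * chainMat u c 0 0 ^ 2 ≤ √(1 - u ^ 2) ^ (n + 4)) :
      (1 / 2) ^ (n + 3) * -(2 * √(1 - u ^ 2) ^ (n + 4)) ≤ defect u q c :=
    (mul_le_mul_of_nonneg_left (by linarith) (by positivity)).trans (h.neg_sq_le_defect₀ c)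
  have of_diag₁ (hB : √(1 - u ^ 2) ^ 2 * chainMat u c 1 1 ^ 2 ≤ √(1 - u ^ 2) ^ (n + 4)) :
      (1 / 2) ^ (n + 3) * -(2 * √(1 - u ^ 2) ^ (n + 4)) ≤ defect u q c :=
    (mul_le_mul_of_nonneg_left (by linarith) (by positivity)).trans (h.neg_sq_le_defect₁ hu2 c)
  rcases chainMat_diag_eq_zero_or_hasChainDiag u c with hA | hB | ⟨r, s, hrs, hc⟩
  · exact of_diag₀ (by rw [hA, zero_pow two_ne_zero, mul_zero]; positivity)
  · exact of_diag₁ (by rw [hB, zero_pow two_ne_zero, mul_zero]; positivity)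
  · rcases lt_trichotomy s t with hst | rfl | hst
    · refine of_diag₁ ?_
      rw [hc.2, mul_pow, pow_right_comm, neg_one_sq, one_pow, one_mul, mul_comm (_ ^ r)]
      exact pow_mul_sq_le_pow hu hu1 hv hv1 (by omega)
    · refine le_trans ?_ (h.le_defect_of_hasChainDiag hu hu1 hc hrs ht hlt hgt)
      exact mul_le_mul_of_nonneg_left (by linarith [pow_nonneg (mul_nonneg hu hv) (n + 3)])
        (by positivity)
    · refine of_diag₀ ?_
      rw [hc.1]
      exact pow_mul_sq_le_pow hu hu1 hv hv1 (by omega)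

lemma pow_le_card_mul_sqrt (h : IsTokenPart (mergedP n u) q excess excess) (hu : 0 ≤ u)
    (hu1 : u < 1) (ht : Odd t) (hlt : 2 * t < n + 3) (hgt : n + 3 < 2 * t + 4) (htn : t ≤ n + 1) :
    u ^ (n + 3) ≤ Fintype.card (Fin (n + 1) → Outc) * √(1 - u ^ 2) := by
  have hrs : n + 1 - t + t = n + 1 := Nat.sub_add_cancel htn
  obtain ⟨b, hb⟩ := exists_hasChainDiag u hrs
  have hv : 0 < √(1 - u ^ 2) := Real.sqrt_pos.2 (sub_pos.2 (pow_lt_one₀ hu hu1 two_ne_zero))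
  have hle : ∑ c, (1 / 2) ^ (n + 3) * ((if c = b then 2 * (u * √(1 - u ^ 2)) ^ (n + 3) else 0)
      - 2 * √(1 - u ^ 2) ^ (n + 4)) ≤ ∑ c, defect u q c := by
    refine Finset.sum_le_sum fun c _ => ?_
    split_ifs with hc
    · exact hc ▸ h.le_defect_of_hasChainDiag hu hu1.le hb hrs ht hlt hgt
    · exact zero_sub (2 * √(1 - u ^ 2) ^ (n + 4)) ▸ h.neg_pow_le_defect hu hu1.le ht hlt hgt c
  rw [h.sum_defect (pow_le_one₀ hu hu1.le), ← Finset.mul_sum, Finset.sum_sub_distrib,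
    Fintype.sum_ite_eq', Finset.sum_const, Finset.card_univ, nsmul_eq_mul] at hle
  have hle' := nonpos_of_mul_nonpos_right hle (by positivity)
  refine le_of_mul_le_mul_right ?_ (pow_pos hv (n + 3))
  rw [mul_pow] at hle'
  linear_combination hle' / 2

end IsTokenPart

end Contradiction

lemma exists_odd_near_half {n : ℕ} (h : (n + 3) % 2 = 1 ∨ 4 ∣ n + 3) :
    ∃ t, Odd t ∧ 2 * t < n + 3 ∧ n + 3 < 2 * t + 4 ∧ t ≤ n + 1 := by
  obtain h | h | h : (n + 3) % 4 = 0 ∨ (n + 3) % 4 = 1 ∨ (n + 3) % 4 = 3 := by omega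
  · exact ⟨(n + 3) / 2 - 1, Nat.odd_iff.2 (by omega), by omega, by omega, by omega⟩
  · exact ⟨(n + 3) / 2 - 1, Nat.odd_iff.2 (by omega), by omega, by omega, by omega⟩
  · exact ⟨(n + 3) / 2, Nat.odd_iff.2 (by omega), by omega, by omega, by omega⟩

theorem not_isTriangleModel_mergedP {Λ₁ Λ₂ Λ₃ : Type*} [MeasurableSpace Λ₁] [MeasurableSpace Λ₂]
    [MeasurableSpace Λ₃] (μ₁ : Measure Λ₁) (μ₂ : Measure Λ₂) (μ₃ : Measure Λ₃)
    [IsProbabilityMeasure μ₁] [IsProbabilityMeasure μ₂] [IsProbabilityMeasure μ₃]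
    (p₁ : Outc → Λ₃ × Λ₁ → ℝ) (p₂ : Outc → Λ₁ × Λ₂ → ℝ) {n : ℕ}
    (p₃ : (Fin (n + 1) → Outc) → Λ₂ × Λ₃ → ℝ) (hn : (n + 3) % 2 = 1 ∨ 4 ∣ n + 3) {u : ℝ}
    (hu : 0 ≤ u) (hu1 : u < 1)
    (hlarge : Fintype.card (Fin (n + 1) → Outc) * √(1 - u ^ 2) < u ^ (n + 3)) :
    ¬IsTriangleModel μ₁ μ₂ μ₃ p₁ p₂ p₃ (mergedP n u) := by
  intro h
  obtain ⟨t, ht, hlt, hgt, htn⟩ := exists_odd_near_half hn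
  obtain ⟨q, hq⟩ := h.exists_isTokenPart (isTokenCounting_mergedP (pow_le_one₀ hu hu1.le))
  exact hlarge.not_ge (hq.pow_le_card_mul_sqrt hu hu1 ht hlt hgt htn)

lemma exists_mul_sqrt_lt_pow_near_one (K : ℝ) (k : ℕ) :
    ∃ ε > (0 : ℝ), ∀ u : ℝ, 1 - ε < u → u < 1 → 0 ≤ u ∧ K * √(1 - u ^ 2) < u ^ k := by
  have hcont : Continuous fun u : ℝ => u ^ k - K * √(1 - u ^ 2) := by fun_prop
  have hone : (0 : ℝ) < 1 ^ k - K * √(1 - 1 ^ 2) := by simp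
  obtain ⟨l, hl, h⟩ := exists_Ioc_subset_of_mem_nhds
    ((hcont.tendsto 1).eventually_const_lt hone) ⟨0, zero_lt_one⟩
  refine ⟨min (1 - l) 1, lt_min (sub_pos.2 hl) one_pos, fun u hu hu1 =>
    ⟨?_, sub_pos.1 (h ⟨?_, hu1.le⟩)⟩⟩
  · linarith [min_le_right (1 - l) 1]
  · linarith [min_le_left (1 - l) 1]

/-- for every `N ≥ 3` that is odd or divisible by `4`, there is `ε > 0`
such that for all `u` with `1 - ε < u < 1` the `N`-party ring distribution is
nonlocal on the triangle network obtained by merging `A₃,…,A_N` into one party `M`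
(sources: `λ₁` between `A₁,A₂`, `λ₂` between `A₂,M`, `λ₃` between `M,A₁`).
Parties are `0`-indexed: `A_j = a (j-1)`. -/
theorem stmt_16 (N : ℕ) (hN : 3 ≤ N) (hpar : N % 2 = 1 ∨ 4 ∣ N) :
    ∃ ε > (0 : ℝ), ∀ u : ℝ, 1 - ε < u → u < 1 →
      ¬ ∃ (Λ₁ Λ₂ Λ₃ : Type)
          (m₁ : MeasurableSpace Λ₁) (m₂ : MeasurableSpace Λ₂) (m₃ : MeasurableSpace Λ₃)
          (μ₁ : @Measure Λ₁ m₁) (μ₂ : @Measure Λ₂ m₂) (μ₃ : @Measure Λ₃ m₃)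
          (p₁ : Outc → Λ₃ → Λ₁ → ℝ) (p₂ : Outc → Λ₁ → Λ₂ → ℝ)
          (pM : (Fin (N - 2) → Outc) → Λ₂ → Λ₃ → ℝ),
        IsProbabilityMeasure μ₁ ∧ IsProbabilityMeasure μ₂ ∧ IsProbabilityMeasure μ₃ ∧
        (∀ a, @Measurable _ _ (m₃.prod m₁) _ fun q : Λ₃ × Λ₁ => p₁ a q.1 q.2) ∧
        (∀ a, @Measurable _ _ (m₁.prod m₂) _ fun q : Λ₁ × Λ₂ => p₂ a q.1 q.2) ∧
        (∀ f, @Measurable _ _ (m₂.prod m₃) _ fun q : Λ₂ × Λ₃ => pM f q.1 q.2) ∧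
        (∀ x y, (∀ a, 0 ≤ p₁ a x y) ∧ ∑ a, p₁ a x y = 1) ∧
        (∀ x y, (∀ a, 0 ≤ p₂ a x y) ∧ ∑ a, p₂ a x y = 1) ∧
        (∀ x y, (∀ f, 0 ≤ pM f x y) ∧ ∑ f : Fin (N - 2) → Outc, pM f x y = 1) ∧
        (∀ a : Fin N → Outc,
          ringP N u a =
            ∫ x₁, ∫ x₂, ∫ x₃,
              p₁ (a ⟨0, by omega⟩) x₃ x₁ * p₂ (a ⟨1, by omega⟩) x₁ x₂
                * pM (fun k => a ⟨(k : ℕ) + 2, by have := k.isLt; omega⟩) x₂ x₃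
              ∂μ₃ ∂μ₂ ∂μ₁) := by
  obtain ⟨n, rfl⟩ : ∃ n, N = n + 3 := ⟨N - 3, by omega⟩
  obtain ⟨ε, hε, hnear⟩ :=
    exists_mul_sqrt_lt_pow_near_one (Fintype.card (Fin (n + 1) → Outc)) (n + 3)
  refine ⟨ε, hε, fun u hu hu1 => ?_⟩
  obtain ⟨hu0, hlarge⟩ := hnear u hu hu1
  rintro ⟨Λ₁, Λ₂, Λ₃, m₁, m₂, m₃, μ₁, μ₂, μ₃, p₁, p₂, pM, hμ₁, hμ₂, hμ₃, hm₁, hm₂, hmM,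
    hp₁, hp₂, hpM, hloc⟩
  exact not_isTriangleModel_mergedP μ₁ μ₂ μ₃ (fun a x => p₁ a x.1 x.2) (fun a x => p₂ a x.1 x.2)
    (fun c x => pM c x.1 x.2) hpar hu0 hu1 hlarge
    { isResponse₁ := ⟨hm₁, fun a x => (hp₁ x.1 x.2).1 a, fun x => (hp₁ x.1 x.2).2⟩
      isResponse₂ := ⟨hm₂, fun a x => (hp₂ x.1 x.2).1 a, fun x => (hp₂ x.1 x.2).2⟩
      isResponse₃ := ⟨hmM, fun c x => (hpM x.1 x.2).1 c, fun x => (hpM x.1 x.2).2⟩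
      eq_integral := fun a a' c => hloc (Fin.cons a (Fin.cons a' c : Fin (n + 2) → Outc)) }
end

section
/- Let N ≥ 4, u ∈ (0,1), v = √(1−u²), u₀ = u, v₀ = v, u₁ = v, v₁ = −u. Suppose there exist nonnegative reals q(𝐢,j,k|t), indexed by 𝐢 = (i₃,…,i_N) ∈ {0,1}^{N−2}, j, k ∈ {0,1} and t ∈ {cw, acw}, satisfying: (a) for all 𝐢, j, k: q(𝐢,j,k|cw) + q(𝐢,j,k|acw) = 2^{3−N}·(u_j u_k ∏_{n=3}^N u_{i_n} + v_j v_k ∏_{n=3}^N v_{i_n})²; (b) for all 𝐢: Σ_{j,k} q(𝐢,j,k|cw) = 2^{3−N}·∏_{n=3}^N v_{i_n}² and Σ_{j,k} q(𝐢,j,k|acw) = 2^{3−N}·∏_{n=3}^N u_{i_n}²; (c) for all j: Σ_{𝐢,k} q(𝐢,j,k|cw) = 2^{3−N}·v_j² and Σ_{𝐢,k} q(𝐢,j,k|acw) = 2^{3−N}·u_j², and likewise for all k: Σ_{𝐢,j} q(𝐢,j,k|cw) = 2^{3−N}·v_k² and Σ_{𝐢,j} q(𝐢,j,k|acw) = 2^{3−N}·u_k².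 Then there exists a probability distribution q' on {0,1}^N × {cw, acw} such that for all (i₁,…,i_N): q'(i₁,…,i_N,cw) + q'(i₁,…,i_N,acw) = ½·(∏_{n=1}^N u_{i_n} + ∏_{n=1}^N v_{i_n})², and for every position n ∈ {1,…,N} and every b ∈ {0,1}: Σ over configurations with i_n = b of q'(·,cw) = v_b²/2 and of q'(·,acw) = u_b²/2. -/
/-!
Unmerge the token distribution: put `q'(i₁, …, i_N, t) = (2c)⁻¹ q((i₃, …, i_N), i₁, i₂, t)` with
`c = 2^(3 - N)`. Condition (a) is then the identity for `q'(·, cw) + q'(·, acw)`, and (c) gives the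
marginals at positions 1 and 2. For a position `n ≥ 3`, condition (b) says that `q` summed over
`j` and `k` is `c` times a product of normalized weights, so its marginal at `n` is `c` times the
weight at `n`.
-/

section CoordMarginal

variable {ι : Type*} [Fintype ι] [DecidableEq ι] {α : ι → Type*} [∀ n, Fintype (α n)]
  [∀ n, DecidableEq (α n)] {R : Type*}

/-- The marginal at coordinate `n` of a weight `p` on a finite product, evaluated at `b : α n`. -/
def coordMarginal [AddCommMonoid R] (p : (∀ n, α n) → R) (n : ι) (b : α n) : R :=
  ∑ i, if i n = b then p i else 0

theorem sum_coordMarginal [AddCommMonoid R] (p : (∀ n, α n) → R) (n : ι) :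
    ∑ b, coordMarginal p n b = ∑ i, p i := by
  simp only [coordMarginal]
  rw [Finset.sum_comm]
  simp only [Finset.sum_ite_eq, Finset.mem_univ, if_true]

theorem coordMarginal_const_mul [NonUnitalNonAssocSemiring R] (c : R) (p : (∀ n, α n) → R) (n : ι)
    (b : α n) : coordMarginal (fun i => c * p i) n b = c * coordMarginal p n b := by
  simp only [coordMarginal, Finset.mul_sum, mul_ite_zero]

theorem coordMarginal_prod [CommSemiring R] (w : ∀ n, α n → R) (n : ι) (b : α n) :
    coordMarginal (fun i => ∏ m, w m (i m)) n b =
      w n b * ∏ m ∈ Finset.univ \ {n}, ∑ x, w m x := by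
  let cylinder : ∀ m, Finset (α m) := Function.update (fun _ => Finset.univ) n {b}
  have cylinder_eq : Finset.univ.filter (fun i : ∀ m, α m => i n = b) =
      Fintype.piFinset cylinder := by
    rw [Fintype.piFinset_update_singleton_eq_filter_piFinset_eq (fun _ => Finset.univ) n
      (Finset.mem_univ b), Fintype.piFinset_univ]
  have sum_cylinder (m : ι) : ∑ x ∈ cylinder m, w m x =
      Function.update (fun m => ∑ x, w m x) n (w n b) m := by
    obtain rfl | hm := eq_or_ne m n <;> simp [cylinder, *]
  simp only [coordMarginal]
  rw [← Finset.sum_filter, cylinder_eq, ← Finset.prod_univ_sum,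
    Finset.prod_congr rfl fun m _ => sum_cylinder m,
    Finset.prod_update_of_mem (Finset.mem_univ n)]

theorem coordMarginal_prod_of_sum_eq_one [CommSemiring R] {w : ∀ n, α n → R}
    (hw : ∀ n, ∑ x, w n x = 1) (n : ι) (b : α n) :
    coordMarginal (fun i => ∏ m, w m (i m)) n b = w n b := by
  simp only [coordMarginal_prod, hw, Finset.prod_const_one, mul_one]

end CoordMarginal

section Unmerge

variable {M : ℕ} {α : Type*}

/-- The function on `(M + 2)`-tuples obtained from a function of the merged coordinates
`(i₃, …, i_{M+2})` and of the two coordinates `i₁`, `i₂`, which are numbered `0` and `1` here. -/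
def unmerge {β : Sort*} (p : (Fin M → α) → α → α → β) (i : Fin (M + 2) → α) : β :=
  p (fun m => i m.succ.succ) (i 0) (i 1)

variable [Fintype α]

theorem sum_fin_succ_pi {R : Type*} [AddCommMonoid R] (F : (Fin (M + 1) → α) → R) :
    ∑ i, F i = ∑ I : Fin M → α, ∑ a, F (Fin.cons a I) := by
  rw [← (Fin.consEquiv fun _ => α).sum_comp, Fintype.sum_prod_type_right]
  rfl

variable [DecidableEq α]

section AddCommMonoid

variable {R : Type*} [AddCommMonoid R] (p : (Fin M → α) → α → α → R)

theorem coordMarginal_unmerge_zero (b : α) :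
    coordMarginal (unmerge p) 0 b = ∑ I, ∑ k, p I b k := by
  simp [coordMarginal, unmerge, sum_fin_succ_pi]

theorem coordMarginal_unmerge_one (b : α) :
    coordMarginal (unmerge p) 1 b = ∑ I, ∑ j, p I j b := by
  simp [coordMarginal, unmerge, sum_fin_succ_pi]

theorem coordMarginal_unmerge_succ_succ (n : Fin M) (b : α) :
    coordMarginal (unmerge p) n.succ.succ b =
      coordMarginal (fun I => ∑ j, ∑ k, p I j k) n b := by
  simp only [coordMarginal, unmerge, sum_fin_succ_pi, Fin.cons_succ, Fin.cons_zero, Fin.cons_one,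
    Finset.sum_ite_irrel, Finset.sum_const_zero]
  exact Finset.sum_congr rfl fun I _ => if_congr Iff.rfl Finset.sum_comm rfl

end AddCommMonoid

theorem coordMarginal_unmerge_of_block_marginals {R : Type*} [CommSemiring R]
    {p : (Fin M → α) → α → α → R} {c : R} {w : α → R} (hw : ∑ x, w x = 1)
    (h_rest : ∀ I, ∑ j, ∑ k, p I j k = c * ∏ n, w (I n))
    (h_zero : ∀ j, ∑ I, ∑ k, p I j k = c * w j)
    (h_one : ∀ k, ∑ I, ∑ j, p I j k = c * w k) (n : Fin (M + 2)) (b : α) :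
    coordMarginal (unmerge p) n b = c * w b := by
  refine Fin.cases ?_ (Fin.cases ?_ fun n => ?_) n
  · rw [coordMarginal_unmerge_zero, h_zero]
  · rw [Fin.succ_zero_eq_one, coordMarginal_unmerge_one, h_one]
  · simp only [coordMarginal_unmerge_succ_succ, h_rest, coordMarginal_const_mul,
      coordMarginal_prod_of_sum_eq_one fun _ => hw]

end Unmerge

theorem sum_uco_sq {u : ℝ} (hu : u ^ 2 ≤ 1) : ∑ x, uco u x ^ 2 = 1 := by
  simp [uco, Real.sq_sqrt (sub_nonneg.2 hu)]

theorem sum_vco_sq {u : ℝ} (hu : u ^ 2 ≤ 1) : ∑ x, vco u x ^ 2 = 1 := by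
  simp [vco, Real.sq_sqrt (sub_nonneg.2 hu)]

theorem stmt_17_general {K : Type*} [Field K] [LinearOrder K] [IsStrictOrderedRing K]
    {α : Type*} [Fintype α] [DecidableEq α] {M : ℕ} {f g : α → K} (hf : ∑ x, f x ^ 2 = 1)
    (hg : ∑ x, g x ^ 2 = 1) {c : K} (hc : 0 < c) {q : (Fin M → α) → α → α → Bool → K}
    (hq : ∀ I j k t, 0 ≤ q I j k t)
    (h_joint : ∀ I j k, q I j k true + q I j k false =
      c * (f j * f k * ∏ n, f (I n) + g j * g k * ∏ n, g (I n)) ^ 2)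
    (h_rest_cw : ∀ I, ∑ j, ∑ k, q I j k true = c * ∏ n, g (I n) ^ 2)
    (h_rest_acw : ∀ I, ∑ j, ∑ k, q I j k false = c * ∏ n, f (I n) ^ 2)
    (h_zero_cw : ∀ j, ∑ I, ∑ k, q I j k true = c * g j ^ 2)
    (h_zero_acw : ∀ j, ∑ I, ∑ k, q I j k false = c * f j ^ 2)
    (h_one_cw : ∀ k, ∑ I, ∑ j, q I j k true = c * g k ^ 2)
    (h_one_acw : ∀ k, ∑ I, ∑ j, q I j k false = c * f k ^ 2) :
    ∃ q' : (Fin (M + 2) → α) → Bool → K,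
      (∀ i t, 0 ≤ q' i t) ∧
      ∑ i, (q' i true + q' i false) = 1 ∧
      (∀ i, q' i true + q' i false = 1 / 2 * (∏ n, f (i n) + ∏ n, g (i n)) ^ 2) ∧
      ∀ n b, coordMarginal (q' · true) n b = g b ^ 2 / 2 ∧
        coordMarginal (q' · false) n b = f b ^ 2 / 2 := by
  let q' (i : Fin (M + 2) → α) (t : Bool) : K := (2 * c)⁻¹ * unmerge (q · · · t) i
  have marginal_cw (n b) : coordMarginal (q' · true) n b = g b ^ 2 / 2 := by
    rw [coordMarginal_const_mul,
      coordMarginal_unmerge_of_block_marginals hg h_rest_cw h_zero_cw h_one_cw]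
    field_simp
  have marginal_acw (n b) : coordMarginal (q' · false) n b = f b ^ 2 / 2 := by
    rw [coordMarginal_const_mul,
      coordMarginal_unmerge_of_block_marginals hf h_rest_acw h_zero_acw h_one_acw]
    field_simp
  have total : ∑ i, (q' i true + q' i false) = 1 := by
    rw [Finset.sum_add_distrib, ← sum_coordMarginal (q' · true) 0,
      ← sum_coordMarginal (q' · false) 0]
    simp only [marginal_cw, marginal_acw, ← Finset.sum_div, hf, hg, add_halves]
  have joint (i) : q' i true + q' i false = 1 / 2 * (∏ n, f (i n) + ∏ n, g (i n)) ^ 2 := by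
    simp only [q', unmerge, ← mul_add, h_joint, Fin.prod_univ_succ (n := M + 1),
      Fin.prod_univ_succ (n := M), Fin.succ_zero_eq_one, ← mul_assoc]
    field_simp
  exact ⟨q', fun i t => mul_nonneg (by positivity) (hq _ _ _ _), total, joint,
    fun n b => ⟨marginal_cw n b, marginal_acw n b⟩⟩

/-- change of variables reducing the triangle LP (arising from the
merged `N`-ring network) to the `N`-party ring LP.  The token direction `cw` is
encoded by `true`, `acw` by `false`; `𝐢 : Fin (N-2) → Fin 2` collects `(i₃,…,i_N)`. -/
theorem stmt_17 (N : ℕ) (hN : 4 ≤ N) (u : ℝ) (hu0 : 0 < u) (hu1 : u < 1)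
    (q : (Fin (N - 2) → Fin 2) → Fin 2 → Fin 2 → Bool → ℝ)
    (hq0 : ∀ I j k t, 0 ≤ q I j k t)
    (ha : ∀ (I : Fin (N - 2) → Fin 2) (j k : Fin 2),
      q I j k true + q I j k false =
        (2 : ℝ) ^ ((3 : ℤ) - (N : ℤ)) *
          (uco u j * uco u k * ∏ n, uco u (I n)
            + vco u j * vco u k * ∏ n, vco u (I n)) ^ 2)
    (hbcw : ∀ I : Fin (N - 2) → Fin 2,
      (∑ j, ∑ k, q I j k true) = (2 : ℝ) ^ ((3 : ℤ) - (N : ℤ)) * ∏ n, (vco u (I n)) ^ 2)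
    (hbacw : ∀ I : Fin (N - 2) → Fin 2,
      (∑ j, ∑ k, q I j k false) = (2 : ℝ) ^ ((3 : ℤ) - (N : ℤ)) * ∏ n, (uco u (I n)) ^ 2)
    (hjcw : ∀ j, (∑ I, ∑ k, q I j k true) = (2 : ℝ) ^ ((3 : ℤ) - (N : ℤ)) * (vco u j) ^ 2)
    (hjacw : ∀ j, (∑ I, ∑ k, q I j k false) = (2 : ℝ) ^ ((3 : ℤ) - (N : ℤ)) * (uco u j) ^ 2)
    (hkcw : ∀ k, (∑ I, ∑ j, q I j k true) = (2 : ℝ) ^ ((3 : ℤ) - (N : ℤ)) * (vco u k) ^ 2)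
    (hkacw : ∀ k, (∑ I, ∑ j, q I j k false) = (2 : ℝ) ^ ((3 : ℤ) - (N : ℤ)) * (uco u k) ^ 2) :
    ∃ q' : (Fin N → Fin 2) → Bool → ℝ,
      (∀ i t, 0 ≤ q' i t) ∧
      (∑ i, (q' i true + q' i false)) = 1 ∧
      (∀ i : Fin N → Fin 2,
        q' i true + q' i false = (1 / 2) * (∏ n, uco u (i n) + ∏ n, vco u (i n)) ^ 2) ∧
      (∀ (n : Fin N) (b : Fin 2),
        (∑ i : Fin N → Fin 2, if i n = b then q' i true else 0) = (vco u b) ^ 2 / 2 ∧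
        (∑ i : Fin N → Fin 2, if i n = b then q' i false else 0) = (uco u b) ^ 2 / 2) := by
  obtain ⟨M, rfl⟩ : ∃ M, N = M + 2 := ⟨N - 2, by omega⟩
  have hu : u ^ 2 ≤ 1 := by nlinarith
  exact stmt_17_general (sum_uco_sq hu) (sum_vco_sq hu) (by positivity) hq0 ha hbcw hbacw
    hjcw hjacw hkcw hkacw
end
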